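/- Assume the uniform ellipticity condition (D3), the regularity condition (R2) and the equilibrium conditions (E1) and (E2); assume the probability measure m on ℝ has a finite first moment and W₂(H*m, Ψ^{-1}) < +∞. Let F be the unique weak solution in 𝓕 of the Cauchy problem with initial condition H*m. Then there is a unique stationary solution F∞ (a cumulative distribution function with finite first moment solving the stationary equation in distributions) such that F∞ and F₀ = H*m have the same expectation, i.e., ∫₀¹ F∞^{-1}(u) du = ∫₀¹ F₀^{-1}(u) du; and for every p ≥ 2 such that W_p(H*m, Ψ^{-1}) < +∞ and every 1 ≤ q < p, W_q(F_t, F∞) → 0 as t → +∞. -/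

import Mathlib

open MeasureTheory Set Filter Topology Function
open scoped ENNReal

noncomputable section

/-- `primitive f u = ∫₀^u f(v) dv`. -/
def primitive (f : ℝ → ℝ) : ℝ → ℝ := fun u => ∫ v in (0:ℝ)..u, f v

/-- The cumulative distribution function `H * μ` of a measure `μ` on `ℝ`. -/
def cdfOf (μ : MeasureTheory.Measure ℝ) : ℝ → ℝ := fun x => (μ (Set.Iic x)).toReal

/-- Pseudo-inverse of a cdf: `F⁻¹(u) = inf {x | F x > u}`. -/
def pinv (F : ℝ → ℝ) (u : ℝ) : ℝ := sInf {x : ℝ | u < F x}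

/-- Wasserstein distance of order `p` between two cdfs, in `[0,∞]`. -/
def Wdist (p : ℝ) (F G : ℝ → ℝ) : ℝ≥0∞ :=
  (∫⁻ u in Set.Ioo (0:ℝ) 1, ENNReal.ofReal (|pinv F u - pinv G u| ^ p)) ^ (1/p)

/-- `F` is the cumulative distribution function of a probability measure on `ℝ`. -/
def IsCDF (F : ℝ → ℝ) : Prop :=
  Monotone F ∧ (∀ x : ℝ, ContinuousWithinAt F (Set.Ici x) x) ∧
    Tendsto F atBot (nhds 0) ∧ Tendsto F atTop (nhds 1)

/-- `F` solves the stationary equation `(1/2) ∂ₓₓ (A(F)) - ∂ₓ (B(F)) = 0` in the sense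
of distributions. -/
def IsStationarySolution (A B : ℝ → ℝ) (F : ℝ → ℝ) : Prop :=
  ∀ φ : ℝ → ℝ, ContDiff ℝ (⊤ : ℕ∞) φ → HasCompactSupport φ →
    (1/2) * (∫ x : ℝ, A (F x) * deriv (deriv φ) x) + (∫ x : ℝ, B (F x) * deriv φ x) = 0

/-- `Ψ(u) = ∫_{1/2}^u a(v) / (2 B(v)) dv`. -/
def Psi (a b : ℝ → ℝ) (u : ℝ) : ℝ := ∫ v in (1/2:ℝ)..u, a v / (2 * primitive b v)

/-- The inverse of `Ψ`, extended by `1` above `lim_{u→1} Ψ(u)` and by `0` below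
`lim_{u→0} Ψ(u)` when these limits are finite. -/
def PsiInv (a b : ℝ → ℝ) (x : ℝ) : ℝ :=
  sSup {u : ℝ | u ∈ Set.Ioo (0:ℝ) 1 ∧ Psi a b u ≤ x}

/-- `F` is a weak solution of `∂ₜ F = (1/2) ∂ₓₓ (A (F)) - ∂ₓ (B (F))` with
initial condition `F₀`. -/
def IsWeakSolution (A B : ℝ → ℝ) (F₀ : ℝ → ℝ) (F : ℝ → ℝ → ℝ) : Prop :=
  ∀ g : ℝ → ℝ → ℝ, ContDiff ℝ (⊤ : ℕ∞) (Function.uncurry g) →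
    HasCompactSupport (Function.uncurry g) →
    ∀ t : ℝ, 0 ≤ t →
      ((∫ x : ℝ, g t x * F t x) - ∫ x : ℝ, g 0 x * F₀ x) =
        ∫ x : ℝ, ∫ s in (0:ℝ)..t,
          ((1/2) * A (F s x) * deriv (deriv (fun y => g s y)) x
            + B (F s x) * deriv (fun y => g s y) x
            + F s x * deriv (fun r => g r x) s)

/-- Membership in the class `𝓕`. -/
def MemF (F : ℝ → ℝ → ℝ) : Prop :=
  ∃ P : ℝ → ProbabilityMeasure ℝ,
    ContinuousOn P (Set.Ici 0) ∧
    (∀ t : ℝ, 0 ≤ t → Integrable (fun x => |x|) (P t : Measure ℝ)) ∧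
    (∀ T : ℝ, 0 < T → IntegrableOn (fun t => ∫ x, |x| ∂(P t : Measure ℝ)) (Set.Icc 0 T)) ∧
    (∀ t : ℝ, 0 ≤ t → ∀ x : ℝ, F t x = ((P t : Measure ℝ) (Set.Iic x)).toReal)

/-!
Let `Φ_t(x) = ∫_{-∞}^x F_t`. Integrated once in space, the equation becomes the uniformly parabolic
equation `∂ₜ Φ_t = (1/2) ∂ₓ (A(∂ₓ Φ_t)) - B(∂ₓ Φ_t)`, which obeys a comparison principle.

Because `b` is Lipschitz, (E2) forces `b 0 > 0 > b 1`, hence `B(u) ≥ γ u (1 - u)`. Consequently the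
convolution of `m` with a softplus function of small rate is a stationary supersolution, and `Φ_t`
stays between `max 0 (x - 𝔼 m)` and this barrier, uniformly in time. Next, `Φ_t` is compared with
the integrated equilibrium of the same mean, perturbed by a concave `cosh` bump of exponentially
decaying amplitude: outside a large interval the two-sided bound makes the difference small, and
inside it the bump dominates the linearized drift. So `Φ_t` converges uniformly and, by convexity,
its derivative `F_t` converges pointwise. The softplus barrier also bounds the tails of order `p`
uniformly in time, so that for `q < p` the quantile functions are dominated in `L^q` and pointwise
convergence improves to convergence in `W_q`.

Uniqueness needs no analysis of the stationary equation: a stationary solution is a solution which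
is constant in time, hence it equals its limit.
-/

/-! ### Distributions on the line -/

/-- A test function of the theory of distributions on `ℝ`. -/
structure IsTestFunction (φ : ℝ → ℝ) : Prop where
  contDiff : ContDiff ℝ (⊤ : ℕ∞) φ
  hasCompactSupport : HasCompactSupport φ

namespace IsTestFunction

variable {φ ψ : ℝ → ℝ}

lemma continuous (h : IsTestFunction φ) : Continuous φ := h.contDiff.continuous

lemma integrable (h : IsTestFunction φ) : Integrable φ :=
  h.continuous.integrable_of_hasCompactSupport h.hasCompactSupport

lemma hasDerivAt (h : IsTestFunction φ) (x : ℝ) : HasDerivAt φ (deriv φ x) x :=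
  (h.contDiff.differentiable (by simp) x).hasDerivAt

protected lemma deriv (h : IsTestFunction φ) : IsTestFunction (deriv φ) :=
  ⟨(contDiff_infty_iff_deriv.1 h.contDiff).2, h.hasCompactSupport.deriv⟩

lemma sub_const_mul (h : IsTestFunction φ) (h' : IsTestFunction ψ) (k : ℝ) :
    IsTestFunction (fun x => φ x - k * ψ x) :=
  ⟨h.contDiff.sub (contDiff_const.mul h'.contDiff),
    h.hasCompactSupport.sub h'.hasCompactSupport.mul_left⟩

lemma integrable_mul (h : IsTestFunction φ) {Q : ℝ → ℝ} (hQ : LocallyIntegrable Q) :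
    Integrable (fun x => Q x * φ x) := by
  simpa [mul_comm] using
    hQ.integrable_smul_left_of_hasCompactSupport h.continuous h.hasCompactSupport

lemma exists_integral_eq_one : ∃ η : ℝ → ℝ, IsTestFunction η ∧ ∫ x, η x = 1 :=
  let f : ContDiffBump (0 : ℝ) := ⟨1, 2, one_pos, one_lt_two⟩
  ⟨f.normed volume, ⟨f.contDiff_normed, f.hasCompactSupport_normed⟩, f.integral_normed⟩

lemma hasDerivAt_integral_Iic (h : IsTestFunction φ) (x : ℝ) :
    HasDerivAt (fun x => ∫ y in Iic x, φ y) (φ x) x := by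
  have hsplit : (fun x => ∫ y in Iic x, φ y) =
      fun x => (∫ y in Iic (0 : ℝ), φ y) + ∫ y in (0 : ℝ)..x, φ y := by
    ext x
    rw [← intervalIntegral.integral_Iic_sub_Iic h.integrable.integrableOn
      h.integrable.integrableOn]
    ring
  rw [hsplit]
  exact (h.continuous.integral_hasStrictDerivAt 0 x).hasDerivAt.const_add _

lemma exists_deriv_eq (h : IsTestFunction φ) (h0 : ∫ x, φ x = 0) :
    ∃ Φ : ℝ → ℝ, IsTestFunction Φ ∧ deriv Φ = φ := by
  obtain ⟨N, hN⟩ := h.hasCompactSupport.isCompact.isBounded.subset_closedBall 0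
  rw [Real.closedBall_eq_Icc, zero_sub, zero_add] at hN
  have hzero : ∀ x ∉ Icc (-N) N, φ x = 0 := fun x hx =>
    image_eq_zero_of_notMem_tsupport fun hx' => hx (hN hx')
  have hderiv := funext fun x => (h.hasDerivAt_integral_Iic x).deriv
  refine ⟨fun x => ∫ y in Iic x, φ y, ⟨?_, ?_⟩, hderiv⟩
  · rw [contDiff_infty_iff_deriv, hderiv]
    exact ⟨fun x => (h.hasDerivAt_integral_Iic x).differentiableAt, h.contDiff⟩
  · refine HasCompactSupport.intro (isCompact_Icc (a := -N) (b := N)) fun x hx => ?_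
    rcases lt_or_ge x (-N) with hxN | hxN
    · exact setIntegral_eq_zero_of_forall_eq_zero fun y hy =>
        hzero y fun hy' => (hy'.1.trans hy).not_gt hxN
    · have hNx : N < x := not_le.1 fun hxN' => hx ⟨hxN, hxN'⟩
      rw [← h0]
      exact setIntegral_eq_integral_of_forall_compl_eq_zero fun y hy =>
        hzero y fun hy' => hy (hy'.2.trans hNx.le)

lemma exists_deriv_eq_sub_integral_mul (h : IsTestFunction φ) (hψ : IsTestFunction ψ)
    (hψ1 : ∫ x, ψ x = 1) :
    ∃ Φ : ℝ → ℝ, IsTestFunction Φ ∧ deriv Φ = fun x => φ x - (∫ y, φ y) * ψ x := by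
  refine (h.sub_const_mul hψ (∫ y, φ y)).exists_deriv_eq ?_
  rw [integral_sub h.integrable (hψ.integrable.const_mul _), integral_const_mul, hψ1]
  ring

lemma integral_mul_deriv (h : IsTestFunction φ) {f G : ℝ → ℝ} (hf : LocallyIntegrable f)
    (hG : Continuous G) (hd : ∀ x, HasDerivWithinAt G (f x) (Ioi x) x) :
    ∫ x, G x * deriv φ x = -∫ x, f x * φ x := by
  obtain ⟨R, -, hφ⟩ := h.hasCompactSupport.exists_pos_le_norm
  obtain ⟨S, -, hφ'⟩ := h.deriv.hasCompactSupport.exists_pos_le_norm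
  set N := max R S
  have hwhole : ∀ g ψ : ℝ → ℝ, (∀ x, N ≤ ‖x‖ → ψ x = 0) →
      ∫ x in (-N)..N, g x * ψ x = ∫ x, g x * ψ x := fun g ψ hψ =>
    intervalIntegral.integral_eq_integral_of_support_subset fun x hx => by
      have hxN := abs_lt.1 (not_le.1 (mt (hψ x) (right_ne_zero_of_mul hx)))
      exact ⟨hxN.1, hxN.2.le⟩
  have hend : ∀ x, |x| = |N| → φ x = 0 := fun x hx =>
    hφ x ((le_max_left R S).trans ((le_abs_self N).trans_eq hx.symm))
  have hparts := intervalIntegral.integral_mul_deriv_eq_deriv_mul_of_hasDeriv_right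
    (a := -N) (b := N) hG.continuousOn h.continuous.continuousOn (fun x _ => hd x)
    (fun x _ => (h.hasDerivAt x).hasDerivWithinAt)
    (hf.integrableOn_isCompact isCompact_uIcc).intervalIntegrable
    (h.deriv.continuous.intervalIntegrable _ _)
  rwa [hend N rfl, hend (-N) (abs_neg N), mul_zero, mul_zero, sub_zero, zero_sub,
    hwhole G _ fun x hx => hφ' x ((le_max_right R S).trans hx),
    hwhole f _ fun x hx => hφ x ((le_max_left R S).trans hx)] at hparts

lemma integral_id_mul_deriv (h : IsTestFunction φ) : ∫ x, x * deriv φ x = -∫ x, φ x := by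
  simpa using h.integral_mul_deriv (locallyIntegrable_const 1) continuous_id
    fun x => (hasDerivAt_id x).hasDerivWithinAt

end IsTestFunction

/- A test function `φ` differs from the derivative of a test function by `(∫ φ) η`, for a fixed
`η` of integral one; this leaves only the constant `∫ Q η`. -/
lemma ae_eq_const_of_integral_mul_deriv_eq_zero {Q : ℝ → ℝ} (hQ : LocallyIntegrable Q)
    (h : ∀ φ, IsTestFunction φ → ∫ x, Q x * deriv φ x = 0) : ∃ k : ℝ, ∀ᵐ x, Q x = k := by
  obtain ⟨η, hη, hη1⟩ := IsTestFunction.exists_integral_eq_one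
  set k := ∫ x, Q x * η x
  have hzero : ∀ᵐ x, Q x - k = 0 := by
    refine ae_eq_zero_of_integral_contDiff_smul_eq_zero
      (hQ.sub (locallyIntegrable_const _)) fun φ hφd hφs => ?_
    have hφ : IsTestFunction φ := ⟨hφd, hφs⟩
    obtain ⟨Φ, hΦ, hΦ'⟩ := hφ.exists_deriv_eq_sub_integral_mul hη hη1
    have hQφ := hφ.integrable_mul hQ
    have hQη := hη.integrable_mul hQ
    calc ∫ x, φ x • (Q x - k) = ∫ x, (Q x * φ x - φ x * k) := by
          congr with x; rw [smul_eq_mul]; ring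
      _ = (∫ x, Q x * φ x) - (∫ x, φ x) * k := by
          rw [integral_sub hQφ (hφ.integrable.mul_const _), integral_mul_const]
      _ = ∫ x, (Q x * φ x - (∫ y, φ y) * (Q x * η x)) := by
          rw [integral_sub hQφ (hQη.const_mul _), integral_const_mul]
      _ = ∫ x, Q x * deriv Φ x := by rw [hΦ']; congr with x; ring
      _ = 0 := h Φ hΦ
  exact ⟨k, hzero.mono fun x hx => sub_eq_zero.1 hx⟩

lemma ae_eq_affine_of_integral_mul_deriv_deriv_eq_zero {Q : ℝ → ℝ} (hQ : LocallyIntegrable Q)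
    (h : ∀ φ, IsTestFunction φ → ∫ x, Q x * deriv (deriv φ) x = 0) :
    ∃ k l : ℝ, ∀ᵐ x, Q x = k + l * x := by
  obtain ⟨η, hη, hη1⟩ := IsTestFunction.exists_integral_eq_one
  set l : ℝ := -∫ x, Q x * deriv η x with hl
  have hQl : LocallyIntegrable (fun x : ℝ => Q x - l * x) :=
    hQ.sub (Continuous.locallyIntegrable (by fun_prop))
  obtain ⟨k, hk⟩ := ae_eq_const_of_integral_mul_deriv_eq_zero hQl fun φ hφ => by
    obtain ⟨Φ, hΦ, hΦ'⟩ := hφ.exists_deriv_eq_sub_integral_mul hη hη1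
    have hΦ'' : deriv (deriv Φ) = fun x => deriv φ x - (∫ y, φ y) * deriv η x := by
      rw [hΦ']
      exact funext fun x => ((hφ.hasDerivAt x).sub ((hη.hasDerivAt x).const_mul _)).deriv
    have hid : LocallyIntegrable (fun x : ℝ => x) := continuous_id.locallyIntegrable
    have hQφ := hφ.deriv.integrable_mul hQ
    calc ∫ x, (Q x - l * x) * deriv φ x
        = ∫ x, (Q x * deriv φ x - l * (x * deriv φ x)) := by congr with x; ring
      _ = (∫ x, Q x * deriv φ x) - (∫ y, φ y) * ∫ x, Q x * deriv η x := by
          rw [integral_sub hQφ ((hφ.deriv.integrable_mul hid).const_mul _),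
            integral_const_mul, hφ.integral_id_mul_deriv, hl]
          ring
      _ = ∫ x, (Q x * deriv φ x - (∫ y, φ y) * (Q x * deriv η x)) := by
          rw [integral_sub hQφ ((hη.deriv.integrable_mul hQ).const_mul _), integral_const_mul]
      _ = ∫ x, Q x * deriv (deriv Φ) x := by rw [hΦ'']; congr with x; ring
      _ = 0 := h Φ hΦ
  exact ⟨k, l, hk.mono fun x hx => by linarith⟩

lemma eq_of_ae_eq_of_continuousWithinAt_Ici {E : Type*} [TopologicalSpace E] [T2Space E]
    {f g : ℝ → E} {x : ℝ} (hf : ContinuousWithinAt f (Ici x) x)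
    (hg : ContinuousWithinAt g (Ici x) x) (h : f =ᵐ[volume] g) : f x = g x := by
  have hfreq : ∃ᶠ y in 𝓝[>] x, f y = g y := fun hne => by
    obtain ⟨u, hu, hsub⟩ := mem_nhdsGT_iff_exists_Ioo_subset.1 hne
    have hnull : volume (Ioo x u) = 0 := measure_mono_null hsub h
    rw [Real.volume_Ioo, ENNReal.ofReal_eq_zero, sub_nonpos] at hnull
    exact hnull.not_gt hu
  exact tendsto_nhds_unique_of_frequently_eq
    (hf.mono_left (nhdsWithin_mono _ Ioi_subset_Ici_self))
    (hg.mono_left (nhdsWithin_mono _ Ioi_subset_Ici_self)) hfreq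

/-! ### Integrals of one-sided continuous functions -/

lemma intervalIntegrable_of_abs_le {f : ℝ → ℝ} (hf : Measurable f) {M : ℝ} {x y : ℝ}
    (hM : ∀ z ∈ uIoc x y, |f z| ≤ M) : IntervalIntegrable f volume x y := by
  refine (intervalIntegrable_const (c := M)).mono_fun hf.aestronglyMeasurable ?_
  rw [EventuallyLE, ae_restrict_iff' measurableSet_uIoc]
  exact Eventually.of_forall fun z hz => (hM z hz).trans (le_abs_self M)

lemma locallyIntegrable_of_abs_le {f : ℝ → ℝ} (hf : Measurable f) {M : ℝ}
    (hM : ∀ x, |f x| ≤ M) : LocallyIntegrable f :=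
  (locallyIntegrable_const M).mono hf.aestronglyMeasurable
    (Eventually.of_forall fun x => (hM x).trans (le_abs_self M))

lemma hasDerivWithinAt_Ioi_integral {f : ℝ → ℝ} (hf : Measurable f) {x₀ x : ℝ}
    (hrc : ContinuousWithinAt f (Ici x) x) (hi : IntervalIntegrable f volume x₀ x) :
    HasDerivWithinAt (fun x => ∫ z in x₀..x, f z) (f x) (Ioi x) x :=
  (intervalIntegral.integral_hasDerivWithinAt_right hi (s := Ici x) (t := Ioi x)
    hf.stronglyMeasurable.stronglyMeasurableAtFilter (hrc.mono Ioi_subset_Ici_self)).mono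
    Ioi_subset_Ici_self

lemma tendsto_inv_mul_integral_nhdsGT {f : ℝ → ℝ} {s : ℝ} (hf : ContinuousAt f s)
    (hm : AEStronglyMeasurable f) :
    Tendsto (fun t => (t - s)⁻¹ * ∫ r in s..t, f r) (𝓝[>] s) (𝓝 (f s)) := by
  have hd := (intervalIntegral.integral_hasDerivAt_right (a := s) (b := s) (f := f) (by simp)
    ⟨univ, univ_mem, by simpa using hm⟩ hf).hasDerivWithinAt (s := Ioi s)
  rw [hasDerivWithinAt_iff_tendsto_slope' (by simp)] at hd
  refine hd.congr fun t => ?_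
  simp [slope_def_field, div_eq_inv_mul]

/-! ### Coefficients -/

section Primitive

variable {f : ℝ → ℝ} {K : ℝ}

lemma hasDerivAt_primitive (hf : Continuous f) (u : ℝ) : HasDerivAt (primitive f) (f u) u :=
  (hf.integral_hasStrictDerivAt 0 u).hasDerivAt

lemma continuous_primitive (hf : Continuous f) : Continuous (primitive f) :=
  continuous_iff_continuousAt.2 fun u => (hasDerivAt_primitive hf u).continuousAt

@[simp] lemma primitive_zero (f : ℝ → ℝ) : primitive f 0 = 0 :=
  intervalIntegral.integral_same

lemma abs_primitive_sub_le (hf : Continuous f) (hK : ∀ u, |f u| ≤ K) (p q : ℝ) :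
    |primitive f p - primitive f q| ≤ K * |p - q| :=
  convex_univ.norm_image_sub_le_of_norm_hasDerivWithin_le
    (fun x _ => (hasDerivAt_primitive hf x).hasDerivWithinAt) (fun x _ => hK x) trivial trivial

lemma abs_primitive_le (hf : Continuous f) (hK : ∀ u, |f u| ≤ K) {u : ℝ} (hu : u ∈ Icc 0 1) :
    |primitive f u| ≤ K := by
  have hK0 : 0 ≤ K := (abs_nonneg _).trans (hK 0)
  calc |primitive f u| ≤ K * |u| := by simpa using abs_primitive_sub_le hf hK u 0
    _ ≤ K * 1 := by gcongr; exact abs_le.2 ⟨by linarith [hu.1], hu.2⟩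
    _ = K := mul_one K

end Primitive

/-- Diffusion coefficient `a` and drift coefficient `b`, defined on the whole line, with the
uniform bounds on which the comparison principle relies. -/
structure Elliptic (a b : ℝ → ℝ) (c C L : ℝ) : Prop where
  continuous_a : Continuous a
  continuous_b : Continuous b
  pos : 0 < c
  le_a : ∀ u, c ≤ a u
  a_le : ∀ u, a u ≤ C
  abs_b_le : ∀ u, |b u| ≤ L

namespace Elliptic

variable {a b : ℝ → ℝ} {c C L : ℝ}

lemma a_pos (h : Elliptic a b c C L) (u : ℝ) : 0 < a u := h.pos.trans_le (h.le_a u)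

lemma C_pos (h : Elliptic a b c C L) : 0 < C := (h.a_pos 0).trans_le (h.a_le 0)

lemma L_nonneg (h : Elliptic a b c C L) : 0 ≤ L := (abs_nonneg _).trans (h.abs_b_le 0)

lemma abs_a_le (h : Elliptic a b c C L) (u : ℝ) : |a u| ≤ C := by
  rw [abs_of_pos (h.a_pos u)]
  exact h.a_le u

lemma mul_sub_le_primitive_sub (h : Elliptic a b c C L) {p q : ℝ} (hqp : q ≤ p) :
    c * (p - q) ≤ primitive a p - primitive a q :=
  convex_univ.mul_sub_le_image_sub_of_le_deriv (continuous_primitive h.continuous_a).continuousOn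
    (fun u _ => (hasDerivAt_primitive h.continuous_a u).differentiableAt.differentiableWithinAt)
    (fun u _ => by
      rw [(hasDerivAt_primitive h.continuous_a u).deriv]
      exact h.le_a u)
    q trivial p trivial hqp

lemma mul_sq_sub_le (h : Elliptic a b c C L) (p q : ℝ) :
    c * (p - q) ^ 2 ≤ (primitive a p - primitive a q) * (p - q) := by
  rcases le_total q p with hqp | hqp <;>
    nlinarith [h.mul_sub_le_primitive_sub hqp, sub_nonneg.2 hqp]

end Elliptic

/-- Coefficients for which, moreover, `a` is Lipschitz and the drift `B = primitive b` pushes mass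
towards the centre from both ends of the line. -/
structure Confining (a b : ℝ → ℝ) (c C L K γ : ℝ) : Prop extends Elliptic a b c C L where
  abs_a_sub_le : ∀ p q, |a p - a q| ≤ K * |p - q|
  γ_pos : 0 < γ
  primitive_b_one : primitive b 1 = 0
  le_primitive_b : ∀ u ∈ Icc (0 : ℝ) 1, γ * (u * (1 - u)) ≤ primitive b u

/-! ### Distribution functions and their primitives -/

lemma integrable_id_of_abs {ν : Measure ℝ} (hν : Integrable (fun z => |z|) ν) :
    Integrable (fun z => z) ν :=
  (integrable_norm_iff (by fun_prop)).1 hν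

/-- The primitive vanishing at `-∞` of the distribution function of `ν`; the evolution equation
and the stationary equation are both studied through it. -/
def integratedCdf (ν : Measure ℝ) (x : ℝ) : ℝ := ∫ z, max (x - z) 0 ∂ν

lemma integratedCdf_nonneg (ν : Measure ℝ) (x : ℝ) : 0 ≤ integratedCdf ν x :=
  integral_nonneg fun _ => le_max_right _ _

lemma tendsto_integratedCdf_atBot {ν : Measure ℝ} (hν : Integrable (fun z => z) ν) :
    Tendsto (integratedCdf ν) atBot (𝓝 0) := by
  have hlim : Tendsto (fun x => ∫ z, max (x - z) 0 ∂ν) atBot (𝓝 (∫ _, (0 : ℝ) ∂ν)) := by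
    refine tendsto_integral_filter_of_dominated_convergence (fun z => |z|)
      (Eventually.of_forall fun x => by fun_prop) ?_ hν.abs (Eventually.of_forall fun z => ?_)
    · filter_upwards [eventually_le_atBot (0 : ℝ)] with x hx
      refine Eventually.of_forall fun z => ?_
      rw [Real.norm_eq_abs, abs_of_nonneg (le_max_right _ _)]
      exact max_le (by linarith [neg_abs_le z]) (abs_nonneg z)
    · refine tendsto_const_nhds.congr' ?_
      filter_upwards [eventually_le_atBot z] with x hx
      rw [max_eq_right (sub_nonpos.2 hx)]
  rwa [integral_zero] at hlim

section Cdf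

variable {ν : Measure ℝ} [IsProbabilityMeasure ν]

lemma cdfOf_eq_cdf : cdfOf ν = ProbabilityTheory.cdf ν :=
  funext fun x => (ProbabilityTheory.cdf_eq_real ν x).symm

lemma isCDF_cdfOf : IsCDF (cdfOf ν) := by
  rw [cdfOf_eq_cdf]
  exact ⟨ProbabilityTheory.monotone_cdf ν, (ProbabilityTheory.cdf ν).right_continuous,
    ProbabilityTheory.tendsto_cdf_atBot ν, ProbabilityTheory.tendsto_cdf_atTop ν⟩

lemma monotone_cdfOf : Monotone (cdfOf ν) := isCDF_cdfOf.1

lemma continuousWithinAt_cdfOf (x : ℝ) : ContinuousWithinAt (cdfOf ν) (Ici x) x :=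
  isCDF_cdfOf.2.1 x

lemma cdfOf_mem_Icc (x : ℝ) : cdfOf ν x ∈ Icc 0 1 := ⟨measureReal_nonneg, measureReal_le_one⟩

lemma abs_cdfOf_le_one (x : ℝ) : |cdfOf ν x| ≤ 1 := by
  rw [abs_of_nonneg (cdfOf_mem_Icc x).1]
  exact (cdfOf_mem_Icc x).2

lemma intervalIntegrable_cdfOf (x y : ℝ) : IntervalIntegrable (cdfOf ν) volume x y :=
  monotone_cdfOf.intervalIntegrable

lemma intervalIntegrable_comp_cdfOf {f : ℝ → ℝ} (hf : Continuous f) (x y : ℝ) :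
    IntervalIntegrable (fun z => f (cdfOf ν z)) volume x y :=
  let ⟨_, hM⟩ := isCompact_Icc.exists_bound_of_continuousOn hf.continuousOn
  intervalIntegrable_of_abs_le (hf.measurable.comp monotone_cdfOf.measurable)
    fun z _ => hM _ (cdfOf_mem_Icc z)

lemma integrable_max_sub (hν : Integrable (fun z => z) ν) (x : ℝ) :
    Integrable (fun z => max (x - z) 0) ν :=
  ((integrable_const x).sub hν).pos_part

lemma integral_indicator_Ici_one {x y : ℝ} (hxy : x ≤ y) (z : ℝ) :
    ∫ u in x..y, (Ici z).indicator (fun _ => (1 : ℝ)) u = max (y - z) 0 - max (x - z) 0 := by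
  rw [intervalIntegral.integral_of_le hxy, ← integral_Icc_eq_integral_Ioc,
    integral_indicator_const _ measurableSet_Ici, measureReal_restrict_apply measurableSet_Ici,
    inter_comm, ← Ici_inter_Iic, inter_right_comm, Ici_inter_Ici, Ici_inter_Iic,
    Real.volume_real_Icc, smul_eq_mul, mul_one]
  rcases le_total x z with hz | hz
  · rw [sup_eq_right.2 hz, max_eq_right (sub_nonpos.2 hz), sub_zero]
  · rw [sup_eq_left.2 hz, max_eq_left (sub_nonneg.2 hxy),
      max_eq_left (sub_nonneg.2 (hz.trans hxy)), max_eq_left (sub_nonneg.2 hz)]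
    ring

lemma integral_cdfOf_eq_sub_of_le (hν : Integrable (fun z => z) ν) {x y : ℝ} (hxy : x ≤ y) :
    ∫ u in x..y, cdfOf ν u = integratedCdf ν y - integratedCdf ν x := by
  have hmeas : Measurable (uncurry fun u z : ℝ => (Ici z).indicator (fun _ => (1 : ℝ)) u) :=
    (measurable_const.indicator (measurableSet_le measurable_snd measurable_fst) :
      Measurable ({p : ℝ × ℝ | p.2 ≤ p.1}.indicator fun _ => (1 : ℝ)))
  have hint : Integrable (uncurry fun u z : ℝ => (Ici z).indicator (fun _ => (1 : ℝ)) u)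
      ((volume.restrict (Ioc x y)).prod ν) := by
    refine (integrable_const (1 : ℝ)).mono' hmeas.aestronglyMeasurable
      (Eventually.of_forall fun p => ?_)
    simpa [uncurry] using norm_indicator_le_norm_self (s := Ici p.2) (fun _ => (1 : ℝ)) p.1
  calc ∫ u in x..y, cdfOf ν u
      = ∫ u in Ioc x y, ∫ z, (Ici z).indicator (fun _ => (1 : ℝ)) u ∂ν := by
        rw [intervalIntegral.integral_of_le hxy]
        congr with u
        exact (integral_indicator_one (μ := ν) (measurableSet_Iic (a := u))).symm
    _ = ∫ z, (∫ u in x..y, (Ici z).indicator (fun _ => (1 : ℝ)) u) ∂ν := by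
        rw [integral_integral_swap hint]
        simp_rw [intervalIntegral.integral_of_le hxy]
    _ = integratedCdf ν y - integratedCdf ν x := by
        simp_rw [integral_indicator_Ici_one hxy]
        exact integral_sub (integrable_max_sub hν y) (integrable_max_sub hν x)

lemma integral_cdfOf_eq_sub (hν : Integrable (fun z => z) ν) (x y : ℝ) :
    ∫ u in x..y, cdfOf ν u = integratedCdf ν y - integratedCdf ν x := by
  rcases le_total x y with hxy | hxy
  · exact integral_cdfOf_eq_sub_of_le hν hxy
  · rw [intervalIntegral.integral_symm, integral_cdfOf_eq_sub_of_le hν hxy, neg_sub]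

lemma hasDerivWithinAt_integratedCdf (hν : Integrable (fun z => z) ν) (x : ℝ) :
    HasDerivWithinAt (integratedCdf ν) (cdfOf ν x) (Ioi x) x := by
  have hsplit : integratedCdf ν = fun y => integratedCdf ν 0 + ∫ u in (0 : ℝ)..y, cdfOf ν u :=
    funext fun y => by rw [integral_cdfOf_eq_sub hν]; ring
  rw [hsplit]
  exact (hasDerivWithinAt_Ioi_integral monotone_cdfOf.measurable (continuousWithinAt_cdfOf x)
    (intervalIntegrable_cdfOf 0 x)).const_add _

lemma abs_integratedCdf_sub_le (hν : Integrable (fun z => z) ν) (x y : ℝ) :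
    |integratedCdf ν y - integratedCdf ν x| ≤ |y - x| := by
  rw [← integral_cdfOf_eq_sub hν]
  simpa using intervalIntegral.norm_integral_le_of_norm_le_const (a := x) (b := y)
    (f := cdfOf ν) (C := 1) fun z _ => abs_cdfOf_le_one z

lemma continuous_integratedCdf (hν : Integrable (fun z => z) ν) : Continuous (integratedCdf ν) :=
  (LipschitzWith.of_dist_le_mul (K := 1) fun x y => by
    simpa [Real.dist_eq] using abs_integratedCdf_sub_le hν y x).continuous

lemma monotone_integratedCdf (hν : Integrable (fun z => z) ν) : Monotone (integratedCdf ν) :=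
  fun x y hxy => integral_mono (integrable_max_sub hν x) (integrable_max_sub hν y)
    fun z => by dsimp only; gcongr

lemma antitone_integratedCdf_sub (hν : Integrable (fun z => z) ν) (k : ℝ) :
    Antitone fun x => integratedCdf ν x - (x - k) := fun x y hxy => by
  have hlip := le_of_abs_le (abs_integratedCdf_sub_le hν x y)
  rw [abs_of_nonneg (sub_nonneg.2 hxy)] at hlip
  dsimp only
  linarith

lemma integral_sub_eq_sub_mean (hν : Integrable (fun z => z) ν) (x : ℝ) :
    ∫ z, (x - z) ∂ν = x - ∫ z, z ∂ν := by
  rw [integral_sub (integrable_const x) hν]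
  simp

lemma sub_mean_le_integratedCdf (hν : Integrable (fun z => z) ν) (x : ℝ) :
    x - ∫ z, z ∂ν ≤ integratedCdf ν x := by
  rw [← integral_sub_eq_sub_mean hν]
  exact integral_mono ((integrable_const x).sub hν) (integrable_max_sub hν x)
    fun z => le_max_left _ _

lemma tendsto_integratedCdf_sub_atTop (hν : Integrable (fun z => z) ν) :
    Tendsto (fun x => integratedCdf ν x - (x - ∫ z, z ∂ν)) atTop (𝓝 0) := by
  have hlim : Tendsto (fun x => ∫ z, (max (x - z) 0 - (x - z)) ∂ν) atTop
      (𝓝 (∫ _, (0 : ℝ) ∂ν)) := by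
    refine tendsto_integral_filter_of_dominated_convergence (fun z => |z|)
      (Eventually.of_forall fun x => by fun_prop) ?_ hν.abs (Eventually.of_forall fun z => ?_)
    · filter_upwards [eventually_ge_atTop (0 : ℝ)] with x hx
      refine Eventually.of_forall fun z => ?_
      rw [Real.norm_eq_abs, abs_of_nonneg (sub_nonneg.2 (le_max_left _ _)), sub_le_iff_le_add]
      exact max_le (by linarith [abs_nonneg z]) (by linarith [le_abs_self z])
    · refine tendsto_const_nhds.congr' ?_
      filter_upwards [eventually_ge_atTop z] with x hx
      rw [max_eq_left (sub_nonneg.2 hx), sub_self]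
  rw [integral_zero] at hlim
  refine hlim.congr fun x => ?_
  rw [← integral_sub_eq_sub_mean hν, integratedCdf]
  exact integral_sub (integrable_max_sub hν x) ((integrable_const x).sub hν)

end Cdf

/-! ### Continuous curves of probability measures -/

section Path

variable {P : ℝ → ProbabilityMeasure ℝ}

lemma measurable_cdfOf_apply (hP : Continuous P) (x : ℝ) :
    Measurable fun r => cdfOf (P r) x := by
  have hpos : ∀ n : ℕ, (0 : ℝ) < 1 / (n + 1) := fun n => by positivity
  have hcont : ∀ n : ℕ, Continuous fun r =>
      ∫⁻ ω, (thickenedIndicator (hpos n) (Iic x) ω : ℝ≥0∞) ∂(P r : Measure ℝ) := fun n =>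
    continuous_iff_continuousAt.2 fun r =>
      ProbabilityMeasure.tendsto_iff_forall_lintegral_tendsto.1 (hP.tendsto r) _
  refine (measurable_of_tendsto_metrizable (fun n => (hcont n).measurable)
    (tendsto_pi_nhds.2 fun r => ?_)).ennreal_toReal
  exact tendsto_lintegral_thickenedIndicator_of_isClosed (P r : Measure ℝ) isClosed_Iic hpos
    tendsto_one_div_add_atTop_nhds_zero_nat

lemma measurable_uncurry_cdfOf (hP : Continuous P) :
    Measurable fun p : ℝ × ℝ => cdfOf (P p.1) p.2 := by
  have hmeas : Measurable fun r => (P r : Measure ℝ) :=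
    Measurable.measure_of_isPiSystem_of_isProbabilityMeasure (borel_eq_generateFrom_Iic ℝ)
      isPiSystem_Iic <| by
        rintro - ⟨x, rfl⟩
        simpa [cdfOf] using (measurable_cdfOf_apply hP x).ennreal_ofReal
  let κ : ProbabilityTheory.Kernel (ℝ × ℝ) ℝ := ⟨fun p => P p.1, hmeas.comp measurable_fst⟩
  have : ProbabilityTheory.IsMarkovKernel κ := ⟨fun p => inferInstanceAs
    (IsProbabilityMeasure (P p.1 : Measure ℝ))⟩
  exact (ProbabilityTheory.Kernel.measurable_kernel_prodMk_left (κ := κ)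
    (t := {q : (ℝ × ℝ) × ℝ | q.2 ≤ q.1.2})
    (measurableSet_le measurable_snd measurable_fst.snd)).ennreal_toReal

lemma ae_continuousAt_cdfOf (hP : Continuous P) (t : ℝ) :
    ∀ᵐ x, ContinuousAt (fun r => cdfOf (P r) x) t := by
  have hatoms : {x : ℝ | 0 < (P t : Measure ℝ) {x}}.Countable :=
    Measure.countable_meas_level_set_pos (g := fun y : ℝ => y) measurable_id
  filter_upwards [hatoms.ae_notMem volume] with x hx
  have hnull : (P t : Measure ℝ) (frontier (Iic x)) = 0 := by
    rw [frontier_Iic]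
    exact nonpos_iff_eq_zero.1 (not_lt.1 hx)
  exact (ENNReal.tendsto_toReal (measure_ne_top _ _)).comp
    (ProbabilityMeasure.tendsto_measure_of_null_frontier_of_tendsto' (hP.tendsto t) hnull)

variable {f : ℝ → ℝ}

lemma exists_abs_comp_cdfOf_le (P : ℝ → ProbabilityMeasure ℝ) (hf : Continuous f) :
    ∃ M, ∀ r x, |f (cdfOf (P r) x)| ≤ M :=
  (isCompact_Icc.exists_bound_of_continuousOn hf.continuousOn).imp
    fun _ hM _ x => hM _ (cdfOf_mem_Icc x)

lemma intervalIntegrable_comp_cdfOf_time (hP : Continuous P) (hf : Continuous f) (s t x : ℝ) :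
    IntervalIntegrable (fun r => f (cdfOf (P r) x)) volume s t :=
  let ⟨_, hM⟩ := exists_abs_comp_cdfOf_le P hf
  intervalIntegrable_of_abs_le (hf.measurable.comp (measurable_cdfOf_apply hP x))
    fun r _ => hM r x

lemma measurable_integral_comp_cdfOf (hP : Continuous P) (hf : Continuous f) (s t : ℝ) :
    Measurable fun x => ∫ r in s..t, f (cdfOf (P r) x) := by
  have hmeas : StronglyMeasurable fun p : ℝ × ℝ => f (cdfOf (P p.2) p.1) :=
    (hf.measurable.comp ((measurable_uncurry_cdfOf hP).comp measurable_swap)).stronglyMeasurable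
  simp only [intervalIntegral]
  exact hmeas.integral_prod_right'.measurable.sub hmeas.integral_prod_right'.measurable

lemma tendsto_integral_comp_cdfOf (hP : Continuous P) (hf : Continuous f) (s t : ℝ)
    {l : Filter ℝ} [l.IsCountablyGenerated] {G : ℝ → ℝ}
    (hl : ∀ r, Tendsto (cdfOf (P r)) l (𝓝 (G r))) :
    Tendsto (fun x => ∫ r in s..t, f (cdfOf (P r) x)) l (𝓝 (∫ r in s..t, f (G r))) := by
  obtain ⟨M, hM⟩ := exists_abs_comp_cdfOf_le P hf
  exact intervalIntegral.tendsto_integral_filter_of_dominated_convergence (fun _ => M)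
    (Eventually.of_forall fun x => (hf.measurable.comp
      (measurable_cdfOf_apply hP x)).aestronglyMeasurable)
    (Eventually.of_forall fun x => Eventually.of_forall fun r _ => hM r x)
    intervalIntegrable_const
    (Eventually.of_forall fun r _ => (hf.tendsto _).comp (hl r))

lemma abs_integral_comp_cdfOf_le {M : ℝ} (hM : ∀ u ∈ Icc (0 : ℝ) 1, |f u| ≤ M) {s t : ℝ}
    (hst : s ≤ t) (x : ℝ) : |∫ r in s..t, f (cdfOf (P r) x)| ≤ M * (t - s) := by
  have hle := intervalIntegral.norm_integral_le_of_norm_le_const (a := s) (b := t)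
    (f := fun r => f (cdfOf (P r) x)) (C := M) fun r _ => hM _ (cdfOf_mem_Icc x)
  rwa [abs_of_nonneg (sub_nonneg.2 hst)] at hle

lemma locallyIntegrable_integral_comp_cdfOf (hP : Continuous P) (hf : Continuous f) (s t : ℝ) :
    LocallyIntegrable fun z => ∫ r in s..t, f (cdfOf (P r) z) :=
  let ⟨M, hM⟩ := exists_abs_comp_cdfOf_le P hf
  locallyIntegrable_of_abs_le (M := M * |t - s|) (measurable_integral_comp_cdfOf hP hf s t)
    fun z => intervalIntegral.norm_integral_le_of_norm_le_const
      (f := fun r => f (cdfOf (P r) z)) fun r _ => hM r z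

lemma intervalIntegrable_integral_comp_cdfOf (hP : Continuous P) (hf : Continuous f)
    (s t x y : ℝ) : IntervalIntegrable (fun z => ∫ r in s..t, f (cdfOf (P r) z)) volume x y :=
  ((locallyIntegrable_integral_comp_cdfOf hP hf s t).integrableOn_isCompact
    isCompact_uIcc).intervalIntegrable

lemma tendsto_average_comp_cdfOf (hP : Continuous P) (hf : Continuous f) {s x : ℝ}
    (hx : ContinuousAt (fun r => cdfOf (P r) x) s) :
    Tendsto (fun t => (t - s)⁻¹ * ∫ r in s..t, f (cdfOf (P r) x)) (𝓝[>] s)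
      (𝓝 (f (cdfOf (P s) x))) :=
  tendsto_inv_mul_integral_nhdsGT (f := fun r => f (cdfOf (P r) x)) (hf.continuousAt.comp hx)
    (hf.measurable.comp (measurable_cdfOf_apply hP x)).aestronglyMeasurable

end Path

/-! ### The integrated equation -/

/-- A continuous curve of probability measures with constant mean whose distribution functions
solve `∂ₜ F = ½ ∂ₓₓ A(F) - ∂ₓ B(F)` on `[0, ∞)`, where `A = primitive a` and `B = primitive b`. The
equation is integrated twice in space and once in time. The curve is defined for negative times
only to avoid restricting continuity to a half-line. -/
structure IntegratedSolution (a b : ℝ → ℝ) (P : ℝ → ProbabilityMeasure ℝ) : Prop where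
  continuous : Continuous P
  integrable : ∀ t, Integrable (fun z => z) (P t : Measure ℝ)
  mean_eq : ∀ t ≥ 0, ∫ z, z ∂(P t : Measure ℝ) = ∫ z, z ∂(P 0 : Measure ℝ)
  eq : ∀ s t, 0 ≤ s → s ≤ t → ∀ x y,
    1 / 2 * ((∫ r in s..t, primitive a (cdfOf (P r) y)) -
        ∫ r in s..t, primitive a (cdfOf (P r) x)) =
      ∫ z in x..y, (integratedCdf (P t) z - integratedCdf (P s) z +
        ∫ r in s..t, primitive b (cdfOf (P r) z))

namespace IntegratedSolution

variable {a b : ℝ → ℝ} {c C L : ℝ} {P : ℝ → ProbabilityMeasure ℝ} {s t : ℝ}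

lemma intervalIntegrable_flux (hc : Elliptic a b c C L) (h : IntegratedSolution a b P)
    (s t x y : ℝ) :
    IntervalIntegrable (fun z => integratedCdf (P t) z - integratedCdf (P s) z +
      ∫ r in s..t, primitive b (cdfOf (P r) z)) volume x y :=
  (((continuous_integratedCdf (h.integrable t)).sub
    (continuous_integratedCdf (h.integrable s))).intervalIntegrable _ _).add
    (intervalIntegrable_integral_comp_cdfOf h.continuous (continuous_primitive hc.continuous_b)
      s t x y)

lemma half_integral_primitive_a_eq (h : IntegratedSolution a b P) (hs : 0 ≤ s) (hst : s ≤ t) :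
    (fun x => 1 / 2 * ∫ r in s..t, primitive a (cdfOf (P r) x)) =
      fun x => 1 / 2 * (∫ r in s..t, primitive a (cdfOf (P r) 0)) +
        ∫ z in (0 : ℝ)..x, (integratedCdf (P t) z - integratedCdf (P s) z +
          ∫ r in s..t, primitive b (cdfOf (P r) z)) :=
  funext fun x => by rw [← h.eq s t hs hst]; ring

lemma continuous_half_integral_primitive_a (hc : Elliptic a b c C L)
    (h : IntegratedSolution a b P) (hs : 0 ≤ s) (hst : s ≤ t) :
    Continuous fun x => 1 / 2 * ∫ r in s..t, primitive a (cdfOf (P r) x) := by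
  rw [h.half_integral_primitive_a_eq hs hst]
  exact continuous_const.add
    (intervalIntegral.continuous_primitive (h.intervalIntegrable_flux hc _ _) 0)

lemma hasDerivWithinAt_half_integral_primitive_a (hc : Elliptic a b c C L)
    (h : IntegratedSolution a b P) (hs : 0 ≤ s) (hst : s ≤ t) (x : ℝ) :
    HasDerivWithinAt (fun x => 1 / 2 * ∫ r in s..t, primitive a (cdfOf (P r) x))
      (integratedCdf (P t) x - integratedCdf (P s) x +
        ∫ r in s..t, primitive b (cdfOf (P r) x)) (Ioi x) x := by
  have hB := continuous_primitive hc.continuous_b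
  have hcont := (continuous_integratedCdf (h.integrable t)).sub
    (continuous_integratedCdf (h.integrable s))
  rw [h.half_integral_primitive_a_eq hs hst]
  exact (hasDerivWithinAt_Ioi_integral
    (hcont.measurable.add (measurable_integral_comp_cdfOf h.continuous hB s t))
    (hcont.continuousWithinAt.add (tendsto_integral_comp_cdfOf h.continuous hB s t
      fun r => continuousWithinAt_cdfOf x))
    (h.intervalIntegrable_flux hc _ _ 0 x)).const_add _

/- The equation on `[x, x + ε]`, where `Φ t - Φ s` varies by at most `2 ε`. -/
lemma abs_integratedCdf_time_sub_le (hc : Elliptic a b c C L) (h : IntegratedSolution a b P)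
    (hs : 0 ≤ s) (hst : s ≤ t) (x : ℝ) {ε : ℝ} (hε : 0 < ε) :
    |integratedCdf (P t) x - integratedCdf (P s) x| ≤ (C / ε + L) * (t - s) + 2 * ε := by
  set δ := integratedCdf (P t) x - integratedCdf (P s) x
  have hA : ∀ y, |∫ r in s..t, primitive a (cdfOf (P r) y)| ≤ C * (t - s) :=
    abs_integral_comp_cdfOf_le (fun _ => abs_primitive_le hc.continuous_a hc.abs_a_le) hst
  have hB : ∀ y, |∫ r in s..t, primitive b (cdfOf (P r) y)| ≤ L * (t - s) :=
    abs_integral_comp_cdfOf_le (fun _ => abs_primitive_le hc.continuous_b hc.abs_b_le) hst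
  have hflux : ∀ z ∈ uIoc x (x + ε), ‖integratedCdf (P t) z - integratedCdf (P s) z +
      (∫ r in s..t, primitive b (cdfOf (P r) z)) - δ‖ ≤ 2 * ε + L * (t - s) := fun z hz => by
    rw [uIoc_of_le (by linarith)] at hz
    have ht := (abs_integratedCdf_sub_le (h.integrable t) x z).trans_eq
      (abs_of_pos (sub_pos.2 hz.1))
    have hs := (abs_integratedCdf_sub_le (h.integrable s) x z).trans_eq
      (abs_of_pos (sub_pos.2 hz.1))
    have hBz := hB z
    rw [Real.norm_eq_abs, abs_le]
    rw [abs_le] at ht hs hBz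
    constructor <;> linarith [hz.2]
  have hmain : |ε * δ| ≤ ((C / ε + L) * (t - s) + 2 * ε) * ε := by
    have hle := intervalIntegral.norm_integral_le_of_norm_le_const hflux
    rw [intervalIntegral.integral_sub (h.intervalIntegrable_flux hc _ _ _ _)
      intervalIntegrable_const, ← h.eq s t hs hst, intervalIntegral.integral_const,
      add_sub_cancel_left, abs_of_pos hε, Real.norm_eq_abs, smul_eq_mul] at hle
    have hAx := hA x
    have hAε := hA (x + ε)
    have : C / ε * (t - s) * ε = C * (t - s) := by field_simp
    rw [abs_le] at hle hAx hAε ⊢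
    constructor <;> linarith
  rw [abs_mul, abs_of_pos hε, mul_comm] at hmain
  exact le_of_mul_le_mul_right hmain hε

lemma exists_abs_integratedCdf_time_sub_lt (hc : Elliptic a b c C L) (h : IntegratedSolution a b P)
    {t₀ : ℝ} (ht₀ : 0 ≤ t₀) {ε : ℝ} (hε : 0 < ε) :
    ∃ δ > 0, ∀ t ≥ 0, |t - t₀| < δ →
      ∀ x, |integratedCdf (P t) x - integratedCdf (P t₀) x| < ε := by
  have hslope : 0 < C / (ε / 8) + L := add_pos_of_pos_of_nonneg
    (div_pos hc.C_pos (by positivity)) hc.L_nonneg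
  refine ⟨ε / 2 / (C / (ε / 8) + L), by positivity, fun t ht htδ x => ?_⟩
  rw [lt_div_iff₀' hslope] at htδ
  rcases le_total t₀ t with htt | htt
  · have := h.abs_integratedCdf_time_sub_le hc ht₀ htt x (ε := ε / 8) (by positivity)
    rw [abs_of_nonneg (sub_nonneg.2 htt)] at htδ
    linarith
  · have := h.abs_integratedCdf_time_sub_le hc ht htt x (ε := ε / 8) (by positivity)
    rw [abs_of_nonpos (sub_nonpos.2 htt)] at htδ
    rw [abs_sub_comm]
    linarith

lemma continuousOn_integratedCdf (hc : Elliptic a b c C L) (h : IntegratedSolution a b P) :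
    ContinuousOn (fun p : ℝ × ℝ => integratedCdf (P p.1) p.2) (Ici 0 ×ˢ univ) := by
  rw [Metric.continuousOn_iff]
  rintro ⟨t₀, x₀⟩ ⟨ht₀, -⟩ ε hε
  obtain ⟨δ, hδ, htime⟩ := h.exists_abs_integratedCdf_time_sub_lt hc ht₀ (half_pos hε)
  refine ⟨min δ (ε / 2), by positivity, ?_⟩
  rintro ⟨t, x⟩ ⟨ht, -⟩ hdist
  rw [Prod.dist_eq, max_lt_iff, lt_min_iff, lt_min_iff, Real.dist_eq, Real.dist_eq] at hdist
  calc dist (integratedCdf (P t) x) (integratedCdf (P t₀) x₀)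
      ≤ |integratedCdf (P t) x - integratedCdf (P t₀) x| +
        |integratedCdf (P t₀) x - integratedCdf (P t₀) x₀| := dist_triangle _ _ _
    _ < ε / 2 + ε / 2 := add_lt_add_of_lt_of_le (htime t ht hdist.1.1 x)
        ((abs_integratedCdf_sub_le (h.integrable t₀) x₀ x).trans hdist.2.2.le)
    _ = ε := add_halves ε

end IntegratedSolution

/-! ### Comparison with barriers -/

lemma hasDerivAt_three_mul_max_sq (p : ℝ) :
    HasDerivAt (fun p : ℝ => 3 * max p 0 ^ 2) (6 * max p 0) p := by
  rcases lt_trichotomy p 0 with hp | rfl | hp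
  · rw [max_eq_right hp.le, mul_zero]
    refine (hasDerivAt_const p (0 : ℝ)).congr_of_eventuallyEq ?_
    filter_upwards [Iio_mem_nhds hp] with q hq
    simp [max_eq_right (le_of_lt (mem_Iio.1 hq))]
  · rw [hasDerivAt_iff_isLittleO]
    simp only [max_self, sub_zero, smul_eq_mul, mul_zero, ne_eq, OfNat.ofNat_ne_zero,
      not_false_eq_true, zero_pow]
    refine Asymptotics.IsLittleO.of_bound fun ε hε => ?_
    filter_upwards [Metric.ball_mem_nhds (0 : ℝ) (show 0 < ε / 3 by positivity)] with q hq
    rw [Metric.mem_ball, Real.dist_eq, sub_zero] at hq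
    have hsq : max q 0 ^ 2 ≤ |q| ^ 2 := by
      gcongr
      exact max_le (le_abs_self q) (abs_nonneg q)
    rw [Real.norm_eq_abs, Real.norm_eq_abs, abs_of_nonneg (by positivity)]
    nlinarith [abs_nonneg q]
  · rw [max_eq_left hp.le]
    have hsq : HasDerivAt (fun q : ℝ => 3 * q ^ 2) (6 * p) p :=
      ((hasDerivAt_pow 2 p).const_mul 3).congr_deriv (by norm_num; ring)
    refine hsq.congr_of_eventuallyEq ?_
    filter_upwards [Ioi_mem_nhds hp] with q hq
    rw [max_eq_left (le_of_lt (mem_Ioi.1 hq))]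

lemma max_cube_sub_le (p q : ℝ) : max p 0 ^ 3 - max q 0 ^ 3 ≤ 3 * max p 0 ^ 2 * (p - q) := by
  have hp : max p 0 ^ 2 * max p 0 = max p 0 ^ 2 * p := by
    rcases le_total p 0 with hp | hp
    · simp [max_eq_right hp]
    · simp [max_eq_left hp]
  have hp₀ := le_max_right p 0
  have hq₀ := le_max_right q 0
  have hq : max p 0 ^ 2 * q ≤ max p 0 ^ 2 * max q 0 :=
    mul_le_mul_of_nonneg_left (le_max_left q 0) (by positivity)
  nlinarith [mul_nonneg (add_nonneg (mul_nonneg two_pos.le hp₀) hq₀)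
    (sq_nonneg (max p 0 - max q 0))]

/-- A barrier `U` on `[0, ∞) × [l, r]` for the once integrated equation
`∂ₜ Φ = ½ ∂ₓ A(∂ₓ Φ) - B(∂ₓ Φ)`: a supersolution if `σ = 1` and a subsolution if `σ = -1`. Here `v`
is `∂ₓ U`, `q` is `∂ₜ U` and `f` is `½ ∂ₓ A(v)`. -/
structure IsBarrier (a b : ℝ → ℝ) (σ l r : ℝ) (U v q f : ℝ → ℝ → ℝ) : Prop where
  abs_sign : |σ| = 1
  continuous : Continuous (uncurry U)
  continuous_space : Continuous (uncurry v)
  continuous_time : Continuous (uncurry q)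
  continuous_diffusion : ∀ t, Continuous (f t)
  hasDerivAt_space : ∀ t x, HasDerivAt (U t) (v t x) x
  hasDerivAt_time : ∀ t x, HasDerivAt (fun t => U t x) (q t x) t
  hasDerivAt_diffusion : ∀ t x, HasDerivAt (fun x => 1 / 2 * primitive a (v t x)) (f t x) x
  le : ∀ t ≥ 0, ∀ x ∈ Icc l r, σ * (f t x - primitive b (v t x) - q t x) ≤ 0

/-- The amount by which the integrated distribution function of `P t` violates the bound
`σ * (integratedCdf (P t) x - U t x) ≤ 0`. -/
def excess (σ : ℝ) (P : ℝ → ProbabilityMeasure ℝ) (U : ℝ → ℝ → ℝ) (t x : ℝ) : ℝ :=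
  max (σ * (integratedCdf (P t) x - U t x)) 0

lemma excess_nonneg (σ : ℝ) (P : ℝ → ProbabilityMeasure ℝ) (U : ℝ → ℝ → ℝ) (t x : ℝ) :
    0 ≤ excess σ P U t x :=
  le_max_right _ _

lemma excess_eq_zero_iff {σ : ℝ} {P : ℝ → ProbabilityMeasure ℝ} {U : ℝ → ℝ → ℝ} {t x : ℝ} :
    excess σ P U t x = 0 ↔ σ * (integratedCdf (P t) x - U t x) ≤ 0 :=
  max_eq_right_iff

namespace IsBarrier

variable {a b : ℝ → ℝ} {c C L σ l r : ℝ} {U v q f : ℝ → ℝ → ℝ}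
  {P : ℝ → ProbabilityMeasure ℝ}

lemma continuous_excess (hU : IsBarrier a b σ l r U v q f)
    (h : IntegratedSolution a b P) (t : ℝ) : Continuous (excess σ P U t) :=
  (continuous_const.mul ((continuous_integratedCdf (h.integrable t)).sub
    (hU.continuous.uncurry_left t))).max continuous_const

lemma continuousOn_excess (hU : IsBarrier a b σ l r U v q f)
    (hc : Elliptic a b c C L) (h : IntegratedSolution a b P) :
    ContinuousOn (uncurry (excess σ P U)) (Ici 0 ×ˢ univ) :=
  (continuousOn_const.mul ((h.continuousOn_integratedCdf hc).sub
    hU.continuous.continuousOn)).sup continuousOn_const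

lemma exists_bound (hU : IsBarrier a b σ l r U v q f)
    (hc : Elliptic a b c C L) (h : IntegratedSolution a b P) (T : ℝ) :
    ∃ M, ∀ t ∈ Icc 0 T, ∀ x ∈ Icc l r,
      excess σ P U t x ≤ M ∧ |v t x| ≤ M ∧ |q t x| ≤ M := by
  have hK : IsCompact (Icc (0 : ℝ) T ×ˢ Icc l r) := isCompact_Icc.prod isCompact_Icc
  obtain ⟨M, hM⟩ := hK.bddAbove_image (((hU.continuousOn_excess hc h).mono
    (prod_mono Icc_subset_Ici_self (subset_univ _))).add
      (hU.continuous_space.abs.add hU.continuous_time.abs).continuousOn)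
  refine ⟨M, fun t ht x hx => ?_⟩
  have hsum : excess σ P U t x + (|v t x| + |q t x|) ≤ M :=
    hM (mem_image_of_mem _ (mk_mem_prod ht hx))
  have := excess_nonneg σ P U t x
  exact ⟨by linarith [abs_nonneg (v t x), abs_nonneg (q t x)], by linarith [abs_nonneg (q t x)],
    by linarith [abs_nonneg (v t x)]⟩

lemma hasDerivWithinAt_weight (hU : IsBarrier a b σ l r U v q f)
    (h : IntegratedSolution a b P) (t x : ℝ) :
    HasDerivWithinAt (fun x => σ * (3 * excess σ P U t x ^ 2))
      (6 * excess σ P U t x * (cdfOf (P t) x - v t x)) (Ioi x) x := by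
  have hgap := ((hasDerivWithinAt_integratedCdf (h.integrable t) x).sub
    (hU.hasDerivAt_space t x).hasDerivWithinAt).const_mul σ
  refine (((hasDerivAt_three_mul_max_sq _).comp_hasDerivWithinAt x hgap).const_mul σ).congr_deriv ?_
  change σ * (6 * excess σ P U t x * (σ * (cdfOf (P t) x - v t x))) = _
  linear_combination (6 * excess σ P U t x * (cdfOf (P t) x - v t x)) *
    (sq_abs σ).symm.trans (by rw [hU.abs_sign, one_pow])

lemma intervalIntegrable_weight_deriv (hU : IsBarrier a b σ l r U v q f)
    (h : IntegratedSolution a b P) (t : ℝ) :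
    IntervalIntegrable (fun x => 6 * excess σ P U t x * (cdfOf (P t) x - v t x)) volume l r :=
  ((intervalIntegrable_cdfOf l r).sub
    ((hU.continuous_space.uncurry_left t).intervalIntegrable l r)).continuousOn_mul
    ((hU.continuous_excess h t).const_mul 6).continuousOn

lemma integral_weight_mul_deriv (hU : IsBarrier a b σ l r U v q f)
    (h : IntegratedSolution a b P) {t : ℝ} (hl : excess σ P U t l = 0)
    (hr : excess σ P U t r = 0) {g g' : ℝ → ℝ} (hg : Continuous g)
    (hg' : ∀ x, HasDerivWithinAt g (g' x) (Ioi x) x) (hi : IntervalIntegrable g' volume l r) :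
    ∫ x in l..r, σ * (3 * excess σ P U t x ^ 2) * g' x =
      -∫ x in l..r, 6 * excess σ P U t x * (cdfOf (P t) x - v t x) * g x := by
  have hibp := intervalIntegral.integral_mul_deriv_eq_deriv_mul_of_hasDeriv_right
    ((((hU.continuous_excess h t).pow 2).const_mul 3).const_mul σ).continuousOn hg.continuousOn
    (fun x _ => hU.hasDerivWithinAt_weight h t x) (fun x _ => hg' x)
    (hU.intervalIntegrable_weight_deriv h t) hi
  simpa [hl, hr] using hibp

lemma intervalIntegrable_excess_pow (hU : IsBarrier a b σ l r U v q f)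
    (h : IntegratedSolution a b P) (t : ℝ) :
    IntervalIntegrable (fun x => excess σ P U t x ^ 3) volume l r :=
  ((hU.continuous_excess h t).pow 3).intervalIntegrable l r

lemma integral_excess_sub_le (hU : IsBarrier a b σ l r U v q f) (hc : Elliptic a b c C L)
    (h : IntegratedSolution a b P) (hlr : l ≤ r) {s t : ℝ} (hs : 0 ≤ s) (hst : s ≤ t)
    (hl : excess σ P U t l = 0) (hr : excess σ P U t r = 0) :
    (∫ x in l..r, excess σ P U t x ^ 3) - ∫ x in l..r, excess σ P U s x ^ 3 ≤
      -∫ x in l..r, (6 * excess σ P U t x * (cdfOf (P t) x - v t x) *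
          (1 / 2 * ∫ τ in s..t, primitive a (cdfOf (P τ) x)) +
        σ * (3 * excess σ P U t x ^ 2) *
          ((∫ τ in s..t, primitive b (cdfOf (P τ) x)) + (U t x - U s x))) := by
  have hA := h.continuous_half_integral_primitive_a hc hs hst
  have hflux := h.intervalIntegrable_flux hc s t l r
  have hw : Continuous fun x => σ * (3 * excess σ P U t x ^ 2) :=
    (((hU.continuous_excess h t).pow 2).const_mul 3).const_mul σ
  have hΔ : Continuous fun x => integratedCdf (P t) x - integratedCdf (P s) x - (U t x - U s x) :=
    ((continuous_integratedCdf (h.integrable t)).sub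
      (continuous_integratedCdf (h.integrable s))).sub
      ((hU.continuous.uncurry_left t).sub (hU.continuous.uncurry_left s))
  have hB : IntervalIntegrable (fun x => σ * (3 * excess σ P U t x ^ 2) *
      ((∫ τ in s..t, primitive b (cdfOf (P τ) x)) + (U t x - U s x))) volume l r :=
    ((intervalIntegrable_integral_comp_cdfOf h.continuous (continuous_primitive hc.continuous_b)
      s t l r).add (((hU.continuous.uncurry_left t).sub
        (hU.continuous.uncurry_left s)).intervalIntegrable l r)).continuousOn_mul hw.continuousOn
  calc _ = ∫ x in l..r, (excess σ P U t x ^ 3 - excess σ P U s x ^ 3) :=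
        (intervalIntegral.integral_sub (hU.intervalIntegrable_excess_pow h t)
          (hU.intervalIntegrable_excess_pow h s)).symm
    _ ≤ ∫ x in l..r, σ * (3 * excess σ P U t x ^ 2) *
          (integratedCdf (P t) x - integratedCdf (P s) x - (U t x - U s x)) :=
        intervalIntegral.integral_mono_on hlr ((hU.intervalIntegrable_excess_pow h t).sub
          (hU.intervalIntegrable_excess_pow h s)) ((hw.mul hΔ).intervalIntegrable l r)
          fun x _ => (max_cube_sub_le _ _).trans_eq (by simp only [excess]; ring)
    _ = (∫ x in l..r, σ * (3 * excess σ P U t x ^ 2) * (integratedCdf (P t) x -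
          integratedCdf (P s) x + ∫ τ in s..t, primitive b (cdfOf (P τ) x))) -
        ∫ x in l..r, σ * (3 * excess σ P U t x ^ 2) *
          ((∫ τ in s..t, primitive b (cdfOf (P τ) x)) + (U t x - U s x)) := by
        rw [← intervalIntegral.integral_sub (hflux.continuousOn_mul hw.continuousOn) hB]
        exact intervalIntegral.integral_congr fun x _ => by ring
    _ = _ := by
        rw [hU.integral_weight_mul_deriv h hl hr hA
            (h.hasDerivWithinAt_half_integral_primitive_a hc hs hst) hflux,
          intervalIntegral.integral_add ((hU.intervalIntegrable_weight_deriv h t).mul_continuousOn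
            hA.continuousOn) hB, neg_add']

lemma abs_weight_le (hU : IsBarrier a b σ l r U v q f) {t x M : ℝ}
    (hM : excess σ P U t x ≤ M) : |σ * (3 * excess σ P U t x ^ 2)| ≤ 3 * M ^ 2 := by
  have := excess_nonneg σ P U t x
  rw [abs_mul, hU.abs_sign, one_mul, abs_of_nonneg (by positivity)]
  gcongr

lemma abs_weight_deriv_le {t x M : ℝ} (hM : excess σ P U t x ≤ M) (hv : |v t x| ≤ M) :
    |6 * excess σ P U t x * (cdfOf (P t) x - v t x)| ≤ 6 * M * (1 + M) := by
  have := excess_nonneg σ P U t x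
  have hF : |cdfOf (P t) x - v t x| ≤ 1 + M :=
    (abs_sub _ _).trans (add_le_add (abs_cdfOf_le_one x) hv)
  rw [abs_mul, abs_of_nonneg (show 0 ≤ 6 * excess σ P U t x by positivity)]
  exact mul_le_mul (by linarith) hF (abs_nonneg _) (by linarith)

lemma abs_time_sub_le (hU : IsBarrier a b σ l r U v q f) {T M s t x : ℝ}
    (hM : ∀ τ ∈ Icc 0 T, |q τ x| ≤ M) (hs : 0 ≤ s) (hst : s ≤ t) (ht : t ≤ T) :
    |U t x - U s x| ≤ M * (t - s) := by
  have hle := (convex_Icc (0 : ℝ) T).norm_image_sub_le_of_norm_hasDerivWithin_le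
    (fun τ _ => (hU.hasDerivAt_time τ x).hasDerivWithinAt) hM
    ⟨hs, hst.trans ht⟩ ⟨hs.trans hst, ht⟩
  rwa [Real.norm_eq_abs, Real.norm_eq_abs, abs_of_nonneg (sub_nonneg.2 hst)] at hle

lemma tendsto_dissipation_integrand (hU : IsBarrier a b σ l r U v q f)
    (hc : Elliptic a b c C L) (h : IntegratedSolution a b P) {s : ℝ} (hs : 0 ≤ s) {x : ℝ}
    (hx : ContinuousAt (fun t => cdfOf (P t) x) s) :
    Tendsto (fun t => (t - s)⁻¹ * (6 * excess σ P U t x * (cdfOf (P t) x - v t x) *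
          (1 / 2 * ∫ τ in s..t, primitive a (cdfOf (P τ) x)) +
        σ * (3 * excess σ P U t x ^ 2) *
          ((∫ τ in s..t, primitive b (cdfOf (P τ) x)) + (U t x - U s x)))) (𝓝[>] s)
      (𝓝 (6 * excess σ P U s x * (cdfOf (P s) x - v s x) *
          (1 / 2 * primitive a (cdfOf (P s) x)) +
        σ * (3 * excess σ P U s x ^ 2) * (primitive b (cdfOf (P s) x) + q s x))) := by
  have he : Tendsto (fun t => excess σ P U t x) (𝓝[>] s) (𝓝 (excess σ P U s x)) :=
    ((hU.continuousOn_excess hc h (s, x) ⟨hs, mem_univ x⟩).tendsto.comp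
      (tendsto_nhdsWithin_iff.2 ⟨(by fun_prop : Continuous fun t : ℝ => (t, x)).continuousWithinAt,
        eventually_mem_nhdsWithin.mono fun t ht => ⟨hs.trans (le_of_lt ht), mem_univ x⟩⟩))
  have hv : Tendsto (fun t => v t x) (𝓝[>] s) (𝓝 (v s x)) :=
    (hU.continuous_space.uncurry_right x).continuousWithinAt
  have hF : Tendsto (fun t => cdfOf (P t) x) (𝓝[>] s) (𝓝 (cdfOf (P s) x)) :=
    hx.continuousWithinAt
  have hU' : Tendsto (fun t => (t - s)⁻¹ * (U t x - U s x)) (𝓝[>] s) (𝓝 (q s x)) :=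
    (hasDerivWithinAt_iff_tendsto_slope' (lt_irrefl s)).1
      (hU.hasDerivAt_time s x).hasDerivWithinAt
  have hA := tendsto_average_comp_cdfOf h.continuous (continuous_primitive hc.continuous_a) hx
  have hB := tendsto_average_comp_cdfOf h.continuous (continuous_primitive hc.continuous_b) hx
  refine ((((he.const_mul 6).mul (hF.sub hv)).mul (hA.const_mul (1 / 2))).add
    ((((he.pow 2).const_mul 3).const_mul σ).mul (hB.add hU'))).congr fun t => ?_
  ring

lemma measurable_dissipation_integrand (hU : IsBarrier a b σ l r U v q f)
    (hc : Elliptic a b c C L) (h : IntegratedSolution a b P) (s t : ℝ) :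
    Measurable fun x => 6 * excess σ P U t x * (cdfOf (P t) x - v t x) *
        (1 / 2 * ∫ τ in s..t, primitive a (cdfOf (P τ) x)) +
      σ * (3 * excess σ P U t x ^ 2) *
        ((∫ τ in s..t, primitive b (cdfOf (P τ) x)) + (U t x - U s x)) := by
  have he := (hU.continuous_excess h t).measurable
  have hF := (monotone_cdfOf (ν := P t)).measurable
  have hv := (hU.continuous_space.uncurry_left t).measurable
  have hUt := (hU.continuous.uncurry_left t).measurable
  have hUs := (hU.continuous.uncurry_left s).measurable
  have hA := measurable_integral_comp_cdfOf h.continuous (continuous_primitive hc.continuous_a) s t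
  have hB := measurable_integral_comp_cdfOf h.continuous (continuous_primitive hc.continuous_b) s t
  fun_prop

lemma abs_dissipation_integrand_le (hU : IsBarrier a b σ l r U v q f) (hc : Elliptic a b c C L)
    {s t x M : ℝ} (hst : s ≤ t) (he : excess σ P U t x ≤ M) (hv : |v t x| ≤ M)
    (hq : |U t x - U s x| ≤ M * (t - s)) :
    |6 * excess σ P U t x * (cdfOf (P t) x - v t x) *
          (1 / 2 * ∫ τ in s..t, primitive a (cdfOf (P τ) x)) +
        σ * (3 * excess σ P U t x ^ 2) *
          ((∫ τ in s..t, primitive b (cdfOf (P τ) x)) + (U t x - U s x))| ≤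
      (t - s) * (6 * M * (1 + M) * (1 / 2 * C) + 3 * M ^ 2 * (L + M)) := by
  have hA : |1 / 2 * ∫ τ in s..t, primitive a (cdfOf (P τ) x)| ≤ 1 / 2 * (C * (t - s)) := by
    rw [abs_mul, abs_of_pos one_half_pos]
    gcongr
    exact abs_integral_comp_cdfOf_le (fun _ => abs_primitive_le hc.continuous_a hc.abs_a_le) hst x
  have hB := abs_integral_comp_cdfOf_le (P := P)
    (fun _ => abs_primitive_le hc.continuous_b hc.abs_b_le) hst x
  have hBq : |(∫ τ in s..t, primitive b (cdfOf (P τ) x)) + (U t x - U s x)| ≤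
      (L + M) * (t - s) := (abs_add_le _ _).trans (by linarith)
  have h₁ := (abs_mul _ _).le.trans (mul_le_mul (abs_weight_deriv_le he hv) hA (abs_nonneg _)
    ((abs_nonneg _).trans (abs_weight_deriv_le he hv)))
  have h₂ := (abs_mul _ _).le.trans (mul_le_mul (hU.abs_weight_le he) hBq (abs_nonneg _)
    (by positivity))
  exact (abs_add_le _ _).trans ((add_le_add h₁ h₂).trans_eq (by ring))

lemma tendsto_dissipation (hU : IsBarrier a b σ l r U v q f) (hc : Elliptic a b c C L)
    (h : IntegratedSolution a b P) (hlr : l ≤ r) {s : ℝ} (hs : 0 ≤ s) :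
    Tendsto (fun t => (t - s)⁻¹ * ∫ x in l..r,
      (6 * excess σ P U t x * (cdfOf (P t) x - v t x) *
          (1 / 2 * ∫ τ in s..t, primitive a (cdfOf (P τ) x)) +
        σ * (3 * excess σ P U t x ^ 2) *
          ((∫ τ in s..t, primitive b (cdfOf (P τ) x)) + (U t x - U s x)))) (𝓝[>] s)
      (𝓝 (∫ x in l..r, (6 * excess σ P U s x * (cdfOf (P s) x - v s x) *
          (1 / 2 * primitive a (cdfOf (P s) x)) +
        σ * (3 * excess σ P U s x ^ 2) * (primitive b (cdfOf (P s) x) + q s x)))) := by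
  obtain ⟨M, hM⟩ := hU.exists_bound hc h (s + 1)
  refine (intervalIntegral.tendsto_integral_filter_of_dominated_convergence
    (fun _ => 6 * M * (1 + M) * (1 / 2 * C) + 3 * M ^ 2 * (L + M))
    (Eventually.of_forall fun t => ((hU.measurable_dissipation_integrand hc h s t).const_mul
      (t - s)⁻¹).aestronglyMeasurable) ?_ intervalIntegrable_const
    ((ae_continuousAt_cdfOf h.continuous s).mono fun x hx _ =>
      hU.tendsto_dissipation_integrand hc h hs hx)).congr
    fun t => intervalIntegral.integral_const_mul _ _
  filter_upwards [Ioo_mem_nhdsGT (lt_add_one s)] with t ht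
  refine Eventually.of_forall fun x hx => ?_
  rw [uIoc_of_le hlr] at hx
  have hx := Ioc_subset_Icc_self hx
  have hts : 0 < t - s := sub_pos.2 ht.1
  obtain ⟨he, hv, -⟩ := hM t ⟨hs.trans ht.1.le, ht.2.le⟩ x hx
  rw [norm_mul, norm_inv, Real.norm_of_nonneg hts.le, inv_mul_le_iff₀ hts]
  exact hU.abs_dissipation_integrand_le hc ht.1.le he hv
    (hU.abs_time_sub_le (fun τ hτ => (hM τ hτ x hx).2.2) hs ht.1.le ht.2.le)

/- The ellipticity absorbs the drift: `σ² = 1`, and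
`3 L w² |y| - 3 c w y² ≤ (3 L² / (4 c)) w³` by completing the square. -/
lemma neg_dissipation_integrand_le (hU : IsBarrier a b σ l r U v q f) (hc : Elliptic a b c C L)
    {t x : ℝ} (ht : 0 ≤ t) (hx : x ∈ Icc l r) :
    σ * (3 * excess σ P U t x ^ 2) * f t x +
        6 * excess σ P U t x * (cdfOf (P t) x - v t x) * (1 / 2 * primitive a (v t x)) -
      (6 * excess σ P U t x * (cdfOf (P t) x - v t x) * (1 / 2 * primitive a (cdfOf (P t) x)) +
        σ * (3 * excess σ P U t x ^ 2) * (primitive b (cdfOf (P t) x) + q t x)) ≤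
      3 * L ^ 2 / (4 * c) * excess σ P U t x ^ 3 := by
  have hw := excess_nonneg σ P U t x
  set w := excess σ P U t x
  set y := cdfOf (P t) x - v t x
  have hcpos := hc.pos
  have helliptic : 3 * w * (c * y ^ 2) ≤
      3 * w * ((primitive a (cdfOf (P t) x) - primitive a (v t x)) * y) :=
    mul_le_mul_of_nonneg_left (hc.mul_sq_sub_le _ _) (by positivity)
  have hdrift : 3 * w ^ 2 * (-σ * (primitive b (cdfOf (P t) x) - primitive b (v t x))) ≤
      3 * w ^ 2 * (L * |y|) := by
    refine mul_le_mul_of_nonneg_left ((le_abs_self _).trans ?_) (by positivity)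
    rw [abs_mul, abs_neg, hU.abs_sign, one_mul]
    exact abs_primitive_sub_le hc.continuous_b hc.abs_b_le _ _
  have hbarrier : 3 * w ^ 2 * (σ * (f t x - primitive b (v t x) - q t x)) ≤ 0 :=
    mul_nonpos_of_nonneg_of_nonpos (by positivity) (hU.le t ht x hx)
  have hsquare : 3 * L ^ 2 / (4 * c) * w ^ 3 - (3 * w ^ 2 * (L * |y|) - 3 * w * (c * y ^ 2)) =
      3 * w * c * (|y| - L * w / (2 * c)) ^ 2 := by
    rw [← sq_abs y]
    field_simp
    ring
  have : 0 ≤ 3 * w * c * (|y| - L * w / (2 * c)) ^ 2 := by positivity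
  linarith

lemma intervalIntegrable_dissipation_integrand (hU : IsBarrier a b σ l r U v q f)
    (hc : Elliptic a b c C L) (h : IntegratedSolution a b P) (t : ℝ) :
    IntervalIntegrable (fun x => 6 * excess σ P U t x * (cdfOf (P t) x - v t x) *
        (1 / 2 * primitive a (cdfOf (P t) x)) +
      σ * (3 * excess σ P U t x ^ 2) * (primitive b (cdfOf (P t) x) + q t x)) volume l r := by
  have hA := continuous_primitive hc.continuous_a
  have he := hU.continuous_excess h t
  have hFA := intervalIntegrable_comp_cdfOf (ν := P t) (continuous_id.mul hA) l r
  have hvA := (intervalIntegrable_comp_cdfOf (ν := P t) hA l r).continuousOn_mul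
    (hU.continuous_space.uncurry_left t).continuousOn
  have hB := intervalIntegrable_comp_cdfOf (ν := P t) (continuous_primitive hc.continuous_b) l r
  have hq := (hU.continuous_time.uncurry_left t).intervalIntegrable (μ := volume) l r
  refine (((hFA.sub hvA).continuousOn_mul (he.const_mul 3).continuousOn).add
    ((hB.add hq).continuousOn_mul (((he.pow 2).const_mul 3).const_mul σ).continuousOn)).congr
    fun x _ => ?_
  simp only [Pi.mul_apply, Pi.pow_apply, id]
  ring

lemma neg_dissipation_le (hU : IsBarrier a b σ l r U v q f) (hc : Elliptic a b c C L)
    (h : IntegratedSolution a b P) (hlr : l ≤ r) {t : ℝ} (ht : 0 ≤ t)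
    (hl : excess σ P U t l = 0) (hr : excess σ P U t r = 0) :
    -∫ x in l..r, (6 * excess σ P U t x * (cdfOf (P t) x - v t x) *
          (1 / 2 * primitive a (cdfOf (P t) x)) +
        σ * (3 * excess σ P U t x ^ 2) * (primitive b (cdfOf (P t) x) + q t x)) ≤
      3 * L ^ 2 / (4 * c) * ∫ x in l..r, excess σ P U t x ^ 3 := by
  have hAv : Continuous fun x => 1 / 2 * primitive a (v t x) :=
    ((continuous_primitive hc.continuous_a).comp (hU.continuous_space.uncurry_left t)).const_mul _
  have hw : Continuous fun x => σ * (3 * excess σ P U t x ^ 2) :=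
    (((hU.continuous_excess h t).pow 2).const_mul 3).const_mul σ
  have hwf : IntervalIntegrable (fun x => σ * (3 * excess σ P U t x ^ 2) * f t x) volume l r :=
    (hw.mul (hU.continuous_diffusion t)).intervalIntegrable l r
  have hwAv := (hU.intervalIntegrable_weight_deriv h t).mul_continuousOn hAv.continuousOn
  have hdiss := hU.intervalIntegrable_dissipation_integrand hc h t
  have hibp := hU.integral_weight_mul_deriv h hl hr hAv
    (fun x => (hU.hasDerivAt_diffusion t x).hasDerivWithinAt)
    ((hU.continuous_diffusion t).intervalIntegrable l r)
  rw [eq_neg_iff_add_eq_zero, ← intervalIntegral.integral_add hwf hwAv] at hibp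
  rw [← zero_sub, ← hibp, ← intervalIntegral.integral_sub (hwf.add hwAv) hdiss,
    ← intervalIntegral.integral_const_mul]
  exact intervalIntegral.integral_mono_on hlr ((hwf.add hwAv).sub hdiss)
    ((hU.intervalIntegrable_excess_pow h t).const_mul _)
    fun x hx => hU.neg_dissipation_integrand_le hc ht hx

lemma continuousOn_integral_excess (hU : IsBarrier a b σ l r U v q f) (hc : Elliptic a b c C L)
    (h : IntegratedSolution a b P) (T : ℝ) :
    ContinuousOn (fun t => ∫ x in l..r, excess σ P U t x ^ 3) (Icc 0 T) := by
  have hcont : Continuous fun p : ℝ × ℝ => excess σ P U (max p.1 0) p.2 ^ 3 :=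
    ((hU.continuousOn_excess hc h).comp_continuous (f := fun p : ℝ × ℝ => (max p.1 0, p.2))
      (by fun_prop)
      fun p => ⟨le_max_right p.1 0, mem_univ p.2⟩).pow 3
  refine (intervalIntegral.continuous_parametric_intervalIntegral_of_continuous'
    (μ := volume) (f := fun t x => excess σ P U (max t 0) x ^ 3) hcont l r).continuousOn.congr
    fun t ht => ?_
  simp only [max_eq_left ht.1]

theorem comparison (hU : IsBarrier a b σ l r U v q f) (hc : Elliptic a b c C L)
    (h : IntegratedSolution a b P) (hlr : l < r) {T : ℝ}
    (hl : ∀ t ∈ Icc 0 T, σ * (integratedCdf (P t) l - U t l) ≤ 0)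
    (hr : ∀ t ∈ Icc 0 T, σ * (integratedCdf (P t) r - U t r) ≤ 0)
    (h₀ : ∀ x ∈ Icc l r, σ * (integratedCdf (P 0) x - U 0 x) ≤ 0) :
    ∀ t ∈ Icc 0 T, ∀ x ∈ Icc l r, σ * (integratedCdf (P t) x - U t x) ≤ 0 := by
  simp only [← excess_eq_zero_iff] at hl hr h₀ ⊢
  intro t ht
  set K := 3 * L ^ 2 / (4 * c)
  have hslope : ∀ s ∈ Ico 0 T, ∀ m, K * (∫ x in l..r, excess σ P U s x ^ 3) < m →
      ∃ᶠ z in 𝓝[>] s, (z - s)⁻¹ * ((∫ x in l..r, excess σ P U z x ^ 3) -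
        ∫ x in l..r, excess σ P U s x ^ 3) < m := by
    intro s hs m hm
    have hlim := (hU.tendsto_dissipation hc h hlr.le hs.1).neg.eventually_lt_const
      ((hU.neg_dissipation_le hc h hlr.le hs.1 (hl s (Ico_subset_Icc_self hs))
        (hr s (Ico_subset_Icc_self hs))).trans_lt hm)
    refine Eventually.frequently ?_
    filter_upwards [hlim, Ioo_mem_nhdsGT hs.2] with z hz hsz
    have hzT : z ∈ Icc 0 T := ⟨hs.1.trans hsz.1.le, hsz.2.le⟩
    rw [← mul_neg] at hz
    exact (mul_le_mul_of_nonneg_left (hU.integral_excess_sub_le hc h hlr.le hs.1 hsz.1.le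
      (hl z hzT) (hr z hzT)) (inv_nonneg.2 (sub_nonneg.2 hsz.1.le))).trans_lt hz
  have hinit : ∫ x in l..r, excess σ P U 0 x ^ 3 ≤ 0 := by
    rw [intervalIntegral.integral_congr (g := fun _ => 0)]
    · simp
    · intro x hx
      rw [uIcc_of_le hlr.le] at hx
      simp [h₀ x hx]
  have hgronwall := le_gronwallBound_of_liminf_deriv_right_le (δ := 0) (K := K) (ε := 0)
    (hU.continuousOn_integral_excess hc h T) hslope hinit (fun s _ => (add_zero _).ge) t ht
  rw [gronwallBound_ε0_δ0] at hgronwall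
  by_contra! hpos
  obtain ⟨x, hx, hpos⟩ := hpos
  refine hgronwall.not_gt (intervalIntegral.integral_pos hlr
    ((hU.continuous_excess h t).pow 3).continuousOn
    (fun z _ => pow_nonneg (excess_nonneg σ P U t z) 3) ⟨x, hx, ?_⟩)
  exact pow_pos ((excess_nonneg σ P U t x).lt_of_ne' hpos) 3

end IsBarrier

/-! ### From the weak to the integrated equation -/

lemma tendsto_integral_add_one {g : ℝ → ℝ} {l : Filter ℝ} [l.TendstoIxxClass Icc l] {k : ℝ}
    (hl : Tendsto (· + 1) l l) (hg : Tendsto g l (𝓝 k))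
    (hi : ∀ x, IntervalIntegrable g volume x (x + 1)) :
    Tendsto (fun x => ∫ z in x..x + 1, g z) l (𝓝 k) := by
  rw [Metric.tendsto_nhds]
  intro ε hε
  have hclose : {z | dist (g z) k < ε / 2} ∈ l := Metric.tendsto_nhds.1 hg _ (half_pos hε)
  have hsub := tendsto_smallSets_iff.1 (tendsto_id.Icc hl) _ hclose
  filter_upwards [hsub] with x hx
  have hle := intervalIntegral.norm_integral_le_of_norm_le_const (a := x) (b := x + 1)
    (f := fun z => g z - k) (C := ε / 2) fun z hz => by
      rw [uIoc_of_le (by linarith)] at hz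
      exact (hx (Ioc_subset_Icc_self hz)).le
  rw [intervalIntegral.integral_sub (hi x) intervalIntegrable_const] at hle
  simp only [intervalIntegral.integral_const, add_sub_cancel_left, one_smul, abs_one,
    mul_one, Real.norm_eq_abs] at hle
  rw [Real.dist_eq]
  linarith

/- Both sides of the weak identity are second derivatives of the functions compared in the
conclusion. -/
lemma exists_integral_sub_eq_mul {D E p q : ℝ → ℝ}
    (hE : ∀ x, HasDerivWithinAt E (D x) (Ioi x) x) (hEc : Continuous E)
    (hD : LocallyIntegrable D)
    (hp : LocallyIntegrable p) (hprc : ∀ x, ContinuousWithinAt p (Ici x) x)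
    (hq : LocallyIntegrable q) (hqm : Measurable q)
    (hqrc : ∀ x, ContinuousWithinAt q (Ici x) x)
    (h : ∀ φ, IsTestFunction φ → ∫ x, D x * φ x =
      1 / 2 * (∫ x, p x * deriv (deriv φ) x) + ∫ x, q x * deriv φ x) :
    ∃ l : ℝ, ∀ x y, (∫ z in x..y, (E z + q z)) - 1 / 2 * (p y - p x) = l * (y - x) := by
  have hEq : LocallyIntegrable fun z => E z + q z := hEc.locallyIntegrable.add hq
  have hEqi : ∀ x y, IntervalIntegrable (fun z => E z + q z) volume x y := fun x y =>
    (hEq.integrableOn_isCompact isCompact_uIcc).intervalIntegrable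
  set S : ℝ → ℝ := fun x => ∫ z in (0 : ℝ)..x, (E z + q z)
  have hS : Continuous S := intervalIntegral.continuous_primitive hEqi 0
  have hSd : ∀ x, HasDerivWithinAt S (E x + q x) (Ioi x) x := fun x =>
    hasDerivWithinAt_Ioi_integral (hEc.measurable.add hqm)
      (hEc.continuousWithinAt.add (hqrc x)) (hEqi 0 x)
  have hQ : LocallyIntegrable fun x => S x - 1 / 2 * p x :=
    hS.locallyIntegrable.sub (hp.smul (1 / 2 : ℝ))
  obtain ⟨k, l, hkl⟩ := ae_eq_affine_of_integral_mul_deriv_deriv_eq_zero hQ fun φ hφ => by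
    calc ∫ x, (S x - 1 / 2 * p x) * deriv (deriv φ) x
        = ∫ x, (S x * deriv (deriv φ) x - 1 / 2 * (p x * deriv (deriv φ) x)) := by
          congr with x; ring
      _ = -(∫ x, (E x * deriv φ x + q x * deriv φ x)) -
            1 / 2 * ∫ x, p x * deriv (deriv φ) x := by
          rw [integral_sub (hφ.deriv.deriv.integrable_mul hS.locallyIntegrable)
            ((hφ.deriv.deriv.integrable_mul hp).const_mul _), integral_const_mul,
            hφ.deriv.integral_mul_deriv hEq hS hSd]
          simp only [add_mul]
      _ = 0 := by
          rw [integral_add (hφ.deriv.integrable_mul hEc.locallyIntegrable)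
            (hφ.deriv.integrable_mul hq), hφ.integral_mul_deriv hD hEc hE, h φ hφ]
          ring
  have heq : ∀ x, S x - 1 / 2 * p x = k + l * x := fun x =>
    eq_of_ae_eq_of_continuousWithinAt_Ici (f := fun x => S x - 1 / 2 * p x)
      (hS.continuousWithinAt.sub (continuousWithinAt_const.mul (hprc x))) (by fun_prop) hkl
  refine ⟨l, fun x y => ?_⟩
  rw [← intervalIntegral.integral_interval_sub_left (hEqi 0 y) (hEqi 0 x)]
  linarith [heq x, heq y]

lemma integral_integral_comp_cdfOf_mul_sub {P : ℝ → ProbabilityMeasure ℝ} (hP : Continuous P)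
    {f φ : ℝ → ℝ} (hf : Continuous f) (hφ : IsTestFunction φ) (s t : ℝ) :
    (∫ x, (∫ r in (0 : ℝ)..t, f (cdfOf (P r) x)) * φ x) -
        ∫ x, (∫ r in (0 : ℝ)..s, f (cdfOf (P r) x)) * φ x =
      ∫ x, (∫ r in s..t, f (cdfOf (P r) x)) * φ x := by
  have hloc := locallyIntegrable_integral_comp_cdfOf hP hf 0
  rw [← integral_sub (hφ.integrable_mul (hloc t)) (hφ.integrable_mul (hloc s))]
  congr with x
  rw [← sub_mul, intervalIntegral.integral_interval_sub_left
    (intervalIntegrable_comp_cdfOf_time hP hf 0 t x)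
    (intervalIntegrable_comp_cdfOf_time hP hf 0 s x)]

lemma tendsto_integral_flux_sub {P : ℝ → ProbabilityMeasure ℝ} (hP : Continuous P)
    (hint : ∀ t, Integrable (fun z => z) (P t : Measure ℝ)) {A B : ℝ → ℝ} (hA : Continuous A)
    (hB : Continuous B) (s t : ℝ) {l : Filter ℝ} [l.TendstoIxxClass Icc l]
    [l.IsCountablyGenerated] (hl : Tendsto (· + 1) l l) {u : ℝ}
    (hu : ∀ r, Tendsto (cdfOf (P r)) l (𝓝 u)) (hBu : B u = 0) {k : ℝ}
    (hk : Tendsto (fun z => integratedCdf (P t) z - integratedCdf (P s) z) l (𝓝 k)) :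
    Tendsto (fun x => (∫ z in x..x + 1, (integratedCdf (P t) z - integratedCdf (P s) z +
        ∫ r in s..t, B (cdfOf (P r) z))) - 1 / 2 * ((∫ r in s..t, A (cdfOf (P r) (x + 1))) -
          ∫ r in s..t, A (cdfOf (P r) x))) l (𝓝 k) := by
  have hBlim : Tendsto (fun x => ∫ r in s..t, B (cdfOf (P r) x)) l (𝓝 0) := by
    simpa [hBu] using tendsto_integral_comp_cdfOf hP hB s t hu
  have hAlim := tendsto_integral_comp_cdfOf hP hA s t hu
  have hflux := tendsto_integral_add_one hl (hk.add hBlim) fun x =>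
    (((continuous_integratedCdf (hint t)).sub
      (continuous_integratedCdf (hint s))).intervalIntegrable _ _).add
      (intervalIntegrable_integral_comp_cdfOf hP hB s t _ _)
  simpa only [comp_def, sub_self, mul_zero, sub_zero, add_zero] using
    hflux.sub (((hAlim.comp hl).sub hAlim).const_mul (1 / 2))

/-- The weak formulation in `x` only, integrated over time intervals: the form of the equation
obtained from test functions in separated variables, which also makes sense for a curve `P`
without reference to an initial condition. -/
def IsDistributionalSolution (A B : ℝ → ℝ) (P : ℝ → ProbabilityMeasure ℝ) : Prop :=
  ∀ s t, 0 ≤ s → s ≤ t → ∀ φ, IsTestFunction φ →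
    ∫ x, (cdfOf (P t) x - cdfOf (P s) x) * φ x =
      1 / 2 * (∫ x, (∫ r in s..t, A (cdfOf (P r) x)) * deriv (deriv φ) x) +
        ∫ x, (∫ r in s..t, B (cdfOf (P r) x)) * deriv φ x

namespace IsWeakSolution

variable {A B F₀ φ : ℝ → ℝ} {F : ℝ → ℝ → ℝ}

lemma congr (h : IsWeakSolution A B F₀ F) {A' B' : ℝ → ℝ} {G : ℝ → ℝ → ℝ}
    (hFG : ∀ t, 0 ≤ t → F t = G t) (hG : ∀ t x, G t x ∈ Icc (0 : ℝ) 1)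
    (hA : EqOn A A' (Icc 0 1)) (hB : EqOn B B' (Icc 0 1)) : IsWeakSolution A' B' F₀ G :=
  fun g hg hgs t ht => by
    rw [← hFG t ht, h g hg hgs t ht]
    refine integral_congr_ae (Eventually.of_forall fun x =>
      intervalIntegral.integral_congr fun s hs => ?_)
    rw [uIcc_of_le ht] at hs
    simp only [hFG s hs.1, hA (hG s x), hB (hG s x)]

/- The weak formulation tested with `θ(s) φ(x)`, where `θ = 1` near `[0, t]`. -/
lemma integral_mul_sub (h : IsWeakSolution A B F₀ F) (hφ : IsTestFunction φ) {t : ℝ}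
    (ht : 0 ≤ t) :
    (∫ x, F t x * φ x) - ∫ x, F₀ x * φ x =
      ∫ x, ∫ s in (0 : ℝ)..t,
        (1 / 2 * A (F s x) * deriv (deriv φ) x + B (F s x) * deriv φ x) := by
  let θ : ContDiffBump (0 : ℝ) := ⟨t + 1, t + 2, by positivity, by linarith⟩
  have hθ : ∀ r ∈ Ioo (-(t + 1)) (t + 1), θ r = 1 := fun r hr =>
    θ.one_of_mem_closedBall (by
      rw [Real.closedBall_eq_Icc, zero_sub, zero_add]
      exact Ioo_subset_Icc_self hr)
  have hsmooth : ContDiff ℝ (⊤ : ℕ∞) (uncurry fun r x => θ r * φ x) :=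
    (θ.contDiff.comp contDiff_fst).mul (hφ.contDiff.comp contDiff_snd)
  have hsupp : HasCompactSupport (uncurry fun r x => θ r * φ x) :=
    HasCompactSupport.of_support_subset_isCompact
      (θ.hasCompactSupport.isCompact.prod hφ.hasCompactSupport.isCompact) fun p hp =>
        ⟨subset_tsupport _ (left_ne_zero_of_mul hp), subset_tsupport _ (right_ne_zero_of_mul hp)⟩
  have hweak := h _ hsmooth hsupp t ht
  simp only [hθ t ⟨by linarith, by linarith⟩, hθ 0 ⟨by linarith, by linarith⟩, one_mul] at hweak
  simp_rw [mul_comm (F t _), mul_comm (F₀ _)]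
  rw [hweak]
  refine integral_congr_ae (Eventually.of_forall fun x =>
    intervalIntegral.integral_congr fun s hs => ?_)
  rw [uIcc_of_le ht] at hs
  have hsI : s ∈ Ioo (-(t + 1)) (t + 1) := ⟨by linarith [hs.1], by linarith [hs.2]⟩
  have htime : deriv (fun r => θ r * φ x) s = 0 := by
    have hconst : (fun r => θ r * φ x) =ᶠ[𝓝 s] fun _ => φ x := by
      filter_upwards [Ioo_mem_nhds hsI.1 hsI.2] with r hr
      rw [hθ r hr, one_mul]
    rw [hconst.deriv_eq, deriv_const]
  simp only [hθ s hsI, one_mul, htime, mul_zero, add_zero]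

variable {m : Measure ℝ} [IsProbabilityMeasure m] {P : ℝ → ProbabilityMeasure ℝ}

lemma measure_zero_eq (h : IsWeakSolution A B (cdfOf m) fun t => cdfOf (P t)) :
    (P 0 : Measure ℝ) = m := by
  have hloc : ∀ ν : Measure ℝ, [IsProbabilityMeasure ν] → LocallyIntegrable (cdfOf ν) :=
    fun ν _ => monotone_cdfOf.locallyIntegrable
  have hae : ∀ᵐ x, cdfOf (P 0) x - cdfOf m x = 0 :=
    ae_eq_zero_of_integral_contDiff_smul_eq_zero ((hloc (P 0)).sub (hloc m)) fun φ hφ hs => by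
      have hφ : IsTestFunction φ := ⟨hφ, hs⟩
      have hzero := h.integral_mul_sub hφ le_rfl
      simp only [intervalIntegral.integral_same, integral_zero] at hzero
      rw [← integral_sub (hφ.integrable_mul (hloc (P 0))) (hφ.integrable_mul (hloc m))] at hzero
      simpa only [smul_eq_mul, mul_comm, mul_sub] using hzero
  refine Measure.eq_of_cdf _ _ (StieltjesFunction.ext fun x => ?_)
  rw [← cdfOf_eq_cdf, ← cdfOf_eq_cdf]
  exact eq_of_ae_eq_of_continuousWithinAt_Ici (continuousWithinAt_cdfOf x)
    (continuousWithinAt_cdfOf x) (hae.mono fun x hx => sub_eq_zero.1 hx)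

lemma isDistributionalSolution (h : IsWeakSolution A B F₀ fun t => cdfOf (P t))
    (hP : Continuous P) (hA : Continuous A) (hB : Continuous B) :
    IsDistributionalSolution A B P := fun s t hs hst φ hφ => by
  have hloc : ∀ r, LocallyIntegrable (cdfOf (P r)) := fun r => monotone_cdfOf.locallyIntegrable
  have htime : ∀ f : ℝ → ℝ, Continuous f → ∀ ψ, IsTestFunction ψ → ∀ s t,
      Integrable fun x => (∫ r in s..t, f (cdfOf (P r) x)) * ψ x := fun f hf ψ hψ s t =>
    hψ.integrable_mul (locallyIntegrable_integral_comp_cdfOf hP hf s t)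
  have hint := fun f hf x => intervalIntegrable_comp_cdfOf_time (f := f) hP hf (x := x)
  have hsplit : ∀ t, ∀ x, (∫ r in (0 : ℝ)..t, (1 / 2 * A (cdfOf (P r) x) * deriv (deriv φ) x +
      B (cdfOf (P r) x) * deriv φ x)) =
        1 / 2 * ((∫ r in (0 : ℝ)..t, A (cdfOf (P r) x)) * deriv (deriv φ) x) +
          (∫ r in (0 : ℝ)..t, B (cdfOf (P r) x)) * deriv φ x := fun t x => by
    rw [intervalIntegral.integral_add (((hint A hA x 0 t).const_mul _).mul_const _)
      ((hint B hB x 0 t).mul_const _), intervalIntegral.integral_mul_const,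
      intervalIntegral.integral_const_mul, intervalIntegral.integral_mul_const]
    ring
  have hw : ∀ t, 0 ≤ t → (∫ x, cdfOf (P t) x * φ x) - ∫ x, F₀ x * φ x =
      1 / 2 * (∫ x, (∫ r in (0 : ℝ)..t, A (cdfOf (P r) x)) * deriv (deriv φ) x) +
        ∫ x, (∫ r in (0 : ℝ)..t, B (cdfOf (P r) x)) * deriv φ x := fun t ht => by
    rw [h.integral_mul_sub hφ ht, ← integral_const_mul,
      ← integral_add ((htime A hA _ hφ.deriv.deriv 0 t).const_mul _)
        (htime B hB _ hφ.deriv 0 t)]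
    simp only [hsplit]
  simp only [sub_mul]
  rw [integral_sub (hφ.integrable_mul (hloc t)) (hφ.integrable_mul (hloc s)),
    ← integral_integral_comp_cdfOf_mul_sub hP hA hφ.deriv.deriv,
    ← integral_integral_comp_cdfOf_mul_sub hP hB hφ.deriv]
  linarith [hw t (hs.trans hst), hw s hs]

end IsWeakSolution

namespace IsStationarySolution

lemma congr {A B A' B' G : ℝ → ℝ} (h : IsStationarySolution A B G)
    (hG : ∀ x, G x ∈ Icc (0 : ℝ) 1) (hA : EqOn A A' (Icc 0 1)) (hB : EqOn B B' (Icc 0 1)) :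
    IsStationarySolution A' B' G := fun φ hφ hs => by
  simpa only [hA (hG _), hB (hG _)] using h φ hφ hs

lemma isDistributionalSolution {A B : ℝ → ℝ} {ν : ProbabilityMeasure ℝ}
    (h : IsStationarySolution A B (cdfOf ν)) :
    IsDistributionalSolution A B fun _ => ν := fun s t _ _ φ hφ => by
  simp only [sub_self, zero_mul, integral_zero, intervalIntegral.integral_const, smul_eq_mul,
    mul_assoc, integral_const_mul]
  linear_combination -(t - s) * h φ hφ.contDiff hφ.hasCompactSupport

end IsStationarySolution

namespace IsDistributionalSolution

variable {A B : ℝ → ℝ} {P : ℝ → ProbabilityMeasure ℝ}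

lemma exists_integral_flux_sub_eq_mul (h : IsDistributionalSolution A B P)
    (hP : Continuous P) (hint : ∀ t, Integrable (fun z => z) (P t : Measure ℝ))
    (hA : Continuous A) (hB : Continuous B) {s t : ℝ} (hs : 0 ≤ s) (hst : s ≤ t) :
    ∃ l : ℝ, ∀ x y, (∫ z in x..y, (integratedCdf (P t) z - integratedCdf (P s) z +
        ∫ r in s..t, B (cdfOf (P r) z))) - 1 / 2 * ((∫ r in s..t, A (cdfOf (P r) y)) -
          ∫ r in s..t, A (cdfOf (P r) x)) = l * (y - x) := by
  have hrc : ∀ f : ℝ → ℝ, Continuous f → ∀ x,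
      ContinuousWithinAt (fun x => ∫ r in s..t, f (cdfOf (P r) x)) (Ici x) x := fun f hf x =>
    tendsto_integral_comp_cdfOf hP hf s t fun r => continuousWithinAt_cdfOf x
  exact exists_integral_sub_eq_mul
    (fun x => (hasDerivWithinAt_integratedCdf (hint t) x).sub
      (hasDerivWithinAt_integratedCdf (hint s) x))
    ((continuous_integratedCdf (hint t)).sub (continuous_integratedCdf (hint s)))
    (monotone_cdfOf.locallyIntegrable.sub monotone_cdfOf.locallyIntegrable)
    (locallyIntegrable_integral_comp_cdfOf hP hA s t) (hrc A hA)
    (locallyIntegrable_integral_comp_cdfOf hP hB s t)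
    (measurable_integral_comp_cdfOf hP hB s t) (hrc B hB)
    (h s t hs hst)

/- The affine defect has slope zero because the flux vanishes at `-∞`. -/
lemma integral_flux_sub_eq_zero (h : IsDistributionalSolution A B P)
    (hP : Continuous P) (hint : ∀ t, Integrable (fun z => z) (P t : Measure ℝ))
    (hA : Continuous A) (hB : Continuous B) (hB0 : B 0 = 0) {s t : ℝ} (hs : 0 ≤ s)
    (hst : s ≤ t) (x y : ℝ) :
    (∫ z in x..y, (integratedCdf (P t) z - integratedCdf (P s) z +
        ∫ r in s..t, B (cdfOf (P r) z))) - 1 / 2 * ((∫ r in s..t, A (cdfOf (P r) y)) -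
          ∫ r in s..t, A (cdfOf (P r) x)) = 0 := by
  obtain ⟨l, hl⟩ := h.exists_integral_flux_sub_eq_mul hP hint hA hB hs hst
  have hlim := tendsto_integral_flux_sub hP hint hA hB s t (l := atBot)
    (tendsto_atBot_add_const_right _ _ tendsto_id) (fun r => isCDF_cdfOf.2.2.1) hB0
    (k := 0)
    (by simpa using
      (tendsto_integratedCdf_atBot (hint t)).sub (tendsto_integratedCdf_atBot (hint s)))
  simp only [hl, add_sub_cancel_left, mul_one] at hlim
  rw [hl, tendsto_nhds_unique tendsto_const_nhds hlim, zero_mul]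

lemma mean_eq (h : IsDistributionalSolution A B P)
    (hP : Continuous P) (hint : ∀ t, Integrable (fun z => z) (P t : Measure ℝ))
    (hA : Continuous A) (hB : Continuous B) (hB0 : B 0 = 0) (hB1 : B 1 = 0) {s t : ℝ}
    (hs : 0 ≤ s) (hst : s ≤ t) : ∫ z, z ∂(P s : Measure ℝ) = ∫ z, z ∂(P t : Measure ℝ) := by
  have hk : Tendsto (fun z => integratedCdf (P t) z - integratedCdf (P s) z) atTop
      (𝓝 ((∫ z, z ∂(P s : Measure ℝ)) - ∫ z, z ∂(P t : Measure ℝ))) := by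
    have hdiff := ((tendsto_integratedCdf_sub_atTop (hint t)).sub
      (tendsto_integratedCdf_sub_atTop (hint s))).add_const
        ((∫ z, z ∂(P s : Measure ℝ)) - ∫ z, z ∂(P t : Measure ℝ))
    rw [sub_zero, zero_add] at hdiff
    exact hdiff.congr fun x => by ring
  have hlim := tendsto_integral_flux_sub hP hint hA hB s t (l := atTop)
    (tendsto_atTop_add_const_right _ _ tendsto_id) (fun r => isCDF_cdfOf.2.2.2) hB1 hk
  simp only [h.integral_flux_sub_eq_zero hP hint hA hB hB0 hs hst] at hlim
  linarith [tendsto_nhds_unique tendsto_const_nhds hlim]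

theorem integratedSolution {a b : ℝ → ℝ} (ha : Continuous a) (hb : Continuous b)
    (hb1 : primitive b 1 = 0)
    (h : IsDistributionalSolution (primitive a) (primitive b) P)
    (hP : Continuous P) (hint : ∀ t, Integrable (fun z => z) (P t : Measure ℝ)) :
    IntegratedSolution a b P where
  continuous := hP
  integrable := hint
  mean_eq _ ht := (h.mean_eq hP hint (continuous_primitive ha) (continuous_primitive hb)
    (primitive_zero b) hb1 le_rfl ht).symm
  eq := fun _ _ hs hst x y => (sub_eq_zero.1 (h.integral_flux_sub_eq_zero hP hint
    (continuous_primitive ha) (continuous_primitive hb) (primitive_zero b) hs hst x y)).symm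

end IsDistributionalSolution

/-! ### The softplus barrier -/

/-- The smooth approximation `log (1 + exp (k y)) / k` of the positive part of `y`, at scale
`1 / k`. -/
def softplus (k y : ℝ) : ℝ := 1 / k * Real.log (1 + Real.exp (k * y))

section Softplus

variable {k : ℝ}

lemma hasDerivAt_softplus (hk : k ≠ 0) (y : ℝ) :
    HasDerivAt (softplus k) (Real.sigmoid (k * y)) y := by
  have hpos : 0 < 1 + Real.exp (k * y) := by positivity
  have hexp : HasDerivAt (fun y => 1 + Real.exp (k * y)) (Real.exp (k * y) * (k * 1)) y :=
    (((hasDerivAt_id y).const_mul k).exp).const_add 1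
  refine ((hexp.log hpos.ne').const_mul (1 / k)).congr_deriv ?_
  rw [Real.sigmoid_def, Real.exp_neg]
  field_simp
  ring

lemma continuous_softplus : Continuous (softplus k) :=
  continuous_const.mul (Continuous.log (by fun_prop) fun y => by positivity)

lemma softplus_sub_self (hk : k ≠ 0) (y : ℝ) : softplus k y - y = softplus k (-y) := by
  have hsplit : 1 + Real.exp (k * y) = Real.exp (k * y) * (1 + Real.exp (k * -y)) := by
    rw [mul_add, ← Real.exp_add, mul_neg, add_neg_cancel, Real.exp_zero]
    ring
  have hpos : 0 < 1 + Real.exp (k * -y) := by positivity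
  unfold softplus
  rw [hsplit, Real.log_mul (Real.exp_pos _).ne' hpos.ne', Real.log_exp]
  field_simp
  ring

variable (hk : 0 < k)
include hk

lemma monotone_softplus : Monotone (softplus k) :=
  monotone_of_deriv_nonneg (fun y => (hasDerivAt_softplus hk.ne' y).differentiableAt) fun y => by
    rw [(hasDerivAt_softplus hk.ne' y).deriv]
    exact Real.sigmoid_nonneg _

lemma softplus_nonneg (y : ℝ) : 0 ≤ softplus k y :=
  mul_nonneg (by positivity) (Real.log_nonneg (by linarith [Real.exp_pos (k * y)]))

lemma max_zero_le_softplus (y : ℝ) : max y 0 ≤ softplus k y :=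
  max_le (by linarith [softplus_sub_self hk.ne' y, softplus_nonneg hk (-y)]) (softplus_nonneg hk y)

lemma softplus_le_exp (y : ℝ) : softplus k y ≤ 1 / k * Real.exp (k * y) := by
  unfold softplus
  gcongr
  linarith [Real.log_le_sub_one_of_pos (show 0 < 1 + Real.exp (k * y) by positivity)]

lemma softplus_le_of_nonpos {y : ℝ} (hy : y ≤ 0) : softplus k y ≤ 1 / k :=
  (softplus_le_exp hk y).trans <| mul_le_of_le_one_right (by positivity) <|
    Real.exp_le_one_iff.2 (mul_nonpos_of_nonneg_of_nonpos hk.le hy)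

lemma softplus_le (y : ℝ) : softplus k y ≤ max y 0 + 1 / k := by
  rcases le_total y 0 with hy | hy
  · rw [max_eq_right hy, zero_add]
    exact softplus_le_of_nonpos hk hy
  · rw [max_eq_left hy]
    linarith [softplus_le_of_nonpos hk (neg_nonpos.2 hy), softplus_sub_self hk.ne' y]

lemma tendsto_softplus_atBot : Tendsto (softplus k) atBot (𝓝 0) := by
  refine squeeze_zero (softplus_nonneg hk) (softplus_le_exp hk) ?_
  rw [← mul_zero (1 / k)]
  exact (Real.tendsto_exp_atBot.comp (tendsto_id.const_mul_atBot hk)).const_mul _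

end Softplus

/-- The softplus smoothing, at scale `1 / k`, of `integratedCdf m`. -/
def smoothedIntegratedCdf (k : ℝ) (m : Measure ℝ) (x : ℝ) : ℝ := ∫ z, softplus k (x - z) ∂m

/-- The derivative of `smoothedIntegratedCdf k m`. -/
def smoothedCdf (k : ℝ) (m : Measure ℝ) (x : ℝ) : ℝ := ∫ z, Real.sigmoid (k * (x - z)) ∂m

/-- The derivative of `smoothedCdf k m`. -/
def smoothedDensity (k : ℝ) (m : Measure ℝ) (x : ℝ) : ℝ :=
  ∫ z, k * (Real.sigmoid (k * (x - z)) * (1 - Real.sigmoid (k * (x - z)))) ∂m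

section Smoothing

variable {k : ℝ} {m : Measure ℝ}

lemma abs_sigmoid_le_one (y : ℝ) : |Real.sigmoid y| ≤ 1 := by
  rw [abs_of_nonneg (Real.sigmoid_nonneg y)]
  exact Real.sigmoid_le_one y

lemma abs_mul_sigmoid_mul_one_sub_le (k y : ℝ) :
    |k * (Real.sigmoid y * (1 - Real.sigmoid y))| ≤ |k| := by
  have h₀ := Real.sigmoid_nonneg y
  have h₁ := Real.sigmoid_le_one y
  rw [abs_mul]
  refine mul_le_of_le_one_right (abs_nonneg k) (abs_le.2 ⟨?_, ?_⟩) <;> nlinarith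

lemma smoothedIntegratedCdf_nonneg (hk : 0 < k) (x : ℝ) : 0 ≤ smoothedIntegratedCdf k m x :=
  integral_nonneg fun _ => softplus_nonneg hk _

lemma smoothedCdf_nonneg (x : ℝ) : 0 ≤ smoothedCdf k m x :=
  integral_nonneg fun _ => Real.sigmoid_nonneg _

variable [IsProbabilityMeasure m]

lemma integrable_sigmoid (x : ℝ) : Integrable (fun z => Real.sigmoid (k * (x - z))) m :=
  (integrable_const (1 : ℝ)).mono' (by fun_prop)
    (Eventually.of_forall fun _ => abs_sigmoid_le_one _)

lemma integrable_sigmoid_mul_one_sub (k x : ℝ) : Integrable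
    (fun z => k * (Real.sigmoid (k * (x - z)) * (1 - Real.sigmoid (k * (x - z))))) m :=
  (integrable_const |k|).mono' (by fun_prop)
    (Eventually.of_forall fun _ => abs_mul_sigmoid_mul_one_sub_le k _)

lemma smoothedCdf_le_one (x : ℝ) : smoothedCdf k m x ≤ 1 := by
  have hle := integral_mono (μ := m) (integrable_sigmoid (k := k) x) (integrable_const (1 : ℝ))
    fun _ => Real.sigmoid_le_one _
  rwa [integral_const, probReal_univ, one_smul] at hle

lemma hasDerivAt_smoothedCdf (k x : ℝ) :
    HasDerivAt (smoothedCdf k m) (smoothedDensity k m x) x := by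
  have hsigmoid (z y : ℝ) : HasDerivAt (fun y => Real.sigmoid (k * (y - z)))
      (k * (Real.sigmoid (k * (y - z)) * (1 - Real.sigmoid (k * (y - z))))) y := by
    have hlin : HasDerivAt (fun y => k * (y - z)) (k * 1) y :=
      ((hasDerivAt_id y).sub_const z).const_mul k
    have hcomp := (Real.hasDerivAt_sigmoid (k * (y - z))).comp y hlin
    exact hcomp.congr_deriv (by ring)
  exact (hasDerivAt_integral_of_dominated_loc_of_deriv_le (s := univ) (bound := fun _ => |k|)
    (F := fun x z => Real.sigmoid (k * (x - z)))
    (F' := fun x z => k * (Real.sigmoid (k * (x - z)) * (1 - Real.sigmoid (k * (x - z)))))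
    univ_mem (Eventually.of_forall fun x => (integrable_sigmoid x).aestronglyMeasurable)
    (integrable_sigmoid x) (integrable_sigmoid_mul_one_sub k x).aestronglyMeasurable
    (Eventually.of_forall fun z y _ => abs_mul_sigmoid_mul_one_sub_le k _) (integrable_const _)
    (Eventually.of_forall fun z y _ => hsigmoid z y)).2

lemma continuous_smoothedCdf (k : ℝ) : Continuous (smoothedCdf k m) :=
  continuous_iff_continuousAt.2 fun x => (hasDerivAt_smoothedCdf k x).continuousAt

lemma continuous_smoothedDensity (k : ℝ) : Continuous (smoothedDensity k m) :=
  continuous_of_dominated (bound := fun _ => |k|)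
    (fun x => (integrable_sigmoid_mul_one_sub k x).aestronglyMeasurable)
    (fun _ => Eventually.of_forall fun _ => abs_mul_sigmoid_mul_one_sub_le k _)
    (integrable_const _) (Eventually.of_forall fun _ => by fun_prop)

lemma smoothedDensity_le (hk : 0 ≤ k) (x : ℝ) :
    smoothedDensity k m x ≤ k * (smoothedCdf k m x * (1 - smoothedCdf k m x)) := by
  have hconcave : ConcaveOn ℝ univ fun u : ℝ => u * (1 - u) :=
    ((concaveOn_id convex_univ).sub even_two.convexOn_pow).congr fun u _ => by
      simp only [id, Pi.sub_apply]
      ring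
  have hint : Integrable (fun z =>
      Real.sigmoid (k * (x - z)) * (1 - Real.sigmoid (k * (x - z)))) m :=
    (integrable_const |(1 : ℝ)|).mono' (by fun_prop) (Eventually.of_forall fun _ => by
      simpa only [one_mul, Real.norm_eq_abs] using abs_mul_sigmoid_mul_one_sub_le 1 _)
  have hjensen : ∫ z, Real.sigmoid (k * (x - z)) * (1 - Real.sigmoid (k * (x - z))) ∂m ≤
      smoothedCdf k m x * (1 - smoothedCdf k m x) :=
    hconcave.le_map_integral (by fun_prop) isClosed_univ (Eventually.of_forall fun _ => mem_univ _)
      (integrable_sigmoid x) hint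
  unfold smoothedDensity
  rw [integral_const_mul]
  exact mul_le_mul_of_nonneg_left hjensen hk

variable (hk : 0 < k) (hm : Integrable (fun z => z) m)
include hk hm

lemma integrable_softplus_sub (x : ℝ) : Integrable (fun z => softplus k (x - z)) m := by
  refine ((integrable_max_sub hm x).add (integrable_const (1 / k))).mono'
    (continuous_softplus.comp (by fun_prop)).aestronglyMeasurable (Eventually.of_forall fun z => ?_)
  rw [Real.norm_eq_abs, abs_of_nonneg (softplus_nonneg hk _)]
  exact softplus_le hk _

lemma integrable_softplus_sub_right (x : ℝ) : Integrable (fun z => softplus k (z - x)) m :=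
  ((integrable_softplus_sub hk hm x).sub ((integrable_const x).sub hm)).congr
    (Eventually.of_forall fun z => by
      simp only [Pi.sub_apply, softplus_sub_self hk.ne', neg_sub])

lemma hasDerivAt_smoothedIntegratedCdf (x : ℝ) :
    HasDerivAt (smoothedIntegratedCdf k m) (smoothedCdf k m x) x :=
  (hasDerivAt_integral_of_dominated_loc_of_deriv_le (s := univ) (bound := fun _ => 1)
    (F := fun x z => softplus k (x - z)) (F' := fun x z => Real.sigmoid (k * (x - z)))
    univ_mem (Eventually.of_forall fun x => (integrable_softplus_sub hk hm x).aestronglyMeasurable)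
    (integrable_softplus_sub hk hm x) (integrable_sigmoid x).aestronglyMeasurable
    (Eventually.of_forall fun _ _ _ => abs_sigmoid_le_one _) (integrable_const _)
    (Eventually.of_forall fun z y _ => (hasDerivAt_softplus hk.ne' (y - z)).comp_sub_const y z)).2

lemma smoothedIntegratedCdf_sub (x : ℝ) :
    smoothedIntegratedCdf k m x - (x - ∫ z, z ∂m) = ∫ z, softplus k (z - x) ∂m := by
  have hsub := integral_sub (integrable_softplus_sub hk hm x) ((integrable_const x).sub hm)
  simp only [Pi.sub_apply, softplus_sub_self hk.ne', neg_sub, integral_sub_eq_sub_mean hm] at hsub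
  exact hsub.symm

lemma integratedCdf_le_smoothedIntegratedCdf (x : ℝ) :
    integratedCdf m x ≤ smoothedIntegratedCdf k m x :=
  integral_mono (integrable_max_sub hm x) (integrable_softplus_sub hk hm x)
    fun _ => max_zero_le_softplus hk _

lemma tendsto_smoothedIntegratedCdf_atBot :
    Tendsto (smoothedIntegratedCdf k m) atBot (𝓝 0) := by
  rw [← integral_zero ℝ ℝ (μ := m)]
  refine tendsto_integral_filter_of_dominated_convergence (fun z => softplus k (0 - z))
    (Eventually.of_forall fun x => (integrable_softplus_sub hk hm x).aestronglyMeasurable) ?_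
    (integrable_softplus_sub hk hm 0) (Eventually.of_forall fun z =>
      (tendsto_softplus_atBot hk).comp (tendsto_atBot_add_const_right _ _ tendsto_id))
  filter_upwards [eventually_le_atBot 0] with x hx
  refine Eventually.of_forall fun z => ?_
  rw [Real.norm_eq_abs, abs_of_nonneg (softplus_nonneg hk _)]
  exact monotone_softplus hk (sub_le_sub_right hx z)

lemma tendsto_smoothedIntegratedCdf_sub_atTop :
    Tendsto (fun x => smoothedIntegratedCdf k m x - (x - ∫ z, z ∂m)) atTop (𝓝 0) := by
  simp only [smoothedIntegratedCdf_sub hk hm]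
  rw [← integral_zero ℝ ℝ (μ := m)]
  refine tendsto_integral_filter_of_dominated_convergence (fun z => softplus k (z - 0))
    (Eventually.of_forall fun x => (integrable_softplus_sub_right hk hm x).aestronglyMeasurable) ?_
    (integrable_softplus_sub_right hk hm 0) (Eventually.of_forall fun z =>
      (tendsto_softplus_atBot hk).comp
        (tendsto_atBot_add_const_left _ z tendsto_neg_atTop_atBot))
  filter_upwards [eventually_ge_atTop 0] with x hx
  refine Eventually.of_forall fun z => ?_
  rw [Real.norm_eq_abs, abs_of_nonneg (softplus_nonneg hk _)]
  exact monotone_softplus hk (sub_le_sub_left hx z)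

end Smoothing

section Bound

variable {a b : ℝ → ℝ} {c C L K γ : ℝ} {P : ℝ → ProbabilityMeasure ℝ}

lemma IntegratedSolution.continuousOn_integratedCdf_time (hc : Elliptic a b c C L)
    (h : IntegratedSolution a b P) (T x : ℝ) :
    ContinuousOn (fun t => integratedCdf (P t) x) (Icc 0 T) :=
  (h.continuousOn_integratedCdf hc).comp (f := fun t : ℝ => (t, x)) (by fun_prop)
    fun _ ht => ⟨ht.1, mem_univ _⟩

lemma IntegratedSolution.eventually_integratedCdf_neg_le (hc : Elliptic a b c C L)
    (h : IntegratedSolution a b P) {ε : ℝ} (hε : 0 < ε) (T : ℝ) :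
    ∀ᶠ R in atTop, ∀ t ∈ Icc 0 T, integratedCdf (P t) (-R) ≤ ε := by
  have hunif : TendstoUniformlyOn (fun R t => integratedCdf (P t) (-R)) 0 atTop (Icc 0 T) :=
    Antitone.tendstoUniformlyOn_of_forall_tendsto isCompact_Icc
      (fun R => h.continuousOn_integratedCdf_time hc T (-R))
      (fun t _ R S hRS => monotone_integratedCdf (h.integrable t) (neg_le_neg hRS))
      continuousOn_const
      (fun t _ => (tendsto_integratedCdf_atBot (h.integrable t)).comp tendsto_neg_atTop_atBot)
  filter_upwards [Metric.tendstoUniformlyOn_iff.1 hunif ε hε] with R hR t ht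
  have hlt := hR t ht
  rw [dist_comm, Real.dist_eq, Pi.zero_apply, sub_zero] at hlt
  exact le_of_abs_le hlt.le

lemma IntegratedSolution.eventually_integratedCdf_sub_le (hc : Elliptic a b c C L)
    (h : IntegratedSolution a b P) {ε : ℝ} (hε : 0 < ε) (T : ℝ) :
    ∀ᶠ R in atTop, ∀ t ∈ Icc 0 T, integratedCdf (P t) R - (R - ∫ z, z ∂(P 0 : Measure ℝ)) ≤ ε := by
  have hunif : TendstoUniformlyOn
      (fun R t => integratedCdf (P t) R - (R - ∫ z, z ∂(P 0 : Measure ℝ))) 0 atTop (Icc 0 T) :=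
    Antitone.tendstoUniformlyOn_of_forall_tendsto isCompact_Icc
      (fun R => (h.continuousOn_integratedCdf_time hc T R).sub continuousOn_const)
      (fun t _ => antitone_integratedCdf_sub (h.integrable t) _) continuousOn_const
      (fun t ht => by
        rw [← h.mean_eq t ht.1]
        exact tendsto_integratedCdf_sub_atTop (h.integrable t))
  filter_upwards [Metric.tendstoUniformlyOn_iff.1 hunif ε hε] with R hR t ht
  have hlt := hR t ht
  rw [dist_comm, Real.dist_eq, Pi.zero_apply, sub_zero] at hlt
  exact le_of_abs_le hlt.le

lemma Confining.isBarrier_smoothedIntegratedCdf (hc : Confining a b c C L K γ) {m : Measure ℝ}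
    [IsProbabilityMeasure m] (hm : Integrable (fun z => z) m) (l r ε : ℝ) :
    IsBarrier a b 1 l r (fun _ x => smoothedIntegratedCdf (2 * γ / C) m x + ε)
      (fun _ => smoothedCdf (2 * γ / C) m) (fun _ _ => 0)
      (fun _ x => 1 / 2 * (a (smoothedCdf (2 * γ / C) m x) * smoothedDensity (2 * γ / C) m x)) := by
  have hC := hc.C_pos
  have hγ := hc.γ_pos
  have hk : 0 < 2 * γ / C := by positivity
  have hU : Continuous (smoothedIntegratedCdf (2 * γ / C) m) := continuous_iff_continuousAt.2
    fun x => (hasDerivAt_smoothedIntegratedCdf hk hm x).continuousAt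
  have hv := continuous_smoothedCdf (m := m) (2 * γ / C)
  refine ⟨abs_one, (hU.comp continuous_snd).add continuous_const, hv.comp continuous_snd,
    continuous_const,
    fun _ => continuous_const.mul ((hc.continuous_a.comp hv).mul (continuous_smoothedDensity _)),
    fun _ x => (hasDerivAt_smoothedIntegratedCdf hk hm x).add_const ε,
    fun _ _ => hasDerivAt_const _ _,
    fun _ x => ((hasDerivAt_primitive hc.continuous_a _).comp x
      (hasDerivAt_smoothedCdf _ x)).const_mul _, fun _ _ x _ => ?_⟩
  have hv₀ := smoothedCdf_nonneg (k := 2 * γ / C) (m := m) x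
  have hv₁ := smoothedCdf_le_one (k := 2 * γ / C) (m := m) x
  have hdiffusion : a (smoothedCdf (2 * γ / C) m x) * smoothedDensity (2 * γ / C) m x ≤
      2 * γ * (smoothedCdf (2 * γ / C) m x * (1 - smoothedCdf (2 * γ / C) m x)) :=
    calc _ ≤ a (smoothedCdf (2 * γ / C) m x) * (2 * γ / C *
          (smoothedCdf (2 * γ / C) m x * (1 - smoothedCdf (2 * γ / C) m x))) :=
          mul_le_mul_of_nonneg_left (smoothedDensity_le hk.le x) (hc.a_pos _).le
      _ ≤ C * (2 * γ / C * (smoothedCdf (2 * γ / C) m x * (1 - smoothedCdf (2 * γ / C) m x))) :=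
          mul_le_mul_of_nonneg_right (hc.a_le _)
            (mul_nonneg hk.le (mul_nonneg hv₀ (sub_nonneg.2 hv₁)))
      _ = _ := by field_simp
  linarith [hc.le_primitive_b _ ⟨hv₀, hv₁⟩]

theorem IntegratedSolution.integratedCdf_le (hc : Confining a b c C L K γ)
    (h : IntegratedSolution a b P) {t : ℝ} (ht : 0 ≤ t) (x : ℝ) :
    integratedCdf (P t) x ≤ smoothedIntegratedCdf (2 * γ / C) (P 0) x := by
  have hk : 0 < 2 * γ / C := div_pos (mul_pos two_pos hc.γ_pos) hc.C_pos
  have hm := h.integrable 0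
  refine le_of_forall_pos_le_add fun ε hε => ?_
  obtain ⟨R, hleft, hright, hx⟩ := ((h.eventually_integratedCdf_neg_le hc.toElliptic hε t).and
    ((h.eventually_integratedCdf_sub_le hc.toElliptic hε t).and
      (eventually_gt_atTop |x|))).exists
  have hcmp := (hc.isBarrier_smoothedIntegratedCdf hm (-R) R ε).comparison hc.toElliptic h
    (by linarith [abs_nonneg x]) (T := t)
    (fun s hs => by linarith [hleft s hs, smoothedIntegratedCdf_nonneg (m := P 0) hk (-R)])
    (fun s hs => by linarith [hright s hs, sub_mean_le_integratedCdf hm R,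
      integratedCdf_le_smoothedIntegratedCdf hk hm R])
    (fun y _ => by linarith [integratedCdf_le_smoothedIntegratedCdf hk hm y])
    t ⟨ht, le_rfl⟩ x ⟨(abs_lt.1 hx).1.le, (abs_lt.1 hx).2.le⟩
  linarith

end Bound

/-! ### Quantile functions -/

namespace IsCDF

variable {F : ℝ → ℝ} {u x : ℝ}

lemma mem_Icc (h : IsCDF F) (x : ℝ) : F x ∈ Icc 0 1 :=
  ⟨h.1.le_of_tendsto h.2.2.1 x, h.1.ge_of_tendsto h.2.2.2 x⟩

lemma lt_of_apply_lt_apply (h : IsCDF F) {y : ℝ} (hxy : F x < F y) : x < y :=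
  lt_of_not_ge fun hyx => (h.1 hyx).not_gt hxy

lemma nonempty_setOf_lt (h : IsCDF F) (hu : u < 1) : {x | u < F x}.Nonempty :=
  (h.2.2.2.eventually_const_lt hu).exists

lemma bddBelow_setOf_lt (h : IsCDF F) (hu : 0 < u) : BddBelow {x | u < F x} :=
  let ⟨y, hy⟩ := (h.2.2.1.eventually_lt_const hu).exists
  ⟨y, fun _ hx => (h.lt_of_apply_lt_apply (hy.trans hx)).le⟩

lemma pinv_le (h : IsCDF F) (hu : 0 < u) (hx : u < F x) : pinv F u ≤ x :=
  csInf_le (h.bddBelow_setOf_lt hu) hx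

lemma le_pinv (h : IsCDF F) (hu : u < 1) (hx : F x ≤ u) : x ≤ pinv F u :=
  le_csInf (h.nonempty_setOf_lt hu) fun _ hz => (h.lt_of_apply_lt_apply (hx.trans_lt hz)).le

lemma lt_pinv (h : IsCDF F) (hu : u < 1) (hx : F x < u) : x < pinv F u := by
  have hright : ∀ᶠ y in 𝓝[>] x, F y < u :=
    ((h.2.1 x).mono Ioi_subset_Ici_self).eventually_lt_const hx
  obtain ⟨y, hy, hxy⟩ := (hright.and self_mem_nhdsWithin).exists
  exact lt_of_lt_of_le hxy (h.le_pinv hu hy.le)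

lemma monotoneOn_pinv (h : IsCDF F) : MonotoneOn (pinv F) (Ioo 0 1) := fun _ hu _ hv huv =>
  csInf_le_csInf (h.bddBelow_setOf_lt hu.1) (h.nonempty_setOf_lt hv.2) fun _ => huv.trans_lt

lemma aemeasurable_pinv (h : IsCDF F) : AEMeasurable (pinv F) (volume.restrict (Ioo 0 1)) :=
  aemeasurable_restrict_of_monotoneOn measurableSet_Ioo h.monotoneOn_pinv

end IsCDF

instance isProbabilityMeasure_restrict_Ioo :
    IsProbabilityMeasure (volume.restrict (Ioo (0 : ℝ) 1)) := ⟨by simp⟩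

/-- The distribution of the quantile function of `F` under the uniform law on `(0, 1)`, that is,
the probability measure with distribution function `F`. -/
def quantileLaw (F : ℝ → ℝ) : Measure ℝ := (volume.restrict (Ioo (0 : ℝ) 1)).map (pinv F)

namespace IsCDF

variable {F : ℝ → ℝ}

lemma isProbabilityMeasure_quantileLaw (h : IsCDF F) : IsProbabilityMeasure (quantileLaw F) :=
  Measure.isProbabilityMeasure_map h.aemeasurable_pinv

lemma cdfOf_quantileLaw (h : IsCDF F) : cdfOf (quantileLaw F) = F := by
  funext x
  have hpre : pinv F ⁻¹' Iic x =ᵐ[volume.restrict (Ioo (0 : ℝ) 1)] Iio (F x) := by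
    have hne : ∀ᵐ u ∂volume.restrict (Ioo (0 : ℝ) 1), u ≠ F x :=
      ae_restrict_of_ae (Measure.ae_ne volume (F x))
    filter_upwards [hne, ae_restrict_mem measurableSet_Ioo] with u hux hu
    refine propext ⟨fun hle => ?_, h.pinv_le hu.1⟩
    exact lt_of_not_ge fun hge => (h.lt_pinv hu.2 (hge.lt_of_ne hux.symm)).not_ge hle
  rw [cdfOf, quantileLaw, Measure.map_apply_of_aemeasurable h.aemeasurable_pinv measurableSet_Iic,
    measure_congr hpre, Measure.restrict_apply measurableSet_Iio, Iio_inter_Ioo,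
    min_eq_left (h.mem_Icc x).2, Real.volume_Ioo, sub_zero, ENNReal.toReal_ofReal (h.mem_Icc x).1]

lemma integral_quantileLaw (h : IsCDF F) :
    ∫ z, z ∂quantileLaw F = ∫ u in Ioo (0 : ℝ) 1, pinv F u :=
  integral_map h.aemeasurable_pinv (by fun_prop)

lemma memLp_id_quantileLaw_iff (h : IsCDF F) {p : ℝ≥0∞} :
    MemLp (fun z => z) p (quantileLaw F) ↔ MemLp (pinv F) p (volume.restrict (Ioo 0 1)) :=
  memLp_map_measure_iff (by fun_prop) h.aemeasurable_pinv

lemma integrable_id_quantileLaw_iff (h : IsCDF F) :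
    Integrable (fun z => z) (quantileLaw F) ↔
      ∫⁻ u in Ioo (0 : ℝ) 1, ENNReal.ofReal |pinv F u| < ⊤ := by
  rw [← memLp_one_iff_integrable, h.memLp_id_quantileLaw_iff, memLp_one_iff_integrable, Integrable,
    and_iff_right h.aemeasurable_pinv.aestronglyMeasurable, hasFiniteIntegral_iff_norm]
  simp only [Real.norm_eq_abs]

end IsCDF

lemma quantileLaw_cdfOf (m : Measure ℝ) [IsProbabilityMeasure m] : quantileLaw (cdfOf m) = m := by
  have := (isCDF_cdfOf (ν := m)).isProbabilityMeasure_quantileLaw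
  refine Measure.eq_of_cdf _ _ (StieltjesFunction.ext fun x => ?_)
  rw [← cdfOf_eq_cdf, ← cdfOf_eq_cdf, isCDF_cdfOf.cdfOf_quantileLaw]

lemma memLp_pinv_cdfOf_iff {m : Measure ℝ} [IsProbabilityMeasure m] {p : ℝ≥0∞} :
    MemLp (pinv (cdfOf m)) p (volume.restrict (Ioo 0 1)) ↔ MemLp (fun z => z) p m := by
  rw [← isCDF_cdfOf.memLp_id_quantileLaw_iff, quantileLaw_cdfOf]

lemma wdist_eq_eLpNorm {p : ℝ} (hp : 0 < p) (F G : ℝ → ℝ) :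
    Wdist p F G = eLpNorm (fun u => pinv F u - pinv G u) (ENNReal.ofReal p)
      (volume.restrict (Ioo 0 1)) := by
  rw [eLpNorm_eq_lintegral_rpow_enorm_toReal (by simpa using hp) ENNReal.ofReal_ne_top,
    ENNReal.toReal_ofReal hp.le, Wdist]
  simp only [← ofReal_norm, Real.norm_eq_abs,
    ENNReal.ofReal_rpow_of_nonneg (abs_nonneg _) hp.le]

lemma memLp_rpow_neg_add_rpow_neg {s q : ℝ} (hq : 0 < q) (hsq : s * q < 1) :
    MemLp (fun u : ℝ => u ^ (-s) + (1 - u) ^ (-s)) (ENNReal.ofReal q)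
      (volume.restrict (Ioo 0 1)) := by
  have hleft : MemLp (fun u : ℝ => u ^ (-s)) (ENNReal.ofReal q) (volume.restrict (Ioo 0 1)) := by
    rw [← integrable_norm_rpow_iff (by fun_prop) (by simpa using hq) ENNReal.ofReal_ne_top,
      ENNReal.toReal_ofReal hq.le]
    have hint : IntegrableOn (fun u : ℝ => u ^ (-(s * q))) (Ioo 0 1) :=
      (intervalIntegral.integrableOn_Ioo_rpow_iff one_pos).2 (by linarith)
    refine hint.congr_fun (fun u hu => ?_) measurableSet_Ioo
    rw [Real.norm_of_nonneg (Real.rpow_nonneg hu.1.le _), ← Real.rpow_mul hu.1.le, neg_mul]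
  have hreflect : MeasurePreserving (fun u : ℝ => 1 - u) (volume.restrict (Ioo 0 1))
      (volume.restrict (Ioo 0 1)) := by
    have h := (Measure.measurePreserving_sub_left volume (1 : ℝ)).restrict_preimage
      (s := Ioo 0 1) measurableSet_Ioo
    rwa [preimage_const_sub_Ioo, sub_self, sub_zero] at h
  exact hleft.add (hleft.comp_measurePreserving hreflect)

/-! ### Extension of the coefficients -/

lemma eqOn_primitive {f g : ℝ → ℝ} (h : EqOn f g (Icc 0 1)) :
    EqOn (primitive f) (primitive g) (Icc 0 1) := fun u hu =>
  intervalIntegral.integral_congr fun v hv => by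
    rw [uIcc_of_le hu.1] at hv
    exact h ⟨hv.1, hv.2.trans hu.2⟩

/-- The left-hand side of condition (E2); by Fubini it is the first absolute moment
`∫₀¹ |Ψ(u)| du` of the equilibrium profile. -/
def equilibriumMoment (a b : ℝ → ℝ) : ℝ≥0∞ :=
  (∫⁻ u in Ioo (0 : ℝ) (1 / 2), ENNReal.ofReal (a u * u / (2 * |primitive b u|))) +
    ∫⁻ u in Ioo (1 / 2 : ℝ) 1, ENNReal.ofReal (a u * (1 - u) / (2 * |primitive b u|))

lemma equilibriumMoment_congr {a a' b b' : ℝ → ℝ} (ha : EqOn a a' (Icc 0 1))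
    (hb : EqOn b b' (Icc 0 1)) : equilibriumMoment a b = equilibriumMoment a' b' := by
  have hB := eqOn_primitive hb
  refine congrArg₂ (· + ·) (setLIntegral_congr_fun measurableSet_Ioo fun u hu => ?_)
    (setLIntegral_congr_fun measurableSet_Ioo fun u hu => ?_)
  · have hu' : u ∈ Icc (0 : ℝ) 1 := ⟨hu.1.le, by linarith [hu.2]⟩
    simp only [ha hu', hB hu']
  · have hu' : u ∈ Icc (0 : ℝ) 1 := ⟨by linarith [hu.1], hu.2.le⟩
    simp only [ha hu', hB hu']

lemma abs_primitive_sub_sub_mul_le {f : ℝ → ℝ} {K : ℝ} (hf : Continuous f)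
    (hK : ∀ p q, |f p - f q| ≤ K * |p - q|) (x y : ℝ) :
    |primitive f y - primitive f x - f x * (y - x)| ≤ K * (y - x) ^ 2 := by
  have hK0 : 0 ≤ K := by simpa using (abs_nonneg _).trans (hK 1 0)
  have hbound := (convex_segment x y).norm_image_sub_le_of_norm_hasDerivWithin_le
    (f := fun z => primitive f z - f x * z) (f' := fun z => f z - f x * 1) (C := K * |y - x|)
    (fun z _ => ((hasDerivAt_primitive hf z).sub
      ((hasDerivAt_id z).const_mul (f x))).hasDerivWithinAt)
    (fun z hz => by
      rw [mul_one]
      exact (hK z x).trans (mul_le_mul_of_nonneg_left (norm_sub_le_of_mem_segment hz) hK0))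
    (left_mem_segment ℝ x y) (right_mem_segment ℝ x y)
  calc |primitive f y - primitive f x - f x * (y - x)|
      = |primitive f y - f x * y - (primitive f x - f x * x)| := by ring_nf
    _ ≤ K * |y - x| * |y - x| := hbound
    _ = K * (y - x) ^ 2 := by rw [mul_assoc, abs_mul_abs_self, sq]

lemma setLIntegral_Ioo_const_sub (f : ℝ → ℝ≥0∞) (x y z : ℝ) :
    ∫⁻ u in Ioo x y, f (z - u) = ∫⁻ u in Ioo (z - y) (z - x), f u := by
  have h := (Measure.measurePreserving_sub_left volume z).setLIntegral_comp_preimage_emb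
    (Homeomorph.subLeft z).measurableEmbedding f (Ioo (z - y) (z - x))
  rwa [preimage_const_sub_Ioo, sub_sub_cancel, sub_sub_cancel] at h

/-- With `d ≤ 0` the integrand would be at least a multiple of `1 / u`. -/
lemma pos_of_setLIntegral_lt_top {a B : ℝ → ℝ} {c d L r : ℝ} (hc : 0 < c) (hr : 0 < r)
    (ha : ∀ u ∈ Ioo 0 r, c ≤ a u) (hpos : ∀ u ∈ Ioo 0 r, 0 < B u)
    (hB : ∀ u ∈ Ioo 0 r, B u ≤ d * u + L * u ^ 2)
    (hi : ∫⁻ u in Ioo 0 r, ENNReal.ofReal (a u * u / (2 * |B u|)) < ⊤) : 0 < d := by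
  by_contra! hd
  have hle : ∀ u ∈ Ioo 0 r, u⁻¹ ≤ 2 * L / c * (a u * u / (2 * |B u|)) := fun u hu => by
    have hBu := hpos u hu
    have hBL : B u ≤ L * u ^ 2 := by nlinarith [hB u hu, hu.1]
    have hL : 0 < L := by
      by_contra! hL
      nlinarith [sq_nonneg u]
    have hu0 := hu.1
    have hau := ha u hu
    have hau0 : 0 ≤ a u * u := mul_nonneg (hc.le.trans hau) hu0.le
    rw [abs_of_pos hBu]
    calc u⁻¹ = 2 * L / c * (c * u / (2 * (L * u ^ 2))) := by field_simp
      _ ≤ 2 * L / c * (a u * u / (2 * B u)) := by gcongr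
  have hfin : ∫⁻ u in Ioo 0 r, ENNReal.ofReal u⁻¹ < ⊤ := by
    calc ∫⁻ u in Ioo 0 r, ENNReal.ofReal u⁻¹
        ≤ ∫⁻ u in Ioo 0 r, ENNReal.ofReal (2 * L / c) *
            ENNReal.ofReal (a u * u / (2 * |B u|)) := by
          refine setLIntegral_mono' measurableSet_Ioo fun u hu => ?_
          rw [← ENNReal.ofReal_mul' (div_nonneg
            (mul_nonneg (hc.le.trans (ha u hu)) hu.1.le) (by positivity))]
          exact ENNReal.ofReal_le_ofReal (hle u hu)
      _ = ENNReal.ofReal (2 * L / c) * ∫⁻ u in Ioo 0 r, ENNReal.ofReal (a u * u / (2 * |B u|)) :=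
          lintegral_const_mul' _ _ ENNReal.ofReal_ne_top
      _ < ⊤ := ENNReal.mul_lt_top ENNReal.ofReal_lt_top hi
  have hint : IntegrableOn (fun u : ℝ => u ^ (-1 : ℝ)) (Ioo 0 r) := by
    simp only [Real.rpow_neg_one]
    refine ⟨by fun_prop, (hasFiniteIntegral_iff_ofReal ?_).2 hfin⟩
    filter_upwards [ae_restrict_mem measurableSet_Ioo] with u hu using inv_nonneg.2 hu.1.le
  exact lt_irrefl _ ((intervalIntegral.integrableOn_Ioo_rpow_iff hr).1 hint)

lemma eventually_mul_le_of_hasDerivAt {f : ℝ → ℝ} {d k : ℝ} (hf : HasDerivAt f d 0)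
    (h₀ : f 0 = 0) (hk : k < d) : ∀ᶠ u in 𝓝[≥] 0, k * u ≤ f u := by
  filter_upwards [((hasDerivAt_iff_isLittleO.1 hf).def (sub_pos.2 hk)).filter_mono
    nhdsWithin_le_nhds, self_mem_nhdsWithin] with u hu hu0
  simp only [h₀, sub_zero, smul_eq_mul, Real.norm_eq_abs, abs_of_nonneg (mem_Ici.1 hu0)] at hu
  linarith [neg_le_of_abs_le hu]

lemma eventually_mul_one_sub_le_of_hasDerivAt {f : ℝ → ℝ} {d k : ℝ} (hf : HasDerivAt f d 1)
    (h₁ : f 1 = 0) (hk : d < -k) : ∀ᶠ u in 𝓝[≤] 1, k * (1 - u) ≤ f u := by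
  filter_upwards [((hasDerivAt_iff_isLittleO.1 hf).def (sub_pos.2 hk)).filter_mono
    nhdsWithin_le_nhds, self_mem_nhdsWithin] with u hu hu1
  simp only [h₁, sub_zero, smul_eq_mul, Real.norm_eq_abs,
    abs_of_nonpos (sub_nonpos.2 (mem_Iic.1 hu1))] at hu
  linarith [neg_le_of_abs_le hu]

lemma exists_mul_mul_one_sub_le {f : ℝ → ℝ} {d₀ d₁ : ℝ} (hf : Continuous f) (h₀ : f 0 = 0)
    (h₁ : f 1 = 0) (hd₀ : HasDerivAt f d₀ 0) (hd₁ : HasDerivAt f d₁ 1) (hd₀_pos : 0 < d₀)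
    (hd₁_neg : d₁ < 0) (hpos : ∀ u ∈ Ioo 0 1, 0 < f u) :
    ∃ γ > 0, ∀ u ∈ Icc 0 1, γ * (u * (1 - u)) ≤ f u := by
  have hsmall : ∀ u ∈ Icc (0 : ℝ) 1, 0 ≤ u * (1 - u) ∧ u * (1 - u) ≤ u ∧ u * (1 - u) ≤ 1 - u ∧
      u * (1 - u) ≤ 1 := fun u hu => by
    refine ⟨mul_nonneg hu.1 (sub_nonneg.2 hu.2), ?_, ?_, ?_⟩ <;> nlinarith [hu.1, hu.2]
  suffices h : ∃ γ > 0, ∀ u ∈ Icc (0 : ℝ) 1, u ∈ Icc (0 : ℝ) 1 → γ * (u * (1 - u)) ≤ f u by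
    obtain ⟨γ, hγ, h⟩ := h
    exact ⟨γ, hγ, fun u hu => h u hu hu⟩
  refine isCompact_Icc.induction_on
    (p := fun s => ∃ γ > 0, ∀ u ∈ s, u ∈ Icc (0 : ℝ) 1 → γ * (u * (1 - u)) ≤ f u)
    ⟨1, one_pos, by simp⟩ (fun s t hst ⟨γ, hγ, h⟩ => ⟨γ, hγ, fun u hu => h u (hst hu)⟩)
    (fun s t ⟨γ, hγ, h⟩ ⟨γ', hγ', h'⟩ => ⟨min γ γ', lt_min hγ hγ', ?_⟩) fun x hx => ?_
  · rintro u (hu | hu) hu01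
    · exact (mul_le_mul_of_nonneg_right (min_le_left _ _) (hsmall u hu01).1).trans (h u hu hu01)
    · exact (mul_le_mul_of_nonneg_right (min_le_right _ _) (hsmall u hu01).1).trans (h' u hu hu01)
  rcases eq_endpoints_or_mem_Ioo_of_mem_Icc hx with rfl | rfl | hx
  · refine ⟨_, (eventually_mul_le_of_hasDerivAt hd₀ h₀ (half_lt_self hd₀_pos)).filter_mono
      (nhdsWithin_mono 0 Icc_subset_Ici_self), d₀ / 2, half_pos hd₀_pos, fun u hu hu01 => ?_⟩
    exact (mul_le_mul_of_nonneg_left (hsmall u hu01).2.1 (half_pos hd₀_pos).le).trans hu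
  · refine ⟨_, (eventually_mul_one_sub_le_of_hasDerivAt (k := -d₁ / 2) hd₁ h₁
      (by linarith)).filter_mono (nhdsWithin_mono 1 Icc_subset_Iic_self), -d₁ / 2, by linarith,
      fun u hu hu01 => ?_⟩
    exact (mul_le_mul_of_nonneg_left (hsmall u hu01).2.2.1 (by linarith)).trans hu
  · have hfx := hpos x hx
    refine ⟨_, ((hf.tendsto x).eventually_const_le (half_lt_self hfx)).filter_mono
      nhdsWithin_le_nhds, f x / 2, half_pos hfx, fun u hu hu01 => ?_⟩
    exact (mul_le_of_le_one_right (half_pos hfx).le (hsmall u hu01).2.2.2).trans hu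

lemma exists_mul_mul_one_sub_le_primitive {a b : ℝ → ℝ} {c K : ℝ} (hb : Continuous b)
    (hbK : ∀ p q, |b p - b q| ≤ K * |p - q|) (hc : 0 < c) (ha : ∀ u ∈ Icc 0 1, c ≤ a u)
    (hpos : ∀ u ∈ Ioo 0 1, 0 < primitive b u) (hb1 : primitive b 1 = 0)
    (hE2 : equilibriumMoment a b < ⊤) :
    ∃ γ > 0, ∀ u ∈ Icc 0 1, γ * (u * (1 - u)) ≤ primitive b u := by
  have hmem : ∀ u ∈ Ioo (0 : ℝ) (1 / 2), u ∈ Ioo (0 : ℝ) 1 ∧ 1 - u ∈ Ioo (0 : ℝ) 1 := fun u hu =>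
    ⟨⟨hu.1, by linarith [hu.2]⟩, by linarith [hu.2], by linarith [hu.1]⟩
  have htaylor := abs_primitive_sub_sub_mul_le hb hbK
  have hb0_pos : 0 < b 0 := by
    refine pos_of_setLIntegral_lt_top hc one_half_pos
      (fun u hu => ha u (Ioo_subset_Icc_self (hmem u hu).1)) (fun u hu => hpos u (hmem u hu).1)
      (L := K) (fun u _ => ?_) (le_self_add.trans_lt hE2)
    have h := le_of_abs_le (htaylor 0 u)
    simp only [primitive_zero, sub_zero] at h
    linarith
  have hb1_neg : 0 < -b 1 := by
    refine pos_of_setLIntegral_lt_top (a := fun u => a (1 - u)) (B := fun u => primitive b (1 - u))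
      hc one_half_pos (fun u hu => ha _ (Ioo_subset_Icc_self (hmem u hu).2))
      (fun u hu => hpos _ (hmem u hu).2) (L := K) (fun u _ => ?_) ?_
    · have h := le_of_abs_le (htaylor 1 (1 - u))
      rw [hb1, show 1 - u - 1 = -u by ring] at h
      linarith
    · have h := setLIntegral_Ioo_const_sub
        (fun u => ENNReal.ofReal (a u * (1 - u) / (2 * |primitive b u|))) 0 (1 / 2) 1
      simp only [sub_sub_cancel, sub_zero, sub_half] at h
      rw [h]
      exact le_add_self.trans_lt hE2
  exact exists_mul_mul_one_sub_le (continuous_primitive hb) (primitive_zero b) hb1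
    (hasDerivAt_primitive hb 0) (hasDerivAt_primitive hb 1) hb0_pos (neg_pos.1 hb1_neg) hpos

/-- Extending `a` and `b` constantly beyond `[0, 1]` changes neither equation, because distribution
functions take values in `[0, 1]`. -/
theorem exists_confining_extension {a b : ℝ → ℝ} {c : ℝ} {K M : NNReal}
    (ha : LipschitzOnWith K a (Icc 0 1)) (hb : LipschitzOnWith M b (Icc 0 1)) (hc : 0 < c)
    (hca : ∀ u ∈ Icc 0 1, c ≤ a u) (hpos : ∀ u ∈ Ioo 0 1, 0 < primitive b u)
    (hb1 : primitive b 1 = 0)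
    (hE2 : equilibriumMoment a b < ⊤) :
    ∃ a' b' C L K γ, Confining a' b' c C L K γ ∧ EqOn a' a (Icc 0 1) ∧ EqOn b' b (Icc 0 1) := by
  let π : ℝ → ℝ := fun u => projIcc 0 1 zero_le_one u
  have hπ : ∀ u, π u ∈ Icc 0 1 := fun u => (projIcc 0 1 zero_le_one u).2
  have hπ_eq : ∀ u ∈ Icc 0 1, π u = u := fun u hu => by simp only [π, projIcc_of_mem _ hu]
  have hπ_lip : LipschitzOnWith 1 π univ := (LipschitzWith.projIcc zero_le_one).lipschitzOnWith
  have hlip : ∀ {f : ℝ → ℝ} {K : NNReal}, LipschitzOnWith K f (Icc 0 1) →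
      LipschitzWith K (f ∘ π) := fun hf => by
    simpa using lipschitzOnWith_univ.1 (hf.comp hπ_lip fun u _ => hπ u)
  have haπ : EqOn (a ∘ π) a (Icc 0 1) := fun u hu => congrArg a (hπ_eq u hu)
  have hbπ : EqOn (b ∘ π) b (Icc 0 1) := fun u hu => congrArg b (hπ_eq u hu)
  have hBπ := eqOn_primitive hbπ
  obtain ⟨C, hC⟩ := isCompact_Icc.exists_bound_of_continuousOn ha.continuousOn
  obtain ⟨L, hL⟩ := isCompact_Icc.exists_bound_of_continuousOn hb.continuousOn
  have hb1π : primitive (b ∘ π) 1 = 0 := (hBπ (right_mem_Icc.2 zero_le_one)).trans hb1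
  have hposπ : ∀ u ∈ Ioo 0 1, 0 < primitive (b ∘ π) u := fun u hu => by
    rw [hBπ (Ioo_subset_Icc_self hu)]
    exact hpos u hu
  obtain ⟨γ, hγ, hle⟩ := exists_mul_mul_one_sub_le_primitive (hlip hb).continuous
    (hlip hb).dist_le_mul hc (fun u _ => hca _ (hπ u)) hposπ hb1π
    ((equilibriumMoment_congr haπ hbπ).trans_lt hE2)
  refine ⟨a ∘ π, b ∘ π, C, L, K, γ, ?_, haπ, hbπ⟩
  exact
    { continuous_a := (hlip ha).continuous
      continuous_b := (hlip hb).continuous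
      pos := hc
      le_a := fun u => hca _ (hπ u)
      a_le := fun u => le_of_abs_le (hC _ (hπ u))
      abs_b_le := fun u => hL _ (hπ u)
      abs_a_sub_le := (hlip ha).dist_le_mul
      γ_pos := hγ
      primitive_b_one := hb1π
      le_primitive_b := hle }

/-! ### The stationary profile -/

/-- The log-odds function `log (u / (1 - u))`, which `Psi` is comparable to. -/
def logit (u : ℝ) : ℝ := Real.log u - Real.log (1 - u)

lemma logit_one_half : logit (1 / 2) = 0 := by norm_num [logit]

lemma hasDerivAt_logit {u : ℝ} (hu : u ∈ Ioo 0 1) : HasDerivAt logit (u * (1 - u))⁻¹ u := by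
  have hu₀ : u ≠ 0 := hu.1.ne'
  have hu₁ : 1 - u ≠ 0 := (sub_pos.2 hu.2).ne'
  refine ((Real.hasDerivAt_log hu₀).sub (((hasDerivAt_id' u).const_sub 1).log hu₁)).congr_deriv ?_
  field_simp
  ring

lemma tendsto_logit_nhdsGT_zero : Tendsto logit (𝓝[>] 0) atBot := by
  refine Real.tendsto_log_nhdsGT_zero.atBot_add (C := -Real.log (1 - 0)) ?_
  refine (ContinuousAt.tendsto ?_).mono_left nhdsWithin_le_nhds
  exact ((continuousAt_const.sub continuousAt_id).log (by norm_num)).neg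

lemma logit_one_sub (u : ℝ) : logit (1 - u) = -logit u := by
  rw [logit, logit, sub_sub_cancel, neg_sub]

lemma tendsto_logit_nhdsLT_one : Tendsto logit (𝓝[<] 1) atTop := by
  have hreflect : Tendsto (fun u : ℝ => 1 - u) (𝓝[<] 1) (𝓝[>] 0) := by
    refine tendsto_nhdsWithin_iff.2 ⟨?_, ?_⟩
    · simpa using ((continuous_const.sub continuous_id).tendsto (1 : ℝ)).mono_left
        (f := fun u : ℝ => 1 - u) nhdsWithin_le_nhds
    · filter_upwards [self_mem_nhdsWithin] with u hu using sub_pos.2 (mem_Iio.1 hu)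
  refine (tendsto_neg_atBot_atTop.comp (tendsto_logit_nhdsGT_zero.comp hreflect)).congr fun u => ?_
  simp only [comp_apply, logit_one_sub, neg_neg]

lemma monotoneOn_sub_of_hasDerivAt {f g f' g' : ℝ → ℝ} {x y : ℝ}
    (hf : ∀ u ∈ Ioo x y, HasDerivAt f (f' u) u) (hg : ∀ u ∈ Ioo x y, HasDerivAt g (g' u) u)
    (hle : ∀ u ∈ Ioo x y, f' u ≤ g' u) : MonotoneOn (fun u => g u - f u) (Ioo x y) := by
  have hd := fun u hu => (hg u hu).sub (hf u hu)
  refine monotoneOn_of_deriv_nonneg (convex_Ioo x y)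
    (fun u hu => (hd u hu).continuousAt.continuousWithinAt) ?_ ?_ <;> rw [interior_Ioo]
  · exact fun u hu => (hd u hu).differentiableAt.differentiableWithinAt
  · exact fun u hu => (sub_nonneg.2 (hle u hu)).trans_eq (hd u hu).deriv.symm

lemma one_half_mem_Ioo : (1 / 2 : ℝ) ∈ Ioo 0 1 := by constructor <;> norm_num

lemma uIcc_one_half_subset_Ioo {u : ℝ} (hu : u ∈ Ioo 0 1) : uIcc (1 / 2) u ⊆ Ioo 0 1 :=
  ordConnected_Ioo.uIcc_subset one_half_mem_Ioo hu

lemma Psi_one_half (a b : ℝ → ℝ) : Psi a b (1 / 2) = 0 := intervalIntegral.integral_same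

lemma PsiInv_congr {a a' b b' : ℝ → ℝ} (ha : EqOn a a' (Icc 0 1)) (hb : EqOn b b' (Icc 0 1)) :
    PsiInv a b = PsiInv a' b' := by
  have hΨ : EqOn (Psi a b) (Psi a' b') (Ioo 0 1) := fun u hu =>
    intervalIntegral.integral_congr fun v hv => by
      have hv' := Ioo_subset_Icc_self (uIcc_one_half_subset_Ioo hu hv)
      simp only [ha hv', eqOn_primitive hb hv']
  funext x
  refine congrArg sSup (ext fun u => and_congr_right fun hu => ?_)
  rw [hΨ hu]

namespace Confining

variable {a b : ℝ → ℝ} {c C L K γ u : ℝ}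

lemma primitive_b_pos (h : Confining a b c C L K γ) (hu : u ∈ Ioo 0 1) : 0 < primitive b u :=
  (mul_pos h.γ_pos (mul_pos hu.1 (sub_pos.2 hu.2))).trans_le
    (h.le_primitive_b u (Ioo_subset_Icc_self hu))

lemma primitive_b_le (h : Confining a b c C L K γ) (hu : u ∈ Icc 0 1) :
    primitive b u ≤ 2 * L * (u * (1 - u)) := by
  have h₀ := le_of_abs_le (abs_primitive_sub_le h.continuous_b h.abs_b_le u 0)
  have h₁ := le_of_abs_le (abs_primitive_sub_le h.continuous_b h.abs_b_le u 1)
  rw [primitive_zero, sub_zero, sub_zero, abs_of_nonneg hu.1] at h₀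
  rw [h.primitive_b_one, sub_zero, abs_sub_comm, abs_of_nonneg (sub_nonneg.2 hu.2)] at h₁
  have hLu : 0 ≤ L * u := mul_nonneg h.L_nonneg hu.1
  have hLu' : 0 ≤ L * (1 - u) := mul_nonneg h.L_nonneg (sub_nonneg.2 hu.2)
  rcases le_total u (1 / 2) with hu' | hu' <;> nlinarith

lemma L_pos (h : Confining a b c C L K γ) : 0 < L := by
  have hpos := h.primitive_b_pos one_half_mem_Ioo
  linarith [h.primitive_b_le (Ioo_subset_Icc_self one_half_mem_Ioo)]

lemma hasDerivAt_Psi (h : Confining a b c C L K γ) (hu : u ∈ Ioo 0 1) :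
    HasDerivAt (Psi a b) (a u / (2 * primitive b u)) u := by
  have hcont : ContinuousOn (fun v => a v / (2 * primitive b v)) (Ioo 0 1) :=
    h.continuous_a.continuousOn.div
      (continuous_const.mul (continuous_primitive h.continuous_b)).continuousOn
      fun v hv => (mul_pos two_pos (h.primitive_b_pos hv)).ne'
  exact intervalIntegral.integral_hasDerivAt_right
    (hcont.mono (uIcc_one_half_subset_Ioo hu)).intervalIntegrable
    (hcont.stronglyMeasurableAtFilter isOpen_Ioo u hu)
    (hcont.continuousAt (Ioo_mem_nhds hu.1 hu.2))

lemma deriv_Psi_pos (h : Confining a b c C L K γ) (hu : u ∈ Ioo 0 1) :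
    0 < a u / (2 * primitive b u) :=
  div_pos (h.a_pos u) (mul_pos two_pos (h.primitive_b_pos hu))

lemma continuousOn_Psi (h : Confining a b c C L K γ) : ContinuousOn (Psi a b) (Ioo 0 1) :=
  fun _ hu => (h.hasDerivAt_Psi hu).continuousAt.continuousWithinAt

lemma strictMonoOn_Psi (h : Confining a b c C L K γ) : StrictMonoOn (Psi a b) (Ioo 0 1) :=
  strictMonoOn_of_deriv_pos (convex_Ioo 0 1) h.continuousOn_Psi fun u hu => by
    rw [interior_Ioo] at hu
    rw [(h.hasDerivAt_Psi hu).deriv]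
    exact h.deriv_Psi_pos hu

lemma monotoneOn_Psi_sub_logit (h : Confining a b c C L K γ) :
    MonotoneOn (fun u => Psi a b u - c / (4 * L) * logit u) (Ioo 0 1) := by
  refine monotoneOn_sub_of_hasDerivAt (fun u hu => (hasDerivAt_logit hu).const_mul _)
    (fun u hu => h.hasDerivAt_Psi hu) fun u hu => ?_
  have hB := h.primitive_b_pos hu
  calc c / (4 * L) * (u * (1 - u))⁻¹ = c / (2 * (2 * L * (u * (1 - u)))) := by
        rw [← div_eq_mul_inv, div_div]
        ring_nf
    _ ≤ a u / (2 * primitive b u) := by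
        gcongr
        exacts [(h.a_pos u).le, h.le_a u, h.primitive_b_le (Ioo_subset_Icc_self hu)]

lemma monotoneOn_logit_sub_Psi (h : Confining a b c C L K γ) :
    MonotoneOn (fun u => C / (2 * γ) * logit u - Psi a b u) (Ioo 0 1) := by
  refine monotoneOn_sub_of_hasDerivAt (fun u hu => h.hasDerivAt_Psi hu)
    (fun u hu => (hasDerivAt_logit hu).const_mul _) fun u hu => ?_
  have hγ := h.γ_pos
  have hC := h.C_pos
  have hu' : 0 < u * (1 - u) := mul_pos hu.1 (sub_pos.2 hu.2)
  calc a u / (2 * primitive b u) ≤ C / (2 * (γ * (u * (1 - u)))) := by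
        gcongr
        exacts [h.a_le u, h.le_primitive_b u (Ioo_subset_Icc_self hu)]
    _ = C / (2 * γ) * (u * (1 - u))⁻¹ := by
        rw [← div_eq_mul_inv, div_div, mul_assoc]

lemma abs_Psi_le (h : Confining a b c C L K γ) (hu : u ∈ Ioo 0 1) :
    |Psi a b u| ≤ C / (2 * γ) * (|Real.log u| + |Real.log (1 - u)|) := by
  have hk : 0 ≤ C / (2 * γ) := div_nonneg h.C_pos.le (mul_pos two_pos h.γ_pos).le
  have hlogit : |Psi a b u| ≤ C / (2 * γ) * |logit u| := by
    rw [← abs_of_nonneg hk, ← abs_mul]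
    rcases le_total (1 / 2) u with hu' | hu'
    · have hΨ := h.strictMonoOn_Psi.monotoneOn one_half_mem_Ioo hu hu'
      have hle := h.monotoneOn_logit_sub_Psi one_half_mem_Ioo hu hu'
      simp only [Psi_one_half, logit_one_half, mul_zero, sub_zero] at hΨ hle
      exact abs_le_abs_of_nonneg hΨ (by linarith)
    · have hΨ := h.strictMonoOn_Psi.monotoneOn hu one_half_mem_Ioo hu'
      have hle := h.monotoneOn_logit_sub_Psi hu one_half_mem_Ioo hu'
      simp only [Psi_one_half, logit_one_half, mul_zero, sub_zero] at hΨ hle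
      exact abs_le_abs_of_nonpos hΨ (by linarith)
  exact hlogit.trans (mul_le_mul_of_nonneg_left (abs_sub _ _) hk)

lemma surjOn_Psi (h : Confining a b c C L K γ) : SurjOn (Psi a b) (Ioo 0 1) univ := by
  have hk : 0 < c / (4 * L) := div_pos h.pos (mul_pos four_pos h.L_pos)
  refine h.continuousOn_Psi.surjOn_of_tendsto ⟨_, one_half_mem_Ioo⟩
    ((tendsto_comp_coe_Ioo_atBot one_pos).2 ?_) ((tendsto_comp_coe_Ioo_atTop one_pos).2 ?_)
  · refine tendsto_atBot_mono' _ ?_ (tendsto_logit_nhdsGT_zero.const_mul_atBot hk)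
    filter_upwards [Ioc_mem_nhdsGT one_half_pos] with u hu
    have hle := h.monotoneOn_Psi_sub_logit ⟨hu.1, by linarith [hu.2]⟩ one_half_mem_Ioo hu.2
    simp only [Psi_one_half, logit_one_half, mul_zero, sub_zero] at hle
    linarith
  · refine tendsto_atTop_mono' _ ?_ (tendsto_logit_nhdsLT_one.const_mul_atTop hk)
    filter_upwards [Ico_mem_nhdsLT one_half_lt_one] with u hu
    have hle := h.monotoneOn_Psi_sub_logit one_half_mem_Ioo ⟨by linarith [hu.1], hu.2⟩ hu.1
    simp only [Psi_one_half, logit_one_half, mul_zero, sub_zero] at hle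
    linarith

lemma PsiInv_Psi (h : Confining a b c C L K γ) (hu : u ∈ Ioo 0 1) :
    PsiInv a b (Psi a b u) = u := by
  have hset : {v | v ∈ Ioo (0 : ℝ) 1 ∧ Psi a b v ≤ Psi a b u} = Ioc 0 u := ext fun v =>
    ⟨fun hv => ⟨hv.1.1, (h.strictMonoOn_Psi.le_iff_le hv.1 hu).1 hv.2⟩, fun hv =>
      have hv' : v ∈ Ioo (0 : ℝ) 1 := ⟨hv.1, hv.2.trans_lt hu.2⟩
      ⟨hv', (h.strictMonoOn_Psi.le_iff_le hv' hu).2 hv.2⟩⟩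
  rw [PsiInv, hset, csSup_Ioc hu.1]

lemma PsiInv_mem_Ioo (h : Confining a b c C L K γ) (x : ℝ) : PsiInv a b x ∈ Ioo (0 : ℝ) 1 := by
  obtain ⟨u, hu, rfl⟩ := h.surjOn_Psi (mem_univ x)
  rwa [h.PsiInv_Psi hu]

lemma Psi_PsiInv (h : Confining a b c C L K γ) (x : ℝ) : Psi a b (PsiInv a b x) = x := by
  obtain ⟨u, hu, rfl⟩ := h.surjOn_Psi (mem_univ x)
  rw [h.PsiInv_Psi hu]

lemma strictMono_PsiInv (h : Confining a b c C L K γ) : StrictMono (PsiInv a b) := fun x y hxy => by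
  rwa [← h.strictMonoOn_Psi.lt_iff_lt (h.PsiInv_mem_Ioo x) (h.PsiInv_mem_Ioo y), h.Psi_PsiInv,
    h.Psi_PsiInv]

lemma range_PsiInv (h : Confining a b c C L K γ) : range (PsiInv a b) = Ioo 0 1 :=
  Subset.antisymm (range_subset_iff.2 h.PsiInv_mem_Ioo) fun _ hu => ⟨_, h.PsiInv_Psi hu⟩

lemma hasDerivAt_PsiInv (h : Confining a b c C L K γ) (x : ℝ) :
    HasDerivAt (PsiInv a b) (2 * primitive b (PsiInv a b x) / a (PsiInv a b x)) x := by
  have hx := h.PsiInv_mem_Ioo x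
  have hcont : ContinuousAt (PsiInv a b) x := by
    refine continuousAt_of_monotoneOn_of_image_mem_nhds
      (h.strictMono_PsiInv.monotone.monotoneOn univ) univ_mem ?_
    rw [image_univ, h.range_PsiInv]
    exact Ioo_mem_nhds hx.1 hx.2
  exact (HasDerivAt.of_local_left_inverse hcont (h.hasDerivAt_Psi hx) (h.deriv_Psi_pos hx).ne'
    (Eventually.of_forall h.Psi_PsiInv)).congr_deriv (inv_div _ _)

lemma isCDF_PsiInv (h : Confining a b c C L K γ) : IsCDF (PsiInv a b) := by
  refine ⟨h.strictMono_PsiInv.monotone,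
    fun x => (h.hasDerivAt_PsiInv x).continuousAt.continuousWithinAt,
    tendsto_atBot_isGLB h.strictMono_PsiInv.monotone ?_,
    tendsto_atTop_isLUB h.strictMono_PsiInv.monotone ?_⟩ <;> rw [h.range_PsiInv]
  exacts [isGLB_Ioo one_pos, isLUB_Ioo one_pos]

lemma pinv_PsiInv (h : Confining a b c C L K γ) (hu : u ∈ Ioo 0 1) :
    pinv (PsiInv a b) u = Psi a b u := by
  have hset : {x | u < PsiInv a b x} = Ioi (Psi a b u) := ext fun x => by
    change u < PsiInv a b x ↔ Psi a b u < x
    rw [← h.strictMono_PsiInv.lt_iff_lt (a := Psi a b u), h.PsiInv_Psi hu]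
  rw [pinv, hset, csInf_Ioi]

end Confining

/-! ### Convergence to the equilibrium -/

/-- A probability measure with finite mean whose distribution function `G` solves
`(1/2) a(G) G' = B(G)`, the stationary equation integrated once. -/
structure IsEquilibrium (a b : ℝ → ℝ) (ν : Measure ℝ) : Prop where
  isProbabilityMeasure : IsProbabilityMeasure ν
  integrable : Integrable (fun z => z) ν
  hasDerivAt : ∀ x, HasDerivAt (cdfOf ν) (2 * primitive b (cdfOf ν x) / a (cdfOf ν x)) x

namespace IsEquilibrium

variable {a b : ℝ → ℝ} {ν : Measure ℝ}

lemma continuous (hν : IsEquilibrium a b ν) : Continuous (cdfOf ν) :=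
  continuous_iff_continuousAt.2 fun x => (hν.hasDerivAt x).continuousAt

lemma hasDerivAt_integratedCdf (hν : IsEquilibrium a b ν) (x : ℝ) :
    HasDerivAt (integratedCdf ν) (cdfOf ν x) x := by
  have := hν.isProbabilityMeasure
  have hsplit : integratedCdf ν = fun y => integratedCdf ν 0 + ∫ u in (0 : ℝ)..y, cdfOf ν u :=
    funext fun y => by rw [integral_cdfOf_eq_sub hν.integrable]; ring
  rw [hsplit]
  exact (hν.continuous.integral_hasStrictDerivAt 0 x).hasDerivAt.const_add _

end IsEquilibrium

/-- A concave profile, at least `1` on `[-R, R]`, which serves as a barrier for the difference of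
two solutions: for large `k` its second derivative dominates the linearized drift. -/
def coshBump (k R x : ℝ) : ℝ := 1 + Real.cosh (k * R) - Real.cosh (k * x)

lemma hasDerivAt_coshBump (k R x : ℝ) :
    HasDerivAt (coshBump k R) (-(k * Real.sinh (k * x))) x :=
  ((hasDerivAt_const_mul k).cosh.const_sub _).congr_deriv (by rw [mul_comm])

lemma hasDerivAt_const_mul_sinh (k x : ℝ) :
    HasDerivAt (fun x => k * Real.sinh (k * x)) (k * (k * Real.cosh (k * x))) x :=
  ((hasDerivAt_const_mul k).sinh.const_mul k).congr_deriv (by rw [mul_comm (Real.cosh _)])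

lemma coshBump_le (k R x : ℝ) : coshBump k R x ≤ 1 + Real.cosh (k * R) :=
  sub_le_self _ (Real.cosh_pos _).le

lemma one_le_coshBump {R x : ℝ} (k : ℝ) (hx : |x| ≤ |R|) : 1 ≤ coshBump k R x := by
  have hcosh : Real.cosh (k * x) ≤ Real.cosh (k * R) := by
    rw [Real.cosh_le_cosh, abs_mul, abs_mul]
    gcongr
  rw [coshBump]
  linarith

section Barrier

variable {a b : ℝ → ℝ} {c C L K γ σ k R : ℝ} {P : ℝ → ProbabilityMeasure ℝ} {ν : Measure ℝ}

lemma Confining.abs_flux_le (hc : Confining a b c C L K γ) {p : ℝ} (hp : p ∈ Icc 0 1) (v : ℝ) :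
    |1 / 2 * (a v * (2 * primitive b p / a p)) - primitive b v| ≤ (K * L / c + L) * |v - p| := by
  have hap := hc.a_pos p
  have hK : |(a v - a p) * (primitive b p / a p)| ≤ K * |v - p| * (L / c) := by
    rw [abs_mul, abs_div, abs_of_pos hap]
    gcongr
    · exact (abs_nonneg _).trans (hc.abs_a_sub_le v p)
    exacts [hc.abs_a_sub_le v p, hc.L_nonneg, hc.pos,
      abs_primitive_le hc.continuous_b hc.abs_b_le hp, hc.le_a p]
  calc |1 / 2 * (a v * (2 * primitive b p / a p)) - primitive b v|
      = |(a v - a p) * (primitive b p / a p) - (primitive b v - primitive b p)| := by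
        congr 1
        field_simp
        ring
    _ ≤ K * |v - p| * (L / c) + L * |v - p| := (abs_sub _ _).trans
        (add_le_add hK (abs_primitive_sub_le hc.continuous_b hc.abs_b_le v p))
    _ = (K * L / c + L) * |v - p| := by ring

/-- The residual of the integrated equation at the equilibrium perturbed by
`σ * d * coshBump k R`. -/
lemma Confining.residual_le (hc : Confining a b c C L K γ) {p d : ℝ} (hp : p ∈ Icc 0 1)
    (hσ : |σ| = 1) (hd : 0 ≤ d) (hk : 1 ≤ k) (hck : K * L / c + L + 1 ≤ c / 2 * k) (y : ℝ) :
    σ * (1 / 2 * (a (p - σ * d * (k * Real.sinh y)) *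
        (2 * primitive b p / a p - σ * d * (k * (k * Real.cosh y)))) -
      primitive b (p - σ * d * (k * Real.sinh y))) + d ≤ 0 := by
  set v := p - σ * d * (k * Real.sinh y) with hv
  have hσ2 : σ * σ = 1 := by rw [← abs_mul_abs_self, hσ, one_mul]
  have hk0 : 0 ≤ k := zero_le_one.trans hk
  have hL' : 0 ≤ K * L / c + L := by
    have hK : 0 ≤ K := by simpa using (abs_nonneg _).trans (hc.abs_a_sub_le 1 0)
    have := hc.L_nonneg
    have := hc.pos
    positivity
  have hsinh : |Real.sinh y| ≤ Real.cosh y := abs_le_of_sq_le_sq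
    (by linarith [Real.cosh_sq y]) (Real.cosh_pos y).le
  have hflux : σ * (1 / 2 * (a v * (2 * primitive b p / a p)) - primitive b v) ≤
      (K * L / c + L) * (d * (k * Real.cosh y)) := by
    refine (le_abs_self _).trans ?_
    rw [abs_mul, hσ, one_mul]
    refine (hc.abs_flux_le hp v).trans (mul_le_mul_of_nonneg_left ?_ hL')
    rw [hv, sub_sub_cancel_left, abs_neg, abs_mul, abs_mul, abs_mul, hσ, one_mul, abs_of_nonneg hd,
      abs_of_nonneg hk0]
    gcongr
  have hdiffusion : c * (d * (k * (k * Real.cosh y))) ≤ a v * (d * (k * (k * Real.cosh y))) :=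
    mul_le_mul_of_nonneg_right (hc.le_a v) (by have := Real.cosh_pos y; positivity)
  have hone : 1 ≤ k * Real.cosh y := one_le_mul_of_one_le_of_one_le hk (Real.one_le_cosh y)
  have hd' : d ≤ d * (k * Real.cosh y) := le_mul_of_one_le_right hd hone
  have hmargin := mul_le_mul_of_nonneg_right hck (hd.trans hd')
  linear_combination hflux + (1 / 2) * hdiffusion + hmargin + hd' -
    (1 / 2) * (a v * (d * (k * (k * Real.cosh y)))) * hσ2

lemma IsEquilibrium.isBarrier_perturbation (hν : IsEquilibrium a b ν)
    (hc : Confining a b c C L K γ) {r M : ℝ} (hσ : |σ| = 1) (hM : 0 ≤ M) (hk : 1 ≤ k)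
    (hck : K * L / c + L + 1 ≤ c / 2 * k) (hr : 0 ≤ r) (hrk : r * (1 + Real.cosh (k * R)) ≤ 1)
    (ε x₀ x₁ : ℝ) :
    IsBarrier a b σ x₀ x₁
      (fun t x => integratedCdf ν x + σ * ε + σ * (M * Real.exp (-(r * t))) * coshBump k R x)
      (fun t x => cdfOf ν x - σ * (M * Real.exp (-(r * t))) * (k * Real.sinh (k * x)))
      (fun t x => -(r * (σ * (M * Real.exp (-(r * t))))) * coshBump k R x)
      (fun t x => 1 / 2 * (a (cdfOf ν x - σ * (M * Real.exp (-(r * t))) * (k * Real.sinh (k * x))) *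
        (2 * primitive b (cdfOf ν x) / a (cdfOf ν x) -
          σ * (M * Real.exp (-(r * t))) * (k * (k * Real.cosh (k * x)))))) := by
  have := hν.isProbabilityMeasure
  have hQ := continuous_integratedCdf hν.integrable
  have hG := hν.continuous
  have hB := continuous_primitive hc.continuous_b
  have hη : Continuous (coshBump k R) := by unfold coshBump; fun_prop
  have ha := hc.continuous_a
  have hdrift : Continuous fun x => 2 * primitive b (cdfOf ν x) / a (cdfOf ν x) :=
    (by fun_prop : Continuous fun x => 2 * primitive b (cdfOf ν x)).div (by fun_prop)
      fun x => (hc.a_pos _).ne'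
  refine ⟨hσ, by unfold uncurry; fun_prop, by unfold uncurry; fun_prop, by unfold uncurry; fun_prop,
    fun t => by fun_prop, fun t x => ?_, fun t x => ?_, fun t x => ?_, fun t _ x _ => ?_⟩
  · exact (((hν.hasDerivAt_integratedCdf x).add_const _).add
      ((hasDerivAt_coshBump k R x).const_mul _)).congr_deriv (by ring)
  · have hlin : HasDerivAt (fun s => -(r * s)) (-r) t := (hasDerivAt_const_mul r).neg
    exact ((((hlin.exp.const_mul M).const_mul σ).mul_const _).const_add _).congr_deriv (by ring)
  · exact ((hasDerivAt_primitive ha _).comp x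
      ((hν.hasDerivAt x).sub ((hasDerivAt_const_mul_sinh k x).const_mul _))).const_mul _
  · have hd : 0 ≤ M * Real.exp (-(r * t)) := mul_nonneg hM (Real.exp_pos _).le
    have hσ2 : σ * σ = 1 := by rw [← abs_mul_abs_self, hσ, one_mul]
    have hdecay : r * coshBump k R x ≤ 1 :=
      (mul_le_mul_of_nonneg_left (coshBump_le k R x) hr).trans hrk
    linear_combination hc.residual_le (cdfOf_mem_Icc (ν := ν) x) hσ hd hk hck (k * x) +
      mul_le_mul_of_nonneg_left hdecay hd +
      r * (M * Real.exp (-(r * t))) * coshBump k R x * hσ2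

lemma mul_sub_le_zero_of_abs_sub_le {x y ε e : ℝ} (hσ : |σ| = 1) (h : |x - y| ≤ ε + e) :
    σ * (x - (y + σ * ε + σ * e)) ≤ 0 := by
  have hσ2 : σ * σ = 1 := by rw [← abs_mul_abs_self, hσ, one_mul]
  have hle : σ * (x - y) ≤ ε + e := (le_abs_self _).trans (by rwa [abs_mul, hσ, one_mul])
  linear_combination hle - (ε + e) * hσ2

lemma IntegratedSolution.mul_sub_perturbation_le_zero (hc : Confining a b c C L K γ)
    (h : IntegratedSolution a b P) (hν : IsEquilibrium a b ν) {ε M : ℝ} (hR : 0 < R)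
    (h₀ : ∀ x ∈ Icc (-R) R, |integratedCdf (P 0) x - integratedCdf ν x| ≤ M)
    (hl : ∀ t ≥ 0, |integratedCdf (P t) (-R) - integratedCdf ν (-R)| ≤ ε)
    (hr : ∀ t ≥ 0, |integratedCdf (P t) R - integratedCdf ν R| ≤ ε)
    (hk : 1 ≤ k) (hck : K * L / c + L + 1 ≤ c / 2 * k) (hσ : |σ| = 1) {t x : ℝ} (ht : 0 ≤ t)
    (hx : x ∈ Icc (-R) R) :
    σ * (integratedCdf (P t) x - (integratedCdf ν x + σ * ε +
      σ * (M * Real.exp (-((1 + Real.cosh (k * R))⁻¹ * t))) * coshBump k R x)) ≤ 0 := by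
  have hH : 0 < 1 + Real.cosh (k * R) := add_pos one_pos (Real.cosh_pos _)
  have hM : 0 ≤ M := (abs_nonneg _).trans (h₀ R ⟨by linarith, le_rfl⟩)
  have hbump : ∀ y ∈ Icc (-R) R, 1 ≤ coshBump k R y := fun y hy =>
    one_le_coshBump k ((abs_le.2 hy).trans (le_abs_self R))
  have hboundary : ∀ s, ∀ y ∈ Icc (-R) R, |integratedCdf (P s) y - integratedCdf ν y| ≤ ε →
      σ * (integratedCdf (P s) y - (integratedCdf ν y + σ * ε +
        σ * (M * Real.exp (-((1 + Real.cosh (k * R))⁻¹ * s))) * coshBump k R y)) ≤ 0 :=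
    fun s y hy hle => by
      rw [mul_assoc σ (_ * _)]
      exact mul_sub_le_zero_of_abs_sub_le hσ (hle.trans (le_add_of_nonneg_right
        (mul_nonneg (mul_nonneg hM (Real.exp_pos _).le) (zero_le_one.trans (hbump y hy)))))
  refine (hν.isBarrier_perturbation hc hσ hM hk hck (inv_pos.2 hH).le
    (inv_mul_cancel₀ hH.ne').le ε (-R) R).comparison hc.toElliptic h (by linarith)
    (fun s hs => hboundary s _ ⟨le_rfl, by linarith⟩ (hl s hs.1))
    (fun s hs => hboundary s _ ⟨by linarith, le_rfl⟩ (hr s hs.1)) (fun y hy => ?_)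
    t ⟨ht, le_rfl⟩ x hx
  have hε : 0 ≤ ε := (abs_nonneg _).trans (hr 0 le_rfl)
  rw [mul_zero, neg_zero, Real.exp_zero, mul_one, mul_assoc]
  exact mul_sub_le_zero_of_abs_sub_le hσ
    ((h₀ y hy).trans (by linarith [le_mul_of_one_le_right hM (hbump y hy)]))

lemma IntegratedSolution.exists_abs_sub_integratedCdf_le (hc : Confining a b c C L K γ)
    (h : IntegratedSolution a b P) (hν : IsEquilibrium a b ν) {ε M : ℝ} (hR : 0 < R)
    (h₀ : ∀ x ∈ Icc (-R) R, |integratedCdf (P 0) x - integratedCdf ν x| ≤ M)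
    (hl : ∀ t ≥ 0, |integratedCdf (P t) (-R) - integratedCdf ν (-R)| ≤ ε)
    (hr : ∀ t ≥ 0, |integratedCdf (P t) R - integratedCdf ν R| ≤ ε) :
    ∃ r > 0, ∃ H, ∀ t ≥ 0, ∀ x ∈ Icc (-R) R,
      |integratedCdf (P t) x - integratedCdf ν x| ≤ ε + M * Real.exp (-(r * t)) * H := by
  obtain ⟨k, hk, hck⟩ : ∃ k, 1 ≤ k ∧ K * L / c + L + 1 ≤ c / 2 * k :=
    ((eventually_ge_atTop 1).and ((tendsto_id.const_mul_atTop
      (half_pos hc.pos)).eventually_ge_atTop (K * L / c + L + 1))).exists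
  refine ⟨(1 + Real.cosh (k * R))⁻¹, inv_pos.2 (add_pos one_pos (Real.cosh_pos _)),
    1 + Real.cosh (k * R), fun t ht x hx => ?_⟩
  have hM : 0 ≤ M := (abs_nonneg _).trans (h₀ R ⟨by linarith, le_rfl⟩)
  have hupper := h.mul_sub_perturbation_le_zero hc hν hR h₀ hl hr hk hck (σ := 1)
    (by norm_num) ht hx
  have hlower := h.mul_sub_perturbation_le_zero hc hν hR h₀ hl hr hk hck (σ := -1)
    (by norm_num) ht hx
  have hbound := mul_le_mul_of_nonneg_left (coshBump_le k R x)
    (mul_nonneg hM (Real.exp_pos (-((1 + Real.cosh (k * R))⁻¹ * t))).le)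
  exact abs_le.2 ⟨by linarith, by linarith⟩

lemma IntegratedSolution.exists_forall_le_abs_sub_integratedCdf_le
    (hc : Confining a b c C L K γ) (h : IntegratedSolution a b P) (hν : IsEquilibrium a b ν)
    (hmean : ∫ z, z ∂ν = ∫ z, z ∂P 0) {ε : ℝ} (hε : 0 < ε) :
    ∃ R > 0, ∀ t ≥ 0, ∀ x, R ≤ |x| → |integratedCdf (P t) x - integratedCdf ν x| ≤ ε := by
  have := hν.isProbabilityMeasure
  have hk : 0 < 2 * γ / C := div_pos (mul_pos two_pos hc.γ_pos) hc.C_pos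
  obtain ⟨l, hl⟩ := eventually_atBot.1
    (((tendsto_smoothedIntegratedCdf_atBot hk (h.integrable 0)).eventually_le_const hε).and
      ((tendsto_integratedCdf_atBot hν.integrable).eventually_le_const hε))
  obtain ⟨r, hr⟩ := eventually_atTop.1
    (((tendsto_smoothedIntegratedCdf_sub_atTop hk (h.integrable 0)).eventually_le_const hε).and
      ((tendsto_integratedCdf_sub_atTop hν.integrable).eventually_le_const hε))
  refine ⟨max 1 (max (-l) r), by positivity, fun t ht x hx => ?_⟩
  have hle := h.integratedCdf_le hc ht x
  rcases le_abs'.1 hx with hx' | hx'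
  · obtain ⟨hbound, hbound'⟩ := hl x (by linarith [(le_max_left (-l) r).trans (le_max_right 1 _)])
    exact abs_sub_le_iff.2 ⟨by linarith [integratedCdf_nonneg ν x],
      by linarith [integratedCdf_nonneg (P t) x]⟩
  · obtain ⟨hbound, hbound'⟩ := hr x
      ((le_max_right (-l) r).trans ((le_max_right 1 _).trans hx'))
    have hPt := sub_mean_le_integratedCdf (h.integrable t) x
    rw [h.mean_eq t ht] at hPt
    exact abs_sub_le_iff.2 ⟨by linarith [sub_mean_le_integratedCdf hν.integrable x], by linarith⟩

theorem IntegratedSolution.tendstoUniformly_integratedCdf (hc : Confining a b c C L K γ)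
    (h : IntegratedSolution a b P) (hν : IsEquilibrium a b ν)
    (hmean : ∫ z, z ∂ν = ∫ z, z ∂P 0) :
    TendstoUniformly (fun t => integratedCdf (P t)) (integratedCdf ν) atTop := by
  have := hν.isProbabilityMeasure
  refine Metric.tendstoUniformly_iff.2 fun ε hε => ?_
  obtain ⟨R, hR, htail⟩ := h.exists_forall_le_abs_sub_integratedCdf_le hc hν hmean (half_pos hε)
  obtain ⟨M, hM⟩ := isCompact_Icc.exists_bound_of_continuousOn (s := Icc (-R) R)
    ((continuous_integratedCdf (h.integrable 0)).sub
      (continuous_integratedCdf hν.integrable)).continuousOn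
  obtain ⟨r, hr, H, hlocal⟩ := h.exists_abs_sub_integratedCdf_le hc hν hR hM
    (fun t ht => htail t ht _ (by rw [abs_neg, abs_of_pos hR]))
    (fun t ht => htail t ht _ (by rw [abs_of_pos hR]))
  have hdecay : Tendsto (fun t => M * Real.exp (-(r * t)) * H) atTop (𝓝 0) := by
    simpa using ((Real.tendsto_exp_neg_atTop_nhds_zero.comp
      (tendsto_id.const_mul_atTop hr)).const_mul M).mul_const H
  filter_upwards [eventually_ge_atTop 0, hdecay.eventually_lt_const (half_pos hε)] with t ht hlt x
  rw [dist_comm, Real.dist_eq]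
  rcases le_total R |x| with hx | hx
  · exact (htail t ht x hx).trans_lt (half_lt_self hε)
  · linarith [hlocal t ht x (abs_le.1 hx)]

end Barrier

lemma sub_mul_cdfOf_le {ν : Measure ℝ} [IsProbabilityMeasure ν] (hν : Integrable (fun z => z) ν)
    {x y : ℝ} (hxy : x ≤ y) :
    (y - x) * cdfOf ν x ≤ integratedCdf ν y - integratedCdf ν x := by
  rw [← integral_cdfOf_eq_sub hν]
  simpa using intervalIntegral.integral_mono_on hxy (intervalIntegrable_const (c := cdfOf ν x))
    (intervalIntegrable_cdfOf x y) fun u hu => monotone_cdfOf hu.1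

lemma le_sub_mul_cdfOf {ν : Measure ℝ} [IsProbabilityMeasure ν] (hν : Integrable (fun z => z) ν)
    {x y : ℝ} (hxy : x ≤ y) :
    integratedCdf ν y - integratedCdf ν x ≤ (y - x) * cdfOf ν y := by
  rw [← integral_cdfOf_eq_sub hν]
  simpa using intervalIntegral.integral_mono_on hxy (intervalIntegrable_cdfOf x y)
    (intervalIntegrable_const (c := cdfOf ν y)) fun u hu => monotone_cdfOf hu.2

lemma tendsto_cdfOf_of_tendsto_integratedCdf {ι : Type*} {l : Filter ι} {P : ι → Measure ℝ}
    [∀ i, IsProbabilityMeasure (P i)] {ν : Measure ℝ} [IsProbabilityMeasure ν]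
    (hP : ∀ i, Integrable (fun z => z) (P i)) (hν : Integrable (fun z => z) ν)
    (hlim : ∀ x, Tendsto (fun i => integratedCdf (P i) x) l (𝓝 (integratedCdf ν x))) {x : ℝ}
    (hx : ContinuousAt (cdfOf ν) x) : Tendsto (fun i => cdfOf (P i) x) l (𝓝 (cdfOf ν x)) := by
  refine tendsto_order.2 ⟨fun w hw => ?_, fun w hw => ?_⟩
  · obtain ⟨y, hy, hyx⟩ := (((hx.eventually_const_lt hw).filter_mono nhdsWithin_le_nhds).and
      (self_mem_nhdsWithin (s := Iio x))).exists
    have hyx : y < x := hyx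
    have hlt : (x - y) * w < integratedCdf ν x - integratedCdf ν y :=
      (mul_lt_mul_of_pos_left hy (sub_pos.2 hyx)).trans_le (sub_mul_cdfOf_le hν hyx.le)
    filter_upwards [((hlim x).sub (hlim y)).eventually_const_lt hlt] with i hi
    exact lt_of_mul_lt_mul_left (hi.trans_le (le_sub_mul_cdfOf (hP i) hyx.le)) (sub_pos.2 hyx).le
  · obtain ⟨y, hy, hxy⟩ := (((hx.eventually_lt_const hw).filter_mono nhdsWithin_le_nhds).and
      (self_mem_nhdsWithin (s := Ioi x))).exists
    have hxy : x < y := hxy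
    have hlt : integratedCdf ν y - integratedCdf ν x < (y - x) * w :=
      (le_sub_mul_cdfOf hν hxy.le).trans_lt (mul_lt_mul_of_pos_left hy (sub_pos.2 hxy))
    filter_upwards [((hlim y).sub (hlim x)).eventually_lt_const hlt] with i hi
    exact lt_of_mul_lt_mul_left ((sub_mul_cdfOf_le (hP i) hxy.le).trans_lt hi) (sub_pos.2 hxy).le

theorem IntegratedSolution.tendsto_cdfOf {a b : ℝ → ℝ} {c C L K γ : ℝ}
    {P : ℝ → ProbabilityMeasure ℝ} {ν : Measure ℝ} (hc : Confining a b c C L K γ)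
    (h : IntegratedSolution a b P) (hν : IsEquilibrium a b ν)
    (hmean : ∫ z, z ∂ν = ∫ z, z ∂P 0) (x : ℝ) :
    Tendsto (fun t => cdfOf (P t) x) atTop (𝓝 (cdfOf ν x)) :=
  have := hν.isProbabilityMeasure
  tendsto_cdfOf_of_tendsto_integratedCdf h.integrable hν.integrable
    (fun y => (h.tendstoUniformly_integratedCdf hc hν hmean).tendsto_at y)
    hν.continuous.continuousAt

/-! ### Uniform tails and convergence in Wasserstein distance -/

lemma abs_log_le_rpow_neg {u s : ℝ} (hu₀ : 0 < u) (hu₁ : u ≤ 1) (hs : 0 < s) :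
    |Real.log u| ≤ 1 / s * u ^ (-s) := by
  have hus : 0 < u ^ s := Real.rpow_pos_of_pos hu₀ s
  have hlog := Real.abs_log_mul_self_rpow_lt u s hu₀ hu₁ hs
  rw [abs_mul, abs_of_pos hus] at hlog
  rw [Real.rpow_neg hu₀.le, ← div_eq_mul_inv, le_div_iff₀ hus]
  exact hlog.le

section Moments

variable {a b : ℝ → ℝ} {c C L K γ p : ℝ}

lemma Confining.abs_Psi_le_rpow_neg (hc : Confining a b c C L K γ) {s u : ℝ} (hs : 0 < s)
    (hu : u ∈ Ioo 0 1) :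
    |Psi a b u| ≤ C / (2 * γ) * (1 / s) * (u ^ (-s) + (1 - u) ^ (-s)) := by
  have hκ : 0 ≤ C / (2 * γ) := div_nonneg hc.C_pos.le (mul_pos two_pos hc.γ_pos).le
  rw [mul_assoc, mul_add (1 / s)]
  exact (hc.abs_Psi_le hu).trans (mul_le_mul_of_nonneg_left
    (add_le_add (abs_log_le_rpow_neg hu.1 hu.2.le hs)
      (abs_log_le_rpow_neg (sub_pos.2 hu.2) (sub_le_self 1 hu.1.le) hs)) hκ)

lemma Confining.memLp_pinv_PsiInv (hc : Confining a b c C L K γ) (hp : 0 < p) :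
    MemLp (pinv (PsiInv a b)) (ENNReal.ofReal p) (volume.restrict (Ioo 0 1)) := by
  have hs : 1 / (2 * p) * p < 1 := by
    field_simp
    norm_num
  refine ((memLp_rpow_neg_add_rpow_neg hp hs).const_mul (C / (2 * γ) * (1 / (1 / (2 * p))))).mono'
    hc.isCDF_PsiInv.aemeasurable_pinv.aestronglyMeasurable
    ((ae_restrict_mem measurableSet_Ioo).mono fun u hu => ?_)
  rw [hc.pinv_PsiInv hu, Real.norm_eq_abs]
  exact hc.abs_Psi_le_rpow_neg (by positivity) hu

lemma Confining.memLp_id_of_wdist_lt_top (hc : Confining a b c C L K γ) {m : Measure ℝ}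
    [IsProbabilityMeasure m] (hp : 0 < p) (hW : Wdist p (cdfOf m) (PsiInv a b) < ⊤) :
    MemLp (fun z => z) (ENNReal.ofReal p) m := by
  rw [wdist_eq_eLpNorm hp] at hW
  have hdiff : MemLp (fun u => pinv (cdfOf m) u - pinv (PsiInv a b) u) (ENNReal.ofReal p)
      (volume.restrict (Ioo 0 1)) :=
    ⟨(isCDF_cdfOf.aemeasurable_pinv.sub hc.isCDF_PsiInv.aemeasurable_pinv).aestronglyMeasurable, hW⟩
  rw [← memLp_pinv_cdfOf_iff]
  exact (hdiff.add (hc.memLp_pinv_PsiInv hp)).ae_eq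
    (Eventually.of_forall fun u => sub_add_cancel _ _)

end Moments

lemma softplus_mul_rpow_le_of_le {k p y w : ℝ} (hk : 0 < k) (hp : 1 ≤ p) (hy : 1 ≤ y)
    (hw : y / 4 ≤ w) :
    softplus k (w - y / 2) * y ^ (p - 1) ≤ (1 + 4 / k) * 4 ^ (p - 1) * |w| ^ p := by
  have hw₀ : 0 < w := by linarith
  have hsoft : softplus k (w - y / 2) ≤ (1 + 4 / k) * w := by
    have hmono := monotone_softplus hk (show w - y / 2 ≤ w by linarith)
    have hle : 1 / k * 1 ≤ 1 / k * (4 * w) := by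
      gcongr
      linarith
    calc softplus k (w - y / 2) ≤ w + 1 / k := by
          simpa [max_eq_left hw₀.le] using hmono.trans (softplus_le hk w)
      _ ≤ (1 + 4 / k) * w := by linear_combination hle
  calc softplus k (w - y / 2) * y ^ (p - 1) ≤ (1 + 4 / k) * w * (4 * w) ^ (p - 1) := by
        gcongr
        linarith
    _ = (1 + 4 / k) * 4 ^ (p - 1) * |w| ^ p := by
        rw [Real.mul_rpow (by norm_num) hw₀.le, abs_of_pos hw₀, Real.rpow_sub_one hw₀.ne']
        field_simp

lemma exists_softplus_mul_rpow_le {k p : ℝ} (hk : 0 < k) (hp : 1 ≤ p) :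
    ∃ y₀ ≥ 1, ∃ D, ∀ y ≥ y₀, ∀ w,
      softplus k (w - y / 2) * y ^ (p - 1) ≤ D * (1 + |w| ^ p) := by
  obtain ⟨r, hr⟩ := eventually_atTop.1 ((tendsto_rpow_mul_exp_neg_mul_atTop_nhds_zero (p - 1)
    (k / 4) (by positivity)).eventually_lt_const one_pos)
  refine ⟨max 1 r, le_max_left _ _, (1 + 4 / k) * 4 ^ (p - 1) + 1 / k, fun y hy w => ?_⟩
  have hy₁ : 1 ≤ y := (le_max_left _ _).trans hy
  rcases le_total (y / 4) w with hw | hw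
  · refine (softplus_mul_rpow_le_of_le hk hp hy₁ hw).trans ?_
    gcongr
    · exact le_add_of_nonneg_right (by positivity)
    · exact le_add_of_nonneg_left zero_le_one
  · have hsoft : softplus k (w - y / 2) ≤ 1 / k * Real.exp (-(k / 4) * y) :=
      (monotone_softplus hk (show w - y / 2 ≤ -(y / 4) by linarith)).trans
        ((softplus_le_exp hk _).trans_eq (by ring_nf))
    calc softplus k (w - y / 2) * y ^ (p - 1)
        ≤ 1 / k * Real.exp (-(k / 4) * y) * y ^ (p - 1) := by gcongr
      _ = 1 / k * (y ^ (p - 1) * Real.exp (-(k / 4) * y)) := by ring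
      _ ≤ 1 / k * 1 := by
          gcongr
          exact (hr y ((le_max_right _ _).trans hy)).le
      _ ≤ ((1 + 4 / k) * 4 ^ (p - 1) + 1 / k) * (1 + |w| ^ p) := by
          gcongr
          · exact le_add_of_nonneg_left (by positivity)
          · exact le_add_of_nonneg_right (by positivity)

section Tails

variable {a b : ℝ → ℝ} {c C L K γ p : ℝ} {P : ℝ → ProbabilityMeasure ℝ}

lemma IntegratedSolution.one_sub_cdfOf_mul_le (hc : Confining a b c C L K γ)
    (h : IntegratedSolution a b P) {t y : ℝ} (ht : 0 ≤ t) (hy : 0 ≤ y) :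
    (1 - cdfOf (P t) y) * (y / 2) ≤ ∫ z, softplus (2 * γ / C) (z - y / 2) ∂P 0 := by
  have hk : 0 < 2 * γ / C := div_pos (mul_pos two_pos hc.γ_pos) hc.C_pos
  have hmean := sub_mean_le_integratedCdf (h.integrable t) y
  rw [h.mean_eq t ht] at hmean
  rw [← smoothedIntegratedCdf_sub hk (h.integrable 0)]
  linear_combination le_sub_mul_cdfOf (h.integrable t) (half_le_self hy) +
    h.integratedCdf_le hc ht (y / 2) + hmean

lemma IntegratedSolution.cdfOf_neg_mul_le (hc : Confining a b c C L K γ)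
    (h : IntegratedSolution a b P) {t y : ℝ} (ht : 0 ≤ t) (hy : 0 ≤ y) :
    cdfOf (P t) (-y) * (y / 2) ≤ ∫ z, softplus (2 * γ / C) (-z - y / 2) ∂P 0 := by
  have hbarrier := h.integratedCdf_le hc ht (-(y / 2))
  simp only [smoothedIntegratedCdf, neg_sub_comm] at hbarrier
  linear_combination sub_mul_cdfOf_le (h.integrable t) (neg_le_neg (half_le_self hy)) +
    hbarrier + integratedCdf_nonneg (P t) (-y)

lemma IntegratedSolution.exists_tail_lt (hc : Confining a b c C L K γ)
    (h : IntegratedSolution a b P) (hp : 1 ≤ p)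
    (hm : MemLp (fun z => z) (ENNReal.ofReal p) (P 0 : Measure ℝ)) :
    ∃ y₀ ≥ 1, ∃ M > 0, ∀ t ≥ 0, ∀ y ≥ y₀,
      (1 - cdfOf (P t) y) * y ^ p < M ∧ cdfOf (P t) (-y) * y ^ p < M := by
  have hk : 0 < 2 * γ / C := div_pos (mul_pos two_pos hc.γ_pos) hc.C_pos
  have hp₀ : 0 < p := one_pos.trans_le hp
  have hint : Integrable (fun z => 1 + |z| ^ p) (P 0 : Measure ℝ) := by
    simpa [ENNReal.toReal_ofReal hp₀.le] using (integrable_const 1).add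
      (hm.integrable_norm_rpow (by simpa using hp₀) ENNReal.ofReal_ne_top)
  obtain ⟨y₀, hy₀, D, hD⟩ := exists_softplus_mul_rpow_le hk hp
  set I := ∫ z, D * (1 + |z| ^ p) ∂P 0
  refine ⟨y₀, hy₀, 2 * |I| + 1, by positivity, fun t ht y hy => ?_⟩
  have hy' : 0 < y := one_pos.trans_le (hy₀.trans hy)
  have hlt : ∀ (T : ℝ) (f : ℝ → ℝ), (∀ z, |f z| = |z|) →
      T * (y / 2) ≤ ∫ z, softplus (2 * γ / C) (f z - y / 2) ∂P 0 → T * y ^ p < 2 * |I| + 1 := by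
    intro T f hf hT
    have hI : (∫ z, softplus (2 * γ / C) (f z - y / 2) ∂P 0) * y ^ (p - 1) ≤ I := by
      rw [← integral_mul_const]
      refine integral_mono_of_nonneg (Eventually.of_forall fun z =>
        mul_nonneg (softplus_nonneg hk _) (by positivity)) (hint.const_mul D)
        (Eventually.of_forall fun z => (hD y hy (f z)).trans_eq (by rw [hf]))
    calc T * y ^ p = 2 * (T * (y / 2) * y ^ (p - 1)) := by
          rw [Real.rpow_sub_one hy'.ne']
          field_simp
      _ ≤ 2 * I := by grw [hT, hI]
      _ < 2 * |I| + 1 := by linarith [le_abs_self I]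
  exact ⟨hlt _ (fun z => z) (fun _ => rfl) (h.one_sub_cdfOf_mul_le hc ht hy'.le),
    hlt _ (fun z => -z) abs_neg (h.cdfOf_neg_mul_le hc ht hy'.le)⟩

end Tails

lemma exists_le_mul_rpow {y₀ M p v : ℝ} (hy₀ : 0 ≤ y₀) (hM : 0 ≤ M) (hp : 0 < p)
    (hv : v ∈ Ioo 0 1) :
    ∃ y ≥ y₀, M ≤ v * y ^ p ∧ y ≤ (y₀ + M ^ (1 / p)) * v ^ (-(1 / p)) := by
  have hv₁ : 1 ≤ v ^ (-(1 / p)) := Real.one_le_rpow_of_pos_of_le_one_of_nonpos hv.1 hv.2.le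
    (neg_nonpos.2 (by positivity))
  have hv₀ := hv.1
  refine ⟨max y₀ ((M / v) ^ (1 / p)), le_max_left _ _, ?_, max_le ?_ ?_⟩
  · calc M = v * ((M / v) ^ (1 / p)) ^ p := by
          rw [← Real.rpow_mul (by positivity), one_div_mul_cancel hp.ne', Real.rpow_one,
            mul_div_cancel₀ _ hv₀.ne']
      _ ≤ v * max y₀ ((M / v) ^ (1 / p)) ^ p := by
          gcongr
          exact le_max_right _ _
  · refine (le_mul_of_one_le_right hy₀ hv₁).trans ?_
    gcongr
    exact le_add_of_nonneg_right (by positivity)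
  · rw [Real.div_rpow hM hv₀.le, Real.rpow_neg hv₀.le, div_eq_mul_inv]
    gcongr
    exact le_add_of_nonneg_left hy₀

lemma IsCDF.abs_pinv_le {F : ℝ → ℝ} (h : IsCDF F) {y₀ M p u : ℝ} (hy₀ : 1 ≤ y₀) (hM : 0 ≤ M)
    (hp : 0 < p) (htail : ∀ y ≥ y₀, (1 - F y) * y ^ p < M ∧ F (-y) * y ^ p < M)
    (hu : u ∈ Ioo 0 1) :
    |pinv F u| ≤ (y₀ + M ^ (1 / p)) * (u ^ (-(1 / p)) + (1 - u) ^ (-(1 / p))) := by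
  have hu' : 1 - u ∈ Ioo 0 1 := ⟨sub_pos.2 hu.2, sub_lt_self 1 hu.1⟩
  obtain ⟨y, hy, hMy, hyu⟩ := exists_le_mul_rpow (zero_le_one.trans hy₀) hM hp hu
  obtain ⟨z, hz, hMz, hzu⟩ := exists_le_mul_rpow (zero_le_one.trans hy₀) hM hp hu'
  have hpow : ∀ x ≥ y₀, 0 ≤ x ^ p := fun x hx =>
    Real.rpow_nonneg (zero_le_one.trans (hy₀.trans hx)) p
  have hlower : -y ≤ pinv F u :=
    h.le_pinv hu.2 (lt_of_mul_lt_mul_right ((htail y hy).2.trans_le hMy) (hpow y hy)).le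
  have hupper : pinv F u ≤ z := h.pinv_le hu.1 ((sub_lt_sub_iff_left 1).1
    (lt_of_mul_lt_mul_right ((htail z hz).1.trans_le hMz) (hpow z hz)))
  rw [mul_add]
  exact abs_le.2 ⟨by linarith, by linarith⟩

lemma tendsto_eLpNorm_zero_of_dominated {α ι : Type*} [MeasurableSpace α] {μ : Measure α}
    {l : Filter ι} [l.IsCountablyGenerated] {f : ι → α → ℝ} {g : α → ℝ} {q : ℝ} (hq : 0 < q)
    (hf : ∀ᶠ i in l, AEStronglyMeasurable (f i) μ) (hg : MemLp g (ENNReal.ofReal q) μ)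
    (hfg : ∀ᶠ i in l, ∀ᵐ x ∂μ, ‖f i x‖ ≤ g x)
    (hlim : ∀ᵐ x ∂μ, Tendsto (fun i => f i x) l (𝓝 0)) :
    Tendsto (fun i => eLpNorm (f i) (ENNReal.ofReal q) μ) l (𝓝 0) := by
  have hq' : ENNReal.ofReal q ≠ 0 := by simpa using hq
  have hpow : ∀ x, Tendsto (fun i => f i x) l (𝓝 0) →
      Tendsto (fun i => ‖f i x‖ₑ ^ q) l (𝓝 0) := fun x hx => by
    simpa [hq, comp_def] using ((ENNReal.continuous_rpow_const (y := q)).tendsto _).comp hx.enorm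
  have hint : Tendsto (fun i => ∫⁻ x, ‖f i x‖ₑ ^ q ∂μ) l (𝓝 0) := by
    rw [← lintegral_zero (μ := μ)]
    refine tendsto_lintegral_filter_of_dominated_convergence' (fun x => ‖g x‖ₑ ^ q)
      (hf.mono fun i hi => hi.enorm.pow_const q) (hfg.mono fun i hi => hi.mono fun x hx => ?_) ?_
      (hlim.mono hpow)
    · gcongr
      exact enorm_le_iff_norm_le.2 (hx.trans (le_abs_self _))
    · have := lintegral_rpow_enorm_lt_top_of_eLpNorm_lt_top hq' ENNReal.ofReal_ne_top hg.2
      rw [ENNReal.toReal_ofReal hq.le] at this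
      exact this.ne
  simp only [eLpNorm_eq_lintegral_rpow_enorm_toReal hq' ENNReal.ofReal_ne_top,
    ENNReal.toReal_ofReal hq.le]
  simpa [hq, comp_def] using ((ENNReal.continuous_rpow_const (y := 1 / q)).tendsto _).comp hint

section Quantiles

variable {ι : Type*} {l : Filter ι} {F : ι → ℝ → ℝ} {G : ℝ → ℝ}

lemma tendsto_pinv (hF : ∀ i, IsCDF (F i)) (hG : IsCDF G) (hGm : StrictMono G)
    (hlim : ∀ x, Tendsto (fun i => F i x) l (𝓝 (G x))) {u : ℝ} (hu : u ∈ Ioo 0 1) :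
    Tendsto (fun i => pinv (F i) u) l (𝓝 (pinv G u)) := by
  refine tendsto_order.2 ⟨fun w hw => ?_, fun w hw => ?_⟩
  · obtain ⟨x, hwx, hx⟩ := exists_between hw
    have hxu : G x < u := by
      obtain ⟨y, hxy, hy⟩ := exists_between hx
      exact (hGm hxy).trans_le (not_lt.1 fun hlt => hy.not_ge (hG.pinv_le hu.1 hlt))
    filter_upwards [(hlim x).eventually_lt_const hxu] with i hi
    exact hwx.trans_le ((hF i).le_pinv hu.2 hi.le)
  · obtain ⟨x, hx, hxw⟩ := exists_between hw
    have hux : u < G x := not_le.1 fun hle => hx.not_ge (hG.le_pinv hu.2 hle)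
    filter_upwards [(hlim x).eventually_const_lt hux] with i hi
    exact ((hF i).pinv_le hu.1 hi).trans_lt hxw

lemma tendsto_wdist_of_tails [l.NeBot] [l.IsCountablyGenerated] (hF : ∀ i, IsCDF (F i))
    (hG : IsCDF G) (hGm : StrictMono G) (hlim : ∀ x, Tendsto (fun i => F i x) l (𝓝 (G x)))
    {y₀ M p q : ℝ} (hy₀ : 1 ≤ y₀) (hM : 0 ≤ M) (hq : 0 < q) (hqp : q < p)
    (htail : ∀ᶠ i in l, ∀ y ≥ y₀, (1 - F i y) * y ^ p < M ∧ F i (-y) * y ^ p < M) :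
    Tendsto (fun i => Wdist q (F i) G) l (𝓝 0) := by
  have hp : 0 < p := hq.trans hqp
  set g := fun u : ℝ => (y₀ + M ^ (1 / p)) * (u ^ (-(1 / p)) + (1 - u) ^ (-(1 / p)))
  have hgq : MemLp g (ENNReal.ofReal q) (volume.restrict (Ioo 0 1)) :=
    (memLp_rpow_neg_add_rpow_neg hq (by rwa [one_div_mul_eq_div, div_lt_one hp])).const_mul _
  have hFg : ∀ᶠ i in l, ∀ u ∈ Ioo (0 : ℝ) 1, |pinv (F i) u| ≤ g u :=
    htail.mono fun i hi u hu => (hF i).abs_pinv_le hy₀ hM hp hi hu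
  have hGg : ∀ u ∈ Ioo (0 : ℝ) 1, |pinv G u| ≤ g u := fun u hu =>
    le_of_tendsto (tendsto_pinv hF hG hGm hlim hu).abs (hFg.mono fun i hi => hi u hu)
  simp only [wdist_eq_eLpNorm hq]
  refine tendsto_eLpNorm_zero_of_dominated hq (Eventually.of_forall fun i =>
    ((hF i).aemeasurable_pinv.sub hG.aemeasurable_pinv).aestronglyMeasurable) (hgq.add hgq)
    (hFg.mono fun i hi => (ae_restrict_mem measurableSet_Ioo).mono fun u hu =>
      (abs_sub _ _).trans (add_le_add (hi u hu) (hGg u hu)))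
    ((ae_restrict_mem measurableSet_Ioo).mono fun u hu => ?_)
  simpa using (tendsto_pinv hF hG hGm hlim hu).sub_const (pinv G u)

end Quantiles

/-! ### Existence, uniqueness and attractivity of the equilibrium -/

lemma cdfOf_map_add_const (ν : Measure ℝ) (z x : ℝ) :
    cdfOf (ν.map (· + z)) x = cdfOf ν (x - z) := by
  rw [cdfOf, Measure.map_apply (by fun_prop) measurableSet_Iic, preimage_add_const_Iic, cdfOf]

lemma integrable_id_iff_lintegral_pinv_lt_top {ν : Measure ℝ} [IsProbabilityMeasure ν] :
    Integrable (fun z => z) ν ↔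
      ∫⁻ u in Ioo (0 : ℝ) 1, ENNReal.ofReal |pinv (cdfOf ν) u| < ⊤ := by
  rw [← isCDF_cdfOf.integrable_id_quantileLaw_iff, quantileLaw_cdfOf]

lemma integral_pinv_cdfOf (ν : Measure ℝ) [IsProbabilityMeasure ν] :
    ∫ u in Ioo (0 : ℝ) 1, pinv (cdfOf ν) u = ∫ z, z ∂ν := by
  rw [← isCDF_cdfOf.integral_quantileLaw, quantileLaw_cdfOf]

section Equilibrium

variable {a b : ℝ → ℝ} {c C L K γ : ℝ}

lemma IsEquilibrium.map_add_const {ν : Measure ℝ} (hν : IsEquilibrium a b ν) (z : ℝ) :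
    IsEquilibrium a b (ν.map (· + z)) where
  isProbabilityMeasure :=
    have := hν.isProbabilityMeasure
    Measure.isProbabilityMeasure_map (by fun_prop)
  integrable :=
    have := hν.isProbabilityMeasure
    (integrable_map_measure (by fun_prop) (by fun_prop)).2
      (hν.integrable.add (integrable_const z))
  hasDerivAt x := by
    simp only [funext (cdfOf_map_add_const ν z)]
    exact (hν.hasDerivAt (x - z)).comp_sub_const x z

lemma Confining.isEquilibrium_quantileLaw_PsiInv (hc : Confining a b c C L K γ) :
    IsEquilibrium a b (quantileLaw (PsiInv a b)) where
  isProbabilityMeasure := hc.isCDF_PsiInv.isProbabilityMeasure_quantileLaw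
  integrable := by
    rw [← memLp_one_iff_integrable, hc.isCDF_PsiInv.memLp_id_quantileLaw_iff]
    simpa using hc.memLp_pinv_PsiInv one_pos
  hasDerivAt x := by
    rw [hc.isCDF_PsiInv.cdfOf_quantileLaw]
    exact hc.hasDerivAt_PsiInv x

lemma Confining.exists_isEquilibrium (hc : Confining a b c C L K γ) (μ : ℝ) :
    ∃ ν, IsEquilibrium a b ν ∧ StrictMono (cdfOf ν) ∧ ∫ z, z ∂ν = μ := by
  have hν := hc.isEquilibrium_quantileLaw_PsiInv
  have := hν.isProbabilityMeasure
  set z := μ - ∫ z, z ∂quantileLaw (PsiInv a b)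
  refine ⟨_, hν.map_add_const z, fun x y hxy => ?_, ?_⟩
  · rw [cdfOf_map_add_const, cdfOf_map_add_const, hc.isCDF_PsiInv.cdfOf_quantileLaw]
    exact hc.strictMono_PsiInv (sub_lt_sub_right hxy z)
  · rw [integral_map (by fun_prop) (by fun_prop), integral_add hν.integrable (integrable_const z)]
    simp [z]

lemma IsEquilibrium.isStationarySolution {ν : Measure ℝ} (hν : IsEquilibrium a b ν)
    (hc : Elliptic a b c C L) :
    IsStationarySolution (primitive a) (primitive b) (cdfOf ν) := fun φ hφ hs => by
  have hφ : IsTestFunction φ := ⟨hφ, hs⟩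
  have hAc : Continuous fun x => primitive a (cdfOf ν x) :=
    (continuous_primitive hc.continuous_a).comp hν.continuous
  have hBc : Continuous fun x => 2 * primitive b (cdfOf ν x) :=
    ((continuous_primitive hc.continuous_b).comp hν.continuous).const_mul 2
  have hA : ∀ x, HasDerivAt (fun x => primitive a (cdfOf ν x)) (2 * primitive b (cdfOf ν x)) x :=
    fun x => ((hasDerivAt_primitive hc.continuous_a _).comp x (hν.hasDerivAt x)).congr_deriv
      (mul_div_cancel₀ _ (hc.a_pos _).ne')
  rw [hφ.deriv.integral_mul_deriv hBc.locallyIntegrable hAc fun x => (hA x).hasDerivWithinAt]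
  simp only [mul_assoc, integral_const_mul]
  ring

/- A stationary solution is a solution which does not depend on time, hence equal to its limit. -/
lemma IsEquilibrium.eq_cdfOf {ν : Measure ℝ} (hν : IsEquilibrium a b ν)
    (hc : Confining a b c C L K γ) {G : ℝ → ℝ} (hG : IsCDF G)
    (hstat : IsStationarySolution (primitive a) (primitive b) G)
    (hint : ∫⁻ u in Ioo (0 : ℝ) 1, ENNReal.ofReal |pinv G u| < ⊤)
    (hmean : ∫ u in Ioo (0 : ℝ) 1, pinv G u = ∫ z, z ∂ν) : G = cdfOf ν := by
  let ρ : ProbabilityMeasure ℝ := ⟨quantileLaw G, hG.isProbabilityMeasure_quantileLaw⟩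
  have hρG : cdfOf ρ = G := hG.cdfOf_quantileLaw
  have hρ : IsDistributionalSolution (primitive a) (primitive b) fun _ => ρ :=
    IsStationarySolution.isDistributionalSolution (hρG.symm ▸ hstat)
  have hsol : IntegratedSolution a b fun _ => ρ :=
    hρ.integratedSolution hc.continuous_a hc.continuous_b hc.primitive_b_one continuous_const
      fun _ => hG.integrable_id_quantileLaw_iff.2 hint
  rw [← hρG]
  exact funext fun x => tendsto_nhds_unique tendsto_const_nhds
    (hsol.tendsto_cdfOf hc hν (hmean.symm.trans hG.integral_quantileLaw.symm) x)

theorem IntegratedSolution.tendsto_wdist {P : ℝ → ProbabilityMeasure ℝ}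
    (h : IntegratedSolution a b P) (hc : Confining a b c C L K γ) {ν : Measure ℝ}
    (hν : IsEquilibrium a b ν) (hmono : StrictMono (cdfOf ν))
    (hmean : ∫ z, z ∂ν = ∫ z, z ∂(P 0 : Measure ℝ)) {p q : ℝ} (hp : 1 ≤ p)
    (hm : MemLp (fun z => z) (ENNReal.ofReal p) (P 0 : Measure ℝ)) (hq : 0 < q) (hqp : q < p) :
    Tendsto (fun t => Wdist q (cdfOf (P t)) (cdfOf ν)) atTop (𝓝 0) := by
  have := hν.isProbabilityMeasure
  obtain ⟨y₀, hy₀, M, hM, htail⟩ := h.exists_tail_lt hc hp hm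
  exact tendsto_wdist_of_tails (fun t => isCDF_cdfOf) isCDF_cdfOf hmono
    (h.tendsto_cdfOf hc hν hmean) hy₀ hM.le hq hqp ((eventually_ge_atTop 0).mono htail)

end Equilibrium

lemma MemF.exists_continuous {F : ℝ → ℝ → ℝ} (h : MemF F) :
    ∃ P : ℝ → ProbabilityMeasure ℝ, Continuous P ∧
      (∀ t, Integrable (fun z => z) (P t : Measure ℝ)) ∧ ∀ t, 0 ≤ t → F t = cdfOf (P t) := by
  obtain ⟨P, hP, hint, -, hF⟩ := h
  refine ⟨fun t => P (max t 0), hP.comp_continuous (by fun_prop) fun t => le_max_right t 0,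
    fun t => integrable_id_of_abs (hint _ (le_max_right t 0)), fun t ht => ?_⟩
  simp only [max_eq_left ht]
  exact funext (hF t ht)

lemma IsWeakSolution.exists_integratedSolution {A B a b : ℝ → ℝ} {m : Measure ℝ}
    [IsProbabilityMeasure m] {F : ℝ → ℝ → ℝ} (hF : IsWeakSolution A B (cdfOf m) F)
    (hFmem : MemF F) (ha : Continuous a) (hb : Continuous b) (hb1 : primitive b 1 = 0)
    (hA : EqOn A (primitive a) (Icc 0 1)) (hB : EqOn B (primitive b) (Icc 0 1)) :
    ∃ P, IntegratedSolution a b P ∧ (P 0 : Measure ℝ) = m ∧ ∀ t, 0 ≤ t → F t = cdfOf (P t) := by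
  obtain ⟨P, hP, hint, hFP⟩ := hFmem.exists_continuous
  have hw : IsWeakSolution (primitive a) (primitive b) (cdfOf m) fun t => cdfOf (P t) :=
    hF.congr hFP (fun _ => cdfOf_mem_Icc) hA hB
  exact ⟨P, (hw.isDistributionalSolution hP (continuous_primitive ha)
    (continuous_primitive hb)).integratedSolution ha hb hb1 hP hint, hw.measure_zero_eq, hFP⟩

theorem convergence_to_equilibrium_general {a b : ℝ → ℝ} {K L : NNReal} {c : ℝ}
    (ha : LipschitzOnWith K a (Icc 0 1)) (hb : LipschitzOnWith L b (Icc 0 1)) (hc : 0 < c)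
    (hca : ∀ u ∈ Icc (0 : ℝ) 1, c ≤ a u) (hpos : ∀ u ∈ Ioo (0 : ℝ) 1, 0 < primitive b u)
    (hb1 : primitive b 1 = 0) (hE2 : equilibriumMoment a b < ⊤)
    {m : Measure ℝ} [IsProbabilityMeasure m] {F : ℝ → ℝ → ℝ}
    (hF : IsWeakSolution (primitive a) (primitive b) (cdfOf m) F) (hFmem : MemF F) :
    ∃ Finf : ℝ → ℝ,
      (IsCDF Finf ∧ IsStationarySolution (primitive a) (primitive b) Finf ∧
        ∫⁻ u in Ioo (0 : ℝ) 1, ENNReal.ofReal |pinv Finf u| < ⊤ ∧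
        ∫ u in Ioo (0 : ℝ) 1, pinv Finf u = ∫ u in Ioo (0 : ℝ) 1, pinv (cdfOf m) u) ∧
      (∀ G : ℝ → ℝ, IsCDF G → IsStationarySolution (primitive a) (primitive b) G →
        ∫⁻ u in Ioo (0 : ℝ) 1, ENNReal.ofReal |pinv G u| < ⊤ →
        ∫ u in Ioo (0 : ℝ) 1, pinv G u = ∫ u in Ioo (0 : ℝ) 1, pinv (cdfOf m) u → G = Finf) ∧
      ∀ p, 1 ≤ p → Wdist p (cdfOf m) (PsiInv a b) < ⊤ → ∀ q, 0 < q → q < p →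
        Tendsto (fun t => Wdist q (F t) Finf) atTop (𝓝 0) := by
  obtain ⟨a', b', C, L, K, γ, hc', haa, hbb⟩ :=
    exists_confining_extension ha hb hc hca hpos hb1 hE2
  have hA := eqOn_primitive haa
  have hB := eqOn_primitive hbb
  obtain ⟨P, hP, rfl, hFP⟩ := hF.exists_integratedSolution hFmem hc'.continuous_a
    hc'.continuous_b hc'.primitive_b_one hA.symm hB.symm
  obtain ⟨ν, hν, hmono, hmean⟩ := hc'.exists_isEquilibrium (∫ z, z ∂(P 0 : Measure ℝ))
  have := hν.isProbabilityMeasure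
  refine ⟨cdfOf ν, ⟨isCDF_cdfOf, (hν.isStationarySolution hc'.toElliptic).congr cdfOf_mem_Icc hA hB,
    integrable_id_iff_lintegral_pinv_lt_top.1 hν.integrable, ?_⟩, fun G hG hstat hint hGmean => ?_,
    fun p hp hW q hq hqp => ?_⟩
  · rw [integral_pinv_cdfOf, integral_pinv_cdfOf, hmean]
  · rw [integral_pinv_cdfOf, ← hmean] at hGmean
    exact hν.eq_cdfOf hc' hG (hstat.congr hG.mem_Icc hA.symm hB.symm) hint hGmean
  · rw [← PsiInv_congr haa hbb] at hW
    refine (hP.tendsto_wdist hc' hν hmono hmean hp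
      (hc'.memLp_id_of_wdist_lt_top (by positivity) hW) hq hqp).congr' ?_
    filter_upwards [eventually_ge_atTop 0] with t ht
    rw [hFP t ht]

/-- Convergence to equilibrium in Wasserstein distance: under (D3), (R2), (E1), (E2),
a finite first moment of `m` and `W₂(H*m, Ψ⁻¹) < ∞`, there is a unique stationary
solution `F∞` with the same expectation as `F₀ = H*m`, and for every `p ≥ 2` with
`W_p(H*m, Ψ⁻¹) < ∞` and every `1 ≤ q < p`, `W_q(F_t, F∞) → 0` as `t → ∞`. -/
theorem convergence_to_equilibrium
    (a b : ℝ → ℝ)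
    (ha : ContinuousOn a (Set.Icc 0 1)) (hb : ContinuousOn b (Set.Icc 0 1))
    (ha0 : ∀ u ∈ Set.Icc (0:ℝ) 1, 0 ≤ a u)
    (hD3 : ∃ c > (0:ℝ), ∀ u ∈ Set.Icc (0:ℝ) 1, c ≤ a u)
    (β : NNReal) (hβ : 0 < β)
    (hR2a : ContDiffOn ℝ 2 a (Set.Icc 0 1))
    (hR2b : ContDiffOn ℝ 1 b (Set.Icc 0 1))
    (hR2hold : ∃ C : NNReal,
      HolderOnWith C β (iteratedDerivWithin 2 a (Set.Icc 0 1)) (Set.Icc 0 1) ∧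
      HolderOnWith C β (derivWithin b (Set.Icc 0 1)) (Set.Icc 0 1))
    (hE1pos : ∀ u ∈ Set.Ioo (0:ℝ) 1, 0 < primitive b u)
    (hE1B1 : primitive b 1 = 0)
    (hE1loc : ∀ c d : ℝ, 0 < c → c ≤ d → d < 1 →
      IntegrableOn (fun u => a u / (2 * primitive b u)) (Set.Icc c d))
    (hE2 : ((∫⁻ u in Set.Ioo (0:ℝ) (1/2),
        ENNReal.ofReal (a u * u / (2 * |primitive b u|)))
      + ∫⁻ u in Set.Ioo (1/2:ℝ) 1,
          ENNReal.ofReal (a u * (1 - u) / (2 * |primitive b u|))) < ⊤)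
    (m : Measure ℝ) [IsProbabilityMeasure m]
    (hm : Integrable (fun x => |x|) m)
    (hW2 : Wdist 2 (cdfOf m) (PsiInv a b) < ⊤)
    (F : ℝ → ℝ → ℝ)
    (hF : IsWeakSolution (primitive a) (primitive b) (cdfOf m) F) (hFmem : MemF F) :
    ∃ Finf : ℝ → ℝ,
      (IsCDF Finf ∧
       IsStationarySolution (primitive a) (primitive b) Finf ∧
       (∫⁻ u in Set.Ioo (0:ℝ) 1, ENNReal.ofReal |pinv Finf u|) < ⊤ ∧
       (∫ u in Set.Ioo (0:ℝ) 1, pinv Finf u) = ∫ u in Set.Ioo (0:ℝ) 1, pinv (cdfOf m) u) ∧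
      (∀ G : ℝ → ℝ, IsCDF G → IsStationarySolution (primitive a) (primitive b) G →
        (∫⁻ u in Set.Ioo (0:ℝ) 1, ENNReal.ofReal |pinv G u|) < ⊤ →
        (∫ u in Set.Ioo (0:ℝ) 1, pinv G u) = (∫ u in Set.Ioo (0:ℝ) 1, pinv (cdfOf m) u) →
        ∀ x : ℝ, G x = Finf x) ∧
      (∀ p : ℝ, 2 ≤ p → Wdist p (cdfOf m) (PsiInv a b) < ⊤ →
        ∀ q : ℝ, 1 ≤ q → q < p →
          Tendsto (fun t => Wdist q (F t) Finf) atTop (nhds 0)) := by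
  obtain ⟨c, hc, hca⟩ := hD3
  obtain ⟨K, hK⟩ := LocallyLipschitzOn.exists_lipschitzOnWith_of_compact isCompact_Icc
    ((hR2a.of_le one_le_two).locallyLipschitzOn (convex_Icc 0 1))
  obtain ⟨L, hL⟩ := LocallyLipschitzOn.exists_lipschitzOnWith_of_compact isCompact_Icc
    (hR2b.locallyLipschitzOn (convex_Icc 0 1))
  obtain ⟨Finf, hstat, huniq, hlim⟩ :=
    convergence_to_equilibrium_general hK hL hc hca hE1pos hE1B1 hE2 hF hFmem
  exact ⟨Finf, hstat, fun G hG hGs hGi hGm => congrFun (huniq G hG hGs hGi hGm), fun p hp hW q hq =>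
    hlim p (one_le_two.trans hp) hW q (one_pos.trans_le hq)⟩
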